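/- arXiv:2109.09848 — 4 statements merged into one kernel-verified Lean document; each statement's English description precedes it below -/
import Mathlib

section
/- Let K be any imaginary quadratic number field with odd class number. Then the counting function a_K(n) (the number of quadratic extensions L/K inside a fixed algebraic closure with absolute discriminant at most n) satisfies a_K(n) = C·n + o(n) as n → ∞, where C = 𝔡_K^{-5/2} · π · h_K/(w_K · ζ_K(2)) · ∏_{𝔭 | 2} g_𝔭(1)/(1 + N(𝔭)^{-1}); here w_K is the number of roots of unity in K, the product is over the prime ideals 𝔭 of 𝓞_K above 2, and g_𝔭(s) = 1 + 2^{-2s} + 2·2^{-3s} if 2 is split in K, g_𝔭(s) = 1 + 3·4^{-2s} + 4·4^{-3s} if 2 is inert in K, and g_𝔭(s) = 1 + 2^{-2s} + 2·2^{-4s} + 4·2^{-5s} if 2 is ramified in K. -/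
open NumberField Filter

/-- The value of the Dedekind zeta function of `K` at `2`, defined as the series
`∑ N(I)^{-2}` over nonzero ideals `I` of the ring of integers of `K`. -/
noncomputable def dedekindZetaTwo (K : Type*) [Field K] [NumberField K] : ℝ :=
  ∑' I : {I : Ideal (𝓞 K) // I ≠ ⊥}, ((Ideal.absNorm I.1 : ℝ)) ^ (-2 : ℤ)

/-- The number of roots of unity contained in `K`. -/
noncomputable def rootsOfUnityCount (K : Type*) [Field K] : ℕ :=
  Nat.card {x : K // ∃ n : ℕ, 0 < n ∧ x ^ n = 1}

open scoped Classical in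
/-- The local factor `g_𝔭(s)` at a prime of `K` above 2:
`1 + 3·4^{-2s} + 4·4^{-3s}` if 2 is inert in `K`,
`1 + 2^{-2s} + 2·2^{-4s} + 4·2^{-5s}` if 2 is ramified in `K`, and
`1 + 2^{-2s} + 2·2^{-3s}` if 2 is split in `K`. -/
noncomputable def gTwo (K : Type*) [Field K] [NumberField K] (s : ℝ) : ℝ :=
  if (Ideal.span {(2 : 𝓞 K)}).IsPrime then
    1 + 3 * (4 : ℝ) ^ (-(2 * s)) + 4 * (4 : ℝ) ^ (-(3 * s))
  else if ∃ 𝔮 : Ideal (𝓞 K), 𝔮 ^ 2 = Ideal.span {(2 : 𝓞 K)} then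
    1 + (2 : ℝ) ^ (-(2 * s)) + 2 * (2 : ℝ) ^ (-(4 * s)) + 4 * (2 : ℝ) ^ (-(5 * s))
  else 1 + (2 : ℝ) ^ (-(2 * s)) + 2 * (2 : ℝ) ^ (-(3 * s))

/-- `quadCount K n` is the number of quadratic extensions `L` of `K` inside a fixed
algebraic closure of `K` with absolute discriminant at most `n`. -/
noncomputable def quadCount (K : Type*) [Field K] [NumberField K] (n : ℕ) : ℕ :=
  Nat.card {L : IntermediateField K (AlgebraicClosure K) //
    Module.finrank K L = 2 ∧ ∃ h : NumberField L, |@NumberField.discr L _ h| ≤ (n : ℤ)}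

section QCount
open NumberField Filter
open scoped nonZeroDivisors Real

section S1
open NumberField.InfinitePlace NumberField.mixedEmbedding NumberField.mixedEmbedding.euclidean Topology MeasureTheory

theorem qc_totallyComplex (K : Type*) [Field K] [NumberField K] (himag : IsEmpty (K →+* ℝ)) :
    IsTotallyComplex K := by
  refine ⟨fun v => ?_⟩
  by_contra h
  rw [InfinitePlace.not_isComplex_iff_isReal] at h
  exact himag.elim (InfinitePlace.embedding_of_isReal h)

theorem qc_nrComplex (K : Type*) [Field K] [NumberField K] [IsTotallyComplex K]
    (hdeg : Module.finrank ℚ K = 2) : nrComplexPlaces K = 1 := by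
  have := IsTotallyComplex.finrank K
  omega

theorem qc_card_place (K : Type*) [Field K] [NumberField K] [IsTotallyComplex K]
    (hdeg : Module.finrank ℚ K = 2) : Fintype.card (InfinitePlace K) = 1 := by
  rw [card_eq_nrRealPlaces_add_nrComplexPlaces, qc_nrComplex K hdeg,
    IsTotallyComplex.nrRealPlaces_eq_zero]

theorem qc_norm_eq (K : Type*) [Field K] [NumberField K] [IsTotallyComplex K]
    (hdeg : Module.finrank ℚ K = 2) (w : InfinitePlace K) (x : K) :
    ((|Algebra.norm ℚ x| : ℚ) : ℝ) = w x ^ 2 := by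
  rw [← InfinitePlace.prod_eq_abs_norm]
  have : Subsingleton (InfinitePlace K) :=
    Fintype.card_le_one_iff_subsingleton.1 (qc_card_place K hdeg).le
  rw [Fintype.prod_subsingleton _ w, IsTotallyComplex.mult_eq]

theorem qc_lattice (K : Type*) [Field K] [NumberField K] [IsTotallyComplex K]
    (hdeg : Module.finrank ℚ K = 2) (J : (Ideal (𝓞 K))⁰) :
    Tendsto (fun s : ℝ => (Nat.card {x : 𝓞 K // x ∈ (J : Ideal (𝓞 K)) ∧
      ((|Algebra.norm ℚ (x : K)| : ℚ) : ℝ) ≤ s} : ℝ) / s) atTop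
      (𝓝 (2 * π / ((Ideal.absNorm (J : Ideal (𝓞 K)) : ℝ) * √|discr K|))) := by
  classical
  have hball : {x : mixedSpace K | mixedEmbedding.norm x ≤ 1} = Metric.closedBall 0 1 := by
    have hss : Subsingleton (InfinitePlace K) :=
      Fintype.card_le_one_iff_subsingleton.1 (qc_card_place K hdeg).le
    obtain ⟨w⟩ : Nonempty (InfinitePlace K) := inferInstance
    have huniv : (Finset.univ : Finset (InfinitePlace K)) = {w} := by
      ext v; simp [Subsingleton.elim v w]
    ext x
    have h2 : ‖x‖ = normAtPlace w x := by
      rw [norm_eq_sup'_normAtPlace]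
      apply le_antisymm
      · refine Finset.sup'_le _ _ fun v _ => ?_
        rw [Subsingleton.elim v w]
      · exact Finset.le_sup' (fun w => normAtPlace w x) (Finset.mem_univ w)
    rw [Set.mem_ofPred_eq, mem_closedBall_zero_iff, h2, mixedEmbedding.norm_apply,
      Fintype.prod_subsingleton _ w, IsTotallyComplex.mult_eq]
    have := normAtPlace_nonneg w x
    exact sq_le_one_iff₀ this
  have hset : {x : euclidean.mixedSpace K | x ∈ (Set.univ : Set (euclidean.mixedSpace K)) ∧
     mixedEmbedding.norm (toMixed K x) ≤ 1} = toMixed K ⁻¹' (Metric.closedBall 0 1) := by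
    rw [← hball]; ext; simp
  have key := ZLattice.covolume.tendsto_card_le_div'
              (ZLattice.comap ℝ (mixedEmbedding.idealLattice K (FractionalIdeal.mk0 K J))
                (toMixed K).toLinearMap)
              (F := fun x ↦ mixedEmbedding.norm (toMixed K x)) (X := Set.univ)
              (fun _ _ _ h ↦ Set.mem_univ _) (fun _ _ h ↦ ?_)
              ?_ ?_ ?_
  · have hvol : (volume.real {x : euclidean.mixedSpace K |
        x ∈ (Set.univ : Set (euclidean.mixedSpace K)) ∧
        mixedEmbedding.norm (toMixed K x) ≤ 1}) = π := by
      rw [hset, measureReal_def, (volumePreserving_toMixed K).measure_preimage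
        measurableSet_closedBall.nullMeasurableSet, Measure.addHaar_closedBall_eq_addHaar_ball]
      have hb : Metric.ball (0 : mixedSpace K) 1 = convexBodyLT K (fun _ => 1) := by
        rw [convexBodyLT, ← Prod.mk_zero_zero, ← ball_prod_same]
        congr 1
        · rw [ball_pi _ one_pos]; rfl
        · rw [ball_pi _ one_pos]; rfl
      rw [hb, convexBodyLT_volume, convexBodyLTFactor, qc_nrComplex K hdeg,
        IsTotallyComplex.nrRealPlaces_eq_zero]
      simp
    have hcov : ZLattice.covolume (ZLattice.comap ℝ (mixedEmbedding.idealLattice K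
        (FractionalIdeal.mk0 K J)) (toMixed K).toLinearMap) =
        (Ideal.absNorm (J : Ideal (𝓞 K)) : ℝ) * 2⁻¹ * √|discr K| := by
      rw [ZLattice.covolume_comap _ _ _ (volumePreserving_toMixed K), covolume_idealLattice,
        FractionalIdeal.coe_mk0, FractionalIdeal.coeIdeal_absNorm, Rat.cast_natCast,
        qc_nrComplex K hdeg, pow_one]
    rw [hvol, hcov] at key
    have e1 : π / ((Ideal.absNorm (J : Ideal (𝓞 K)) : ℝ) * 2⁻¹ * √|discr K|) =
      2 * π / ((Ideal.absNorm (J : Ideal (𝓞 K)) : ℝ) * √|discr K|) := by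
      rw [mul_right_comm, ← div_eq_mul_inv, div_div_eq_mul_div, mul_comm]
    rw [e1] at key
    refine key.congr fun s => ?_
    congr 2
    refine (Nat.card_congr (Equiv.ofBijective (fun x : {x : 𝓞 K // x ∈ (J : Ideal (𝓞 K)) ∧
      ((|Algebra.norm ℚ (x : K)| : ℚ) : ℝ) ≤ s} =>
        (⟨(toMixed K).symm (mixedEmbedding K (x.1 : K)), ?_⟩ :
          ({x : euclidean.mixedSpace K | x ∈ (Set.univ : Set (euclidean.mixedSpace K)) ∧
        mixedEmbedding.norm (toMixed K x) ≤ s} ∩ (ZLattice.comap ℝ (mixedEmbedding.idealLattice K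
        (FractionalIdeal.mk0 K J)) (toMixed K).toLinearMap) :
          Set (euclidean.mixedSpace K)))) ⟨?_, ?_⟩)).symm
    · refine ⟨⟨Set.mem_univ _, ?_⟩, ?_⟩
      · simpa [norm_eq_norm] using x.2.2
      · rw [ZLattice.coe_comap]
        simp only [Set.mem_preimage, SetLike.mem_coe, mem_idealLattice, FractionalIdeal.coe_mk0]
        refine ⟨(x.1 : K), ?_, ?_⟩
        · simpa using x.2.1
        · simp
    · intro x y h
      have h1 := (mixedEmbedding_injective K)
        ((toMixed K).symm.injective (congrArg Subtype.val h))
      exact Subtype.ext (RingOfIntegers.coe_injective h1)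
    · rintro ⟨y, ⟨_, hy⟩, hy2⟩
      rw [ZLattice.coe_comap] at hy2
      simp only [Set.mem_preimage, SetLike.mem_coe, mem_idealLattice, FractionalIdeal.coe_mk0] at hy2
      obtain ⟨z, hz, hz2⟩ := hy2
      simp only [FractionalIdeal.mem_coeIdeal] at hz
      obtain ⟨x, hx, rfl⟩ := hz
      have hz3 : mixedEmbedding K ((algebraMap (𝓞 K) K) x) = toMixed K y := hz2
      refine ⟨⟨x, hx, ?_⟩, ?_⟩
      · rw [← norm_eq_norm]
        exact hz3 ▸ hy
      · apply Subtype.ext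
        exact ((toMixed K).symm_apply_eq).2 hz3
  · rw [map_smul, mixedEmbedding.norm_smul, euclidean.finrank, abs_of_nonneg h]
  · rw [hset]
    exact (toMixed K).antilipschitz.isBounded_preimage Metric.isBounded_closedBall
  · rw [hset]
    exact (toMixed K).continuous.measurable measurableSet_closedBall
  · rw [hset, ← (toMixed K).coe_toHomeomorph, ← Homeomorph.preimage_frontier,
      (toMixed K).coe_toHomeomorph, (volumePreserving_toMixed K).measure_preimage
      measurableSet_frontier.nullMeasurableSet]
    exact (convex_closedBall _ _).addHaar_frontier _

theorem qc_finite_norm_le (K : Type*) [Field K] [NumberField K] [IsTotallyComplex K]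
    (hdeg : Module.finrank ℚ K = 2) (s : ℝ) :
    Finite {x : 𝓞 K // ((|Algebra.norm ℚ (x : K)| : ℚ) : ℝ) ≤ s} := by
  have h := Embeddings.finite_of_norm_le K ℂ (√s)
  have h2 := (h.preimage (f := fun x : 𝓞 K => (x : K)) (RingOfIntegers.coe_injective.injOn))
  refine Set.Finite.to_subtype (h2.subset ?_)
  intro x hx
  have hx' : ((|Algebra.norm ℚ (x : K)| : ℚ) : ℝ) ≤ s := hx
  refine ⟨x.2, fun φ => ?_⟩
  rw [qc_norm_eq K hdeg (InfinitePlace.mk φ)] at hx'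
  rw [← InfinitePlace.apply φ]
  exact Real.le_sqrt_of_sq_le hx'

theorem qc_coset (K : Type*) [Field K] [NumberField K] [IsTotallyComplex K]
    (hdeg : Module.finrank ℚ K = 2) (J : (Ideal (𝓞 K))⁰) (v : 𝓞 K) :
    Tendsto (fun s : ℝ => (Nat.card {x : 𝓞 K // x - v ∈ (J : Ideal (𝓞 K)) ∧
      ((|Algebra.norm ℚ (x : K)| : ℚ) : ℝ) ≤ s} : ℝ) / s) atTop
      (𝓝 (2 * π / ((Ideal.absNorm (J : Ideal (𝓞 K)) : ℝ) * √|discr K|))) := by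
  obtain ⟨w⟩ : Nonempty (InfinitePlace K) := inferInstance
  have hfin : ∀ (s : ℝ) (P : 𝓞 K → Prop), Finite {x : 𝓞 K // P x ∧
      ((|Algebra.norm ℚ (x : K)| : ℚ) : ℝ) ≤ s} := by
    intro s P
    have := qc_finite_norm_le K hdeg s
    exact Finite.of_injective (β := {x : 𝓞 K // ((|Algebra.norm ℚ (x : K)| : ℚ) : ℝ) ≤ s})
      (fun x => ⟨x.1, x.2.2⟩) (fun x y h => Subtype.ext (congrArg (fun z => z.1) h))
  have hL := qc_lattice K hdeg J
  set A : ℝ → ℝ := fun s => (Nat.card {x : 𝓞 K // x ∈ (J : Ideal (𝓞 K)) ∧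
      ((|Algebra.norm ℚ (x : K)| : ℚ) : ℝ) ≤ s} : ℝ) with hA
  set r : ℝ := w (v : K) with hr
  have hr0 : 0 ≤ r := apply_nonneg w _
  have lim : ∀ e : ℝ, Tendsto (fun s : ℝ => A ((√s + e) ^ 2) / s) atTop
      (𝓝 (2 * π / ((Ideal.absNorm (J : Ideal (𝓞 K)) : ℝ) * √|discr K|))) := by
    intro e
    have h1 : Tendsto (fun s : ℝ => √s + e) atTop atTop :=
      tendsto_atTop_add_const_right _ _ Real.tendsto_sqrt_atTop
    have h2 : Tendsto (fun s : ℝ => (√s + e) ^ 2) atTop atTop :=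
      (tendsto_pow_atTop two_ne_zero).comp h1
    have h3 : Tendsto (fun s : ℝ => (1 + e / √s) ^ 2) atTop (𝓝 1) := by
      have : Tendsto (fun s : ℝ => e / √s) atTop (𝓝 0) :=
        tendsto_const_nhds.div_atTop Real.tendsto_sqrt_atTop
      simpa using (this.const_add 1).pow 2
    have h4 := (hL.comp h2).mul h3
    rw [mul_one] at h4
    refine h4.congr' ?_
    filter_upwards [h1.eventually_gt_atTop 0, eventually_gt_atTop 0] with s hs hs0
    have hs' : 0 < √s := Real.sqrt_pos.2 hs0
    have : 1 + e / √s = (√s + e) / √s := by field_simp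
    rw [Function.comp, this, div_pow, Real.sq_sqrt hs0.le]
    field_simp
    rfl
  refine tendsto_of_tendsto_of_tendsto_of_le_of_le' (lim (-r)) (lim r) ?_ ?_
  · filter_upwards [eventually_gt_atTop 0, Real.tendsto_sqrt_atTop.eventually_ge_atTop r]
      with s hs hsr
    have := hfin s (fun x => x - v ∈ (J : Ideal (𝓞 K)))
    refine div_le_div_of_nonneg_right ?_ hs.le
    simp only [hA]
    refine Nat.cast_le.2 ?_
    refine Nat.card_le_card_of_injective (fun x => ⟨x.1 + v, ?_, ?_⟩) ?_
    · simpa using x.2.1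
    · have hx := x.2.2
      rw [qc_norm_eq K hdeg w] at hx ⊢
      have hx1 : w (x.1 : K) ≤ √s + -r :=
        abs_le_of_sq_le_sq hx (by linarith) |> le_trans (le_abs_self _)
      have hx2 : w ((x.1 + v : 𝓞 K) : K) ≤ w (x.1 : K) + r := by
        exact w.1.add_le (x.1 : K) (v : K)
      refine (pow_le_pow_left₀ (apply_nonneg w _) (by linarith : _ ≤ √s) 2).trans ?_
      exact (Real.sq_sqrt hs.le).le
    · intro x y h
      apply Subtype.ext
      simpa using h
  · filter_upwards [eventually_gt_atTop 0] with s hs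
    have := hfin ((√s + r) ^ 2) (fun x => x ∈ (J : Ideal (𝓞 K)))
    refine div_le_div_of_nonneg_right ?_ hs.le
    simp only [hA]
    refine Nat.cast_le.2 ?_
    refine Nat.card_le_card_of_injective (fun x => ⟨x.1 - v, x.2.1, ?_⟩) ?_
    · have hx := x.2.2
      rw [qc_norm_eq K hdeg w] at hx ⊢
      have hx1 : w (x.1 : K) ≤ √s := Real.le_sqrt_of_sq_le hx
      have hx2 : w ((x.1 - v : 𝓞 K) : K) ≤ w (x.1 : K) + r := by
        have h5 := w.1.add_le (x.1 : K) (-(v : K))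
        have h6 : w.1 (-(v : K)) = w.1 (v : K) := w.1.map_neg _
        rw [h6, ← sub_eq_add_neg] at h5
        exact h5
      exact pow_le_pow_left₀ (apply_nonneg w _) (by linarith) 2
    · intro x y h
      apply Subtype.ext
      simpa using h
end S1

open NumberField Filter
open scoped nonZeroDivisors Real

section S2
open Topology

theorem qc_two_dvd (K : Type*) [Field K] [NumberField K] {x y : 𝓞 K}
    (h : (4 : 𝓞 K) ∣ x ^ 2 - y ^ 2) : (2 : 𝓞 K) ∣ x - y := by
  obtain ⟨t, ht⟩ := h
  have hint : IsIntegral (𝓞 K) (((x : K) - y) / 2) := by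
    refine ⟨Polynomial.X ^ 2 + Polynomial.C y * Polynomial.X + Polynomial.C (-t), ?_, ?_⟩
    · monicity!
    · have h2 : (x : K) ^ 2 - (y : K) ^ 2 = 4 * (t : K) := by
        have := congrArg (algebraMap (𝓞 K) K) ht
        rw [map_sub, map_pow, map_pow, map_mul, map_ofNat] at this
        exact this
      simp only [Polynomial.eval₂_add, Polynomial.eval₂_pow, Polynomial.eval₂_X,
        Polynomial.eval₂_mul, Polynomial.eval₂_C, Polynomial.eval₂_neg, Polynomial.C_neg]
      linear_combination h2 / 4
  obtain ⟨z, hz⟩ := IsIntegrallyClosed.isIntegral_iff.1 hint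
  refine ⟨z, RingOfIntegers.coe_injective ?_⟩
  rw [map_sub, map_mul, hz, map_ofNat]
  ring

theorem qc_absNorm_nat (K : Type*) [Field K] [NumberField K] 
    (hdeg : Module.finrank ℚ K = 2) (n : ℕ) : Ideal.absNorm (Ideal.span {(n : 𝓞 K)}) = n ^ 2 := by
  rw [Ideal.absNorm_span_natCast, RingOfIntegers.rank, hdeg]

theorem qc_isSquare (K : Type*) [Field K] [NumberField K] (D : 𝓞 K) (h : IsSquare (D : K)) :
    ∃ e : 𝓞 K, D = e ^ 2 := by
  obtain ⟨r, hr⟩ := h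
  have hint : IsIntegral (𝓞 K) r := by
    refine ⟨Polynomial.X ^ 2 + Polynomial.C (-D), ?_, ?_⟩
    · monicity!
    · simp only [Polynomial.eval₂_add, Polynomial.eval₂_pow, Polynomial.eval₂_X,
        Polynomial.eval₂_C, Polynomial.eval₂_neg, Polynomial.C_neg]
      have hr' : algebraMap (𝓞 K) K D = r * r := hr
      rw [hr']; ring
  obtain ⟨z, rfl⟩ := IsIntegrallyClosed.isIntegral_iff.1 hint
  refine ⟨z, RingOfIntegers.coe_injective ?_⟩
  rw [map_pow]
  exact hr.trans (sq _).symm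

theorem qc_mem_coset (K : Type*) [Field K] [NumberField K] (𝔞 : Ideal (𝓞 K)) (m : ℤ) (hm : Odd m)
    (hma : (m : 𝓞 K) ∈ 𝔞) (D x : 𝓞 K) :
    (D ∈ 𝔞 ^ 2 ∧ (4 : 𝓞 K) ∣ D - x ^ 2) ↔ D - (m * x) ^ 2 ∈ Ideal.span {(4 : 𝓞 K)} * 𝔞 ^ 2 := by
  obtain ⟨k, rfl⟩ := hm
  have hm2 : ((2 * k + 1 : ℤ) : 𝓞 K) ^ 2 ∈ 𝔞 ^ 2 := Ideal.pow_mem_pow hma 2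
  rw [Ideal.mem_span_singleton_mul]
  constructor
  · rintro ⟨hD, t, ht⟩
    have h1 : D - (((2 * k + 1 : ℤ) : 𝓞 K) * x) ^ 2 = 4 * (t - (k ^ 2 + k) * x ^ 2) := by
      push_cast
      linear_combination ht
    refine ⟨t - (k ^ 2 + k) * x ^ 2, ?_, h1.symm⟩
    have h4 : 4 * (t - (k ^ 2 + k) * x ^ 2) ∈ 𝔞 ^ 2 := by
      rw [← h1]
      refine sub_mem hD ?_
      rw [mul_pow]
      exact Ideal.mul_mem_right _ _ hm2
    have h5 := Ideal.mul_mem_right (t - (k ^ 2 + k) * x ^ 2) _ hm2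
    have h6 := sub_mem h5 (Ideal.mul_mem_left _ ((k : 𝓞 K) ^ 2 + k) h4)
    convert h6 using 1
    push_cast
    ring
  · rintro ⟨z, hz, hz2⟩
    constructor
    · have : D = 4 * z + (((2 * k + 1 : ℤ) : 𝓞 K)) ^ 2 * x ^ 2 := by
        rw [hz2]; ring
      rw [this]
      exact add_mem (Ideal.mul_mem_left _ _ hz) (Ideal.mul_mem_right _ _ hm2)
    · refine ⟨z + (k ^ 2 + k) * x ^ 2, ?_⟩
      push_cast at hz2
      linear_combination - hz2

theorem qc_count0 (K : Type*) [Field K] [NumberField K] [IsTotallyComplex K]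
    (hdeg : Module.finrank ℚ K = 2) (𝔞 : Ideal (𝓞 K)) (m : ℤ) (hm : Odd m)
    (hma : (m : 𝓞 K) ∈ 𝔞) :
    Tendsto (fun s : ℝ => (Nat.card {D : 𝓞 K // (D ∈ 𝔞 ^ 2 ∧ ∃ x : 𝓞 K, (4 : 𝓞 K) ∣ D - x ^ 2) ∧
      ((|Algebra.norm ℚ (D : K)| : ℚ) : ℝ) ≤ s} : ℝ) / s) atTop
      (𝓝 (π / (2 * (Ideal.absNorm 𝔞 : ℝ) ^ 2 * √|discr K|))) := by
  have hm0 : (m : 𝓞 K) ≠ 0 := by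
    rw [Int.cast_ne_zero]; rintro rfl; simp at hm
  have h𝔞 : 𝔞 ≠ ⊥ := by
    rintro rfl; exact hm0 (by simpa using hma)
  have hJ : Ideal.span {(4 : 𝓞 K)} * 𝔞 ^ 2 ∈ (Ideal (𝓞 K))⁰ := by
    apply mem_nonZeroDivisors_of_ne_zero
    refine mul_ne_zero ?_ (pow_ne_zero _ h𝔞)
    simp
  set J : (Ideal (𝓞 K))⁰ := ⟨_, hJ⟩ with hJdef
  have hJn : (Ideal.absNorm (J : Ideal (𝓞 K)) : ℝ) = 16 * (Ideal.absNorm 𝔞 : ℝ) ^ 2 := by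
    rw [hJdef]
    simp only [map_mul, map_pow]
    have := qc_absNorm_nat K hdeg 4
    push_cast at this
    rw [this]; push_cast; norm_num
  have hcard2 : Nat.card (𝓞 K ⧸ Ideal.span {(2 : 𝓞 K)}) = 4 := by
    have := qc_absNorm_nat K hdeg 2
    rw [Ideal.absNorm_apply, Submodule.cardQuot_apply] at this
    push_cast at this
    rw [this]
  have hfinQ : Finite (𝓞 K ⧸ Ideal.span {(2 : 𝓞 K)}) := Nat.finite_of_card_ne_zero (by omega)
  have := Fintype.ofFinite (𝓞 K ⧸ Ideal.span {(2 : 𝓞 K)})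
  have hsum := tendsto_finsetSum (Finset.univ : Finset (𝓞 K ⧸ Ideal.span {(2 : 𝓞 K)}))
    (fun ξ _ => qc_coset K hdeg J ((m * (Quotient.out ξ : 𝓞 K)) ^ 2))
  rw [Finset.sum_const, Finset.card_univ, ← Nat.card_eq_fintype_card, hcard2, hJn] at hsum
  have e1 : (4 : ℕ) • (2 * π / (16 * (Ideal.absNorm 𝔞 : ℝ) ^ 2 * √|discr K|)) =
    π / (2 * (Ideal.absNorm 𝔞 : ℝ) ^ 2 * √|discr K|) := by
    have h1 : (Ideal.absNorm 𝔞 : ℝ) ≠ 0 := by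
      exact Nat.cast_ne_zero.2 (Ideal.absNorm_eq_zero_iff.not.2 h𝔞)
    have h2 : √|(discr K : ℝ)| ≠ 0 := by
      rw [Real.sqrt_ne_zero']; simp [discr_ne_zero]
    rw [nsmul_eq_mul]
    field_simp
    norm_num
  rw [e1] at hsum
  refine hsum.congr fun s => ?_
  rw [← Finset.sum_div, ← Nat.cast_sum]
  congr 2
  have hfin : ∀ (P : 𝓞 K → Prop), Finite {x : 𝓞 K // P x ∧
      ((|Algebra.norm ℚ (x : K)| : ℚ) : ℝ) ≤ s} := by
    intro P
    have := qc_finite_norm_le K hdeg s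
    exact Finite.of_injective (β := {x : 𝓞 K // ((|Algebra.norm ℚ (x : K)| : ℚ) : ℝ) ≤ s})
      (fun x => ⟨x.1, x.2.2⟩) (fun x y h => Subtype.ext (congrArg (fun z => z.1) h))
  have : ∀ ξ : 𝓞 K ⧸ Ideal.span {(2 : 𝓞 K)}, Finite {x : 𝓞 K //
    x - (m * (Quotient.out ξ : 𝓞 K)) ^ 2 ∈ (J : Ideal (𝓞 K)) ∧
      ((|Algebra.norm ℚ (x : K)| : ℚ) : ℝ) ≤ s} := fun ξ => hfin _
  rw [← Nat.card_sigma]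
  refine Nat.card_congr (Equiv.ofBijective (fun p => ⟨p.2.1, ?_, p.2.2.2⟩) ⟨?_, ?_⟩)
  · have := (qc_mem_coset K 𝔞 m hm hma p.2.1 (Quotient.out p.1)).2 p.2.2.1
    exact ⟨this.1, _, this.2⟩
  · rintro ⟨ξ, x, hx⟩ ⟨η, y, hy⟩ h
    have hxy : x = y := by simpa using h
    subst hxy
    have h1 := (qc_mem_coset K 𝔞 m hm hma x (Quotient.out ξ)).2 hx.1
    have h2 := (qc_mem_coset K 𝔞 m hm hma x (Quotient.out η)).2 hy.1
    have h3 : (4 : 𝓞 K) ∣ (Quotient.out ξ) ^ 2 - (Quotient.out η) ^ 2 := by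
      have := dvd_sub h2.2 h1.2
      convert this using 1; ring
    have h4 := qc_two_dvd K h3
    rw [← Ideal.mem_span_singleton, ← Ideal.Quotient.eq] at h4
    have h5 : ξ = η := by
      rw [← Quotient.out_eq ξ, ← Quotient.out_eq η]; exact h4
    subst h5
    rfl
  · rintro ⟨D, ⟨hD, x, hx⟩, hs⟩
    refine ⟨⟨Ideal.Quotient.mk _ x, D, ?_, hs⟩, rfl⟩
    refine (qc_mem_coset K 𝔞 m hm hma D _).1 ⟨hD, ?_⟩
    have h1 : Ideal.Quotient.mk (Ideal.span {(2 : 𝓞 K)})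
      (Quotient.out (Ideal.Quotient.mk (Ideal.span {(2 : 𝓞 K)}) x)) =
      Ideal.Quotient.mk (Ideal.span {(2 : 𝓞 K)}) x := Quotient.out_eq _
    rw [Ideal.Quotient.eq, Ideal.mem_span_singleton] at h1
    obtain ⟨c, hc⟩ := h1
    obtain ⟨t, ht⟩ := hx
    refine ⟨t - c * x - c ^ 2, ?_⟩
    have hc' := eq_add_of_sub_eq hc
    rw [hc']
    linear_combination ht

theorem qc_count (K : Type*) [Field K] [NumberField K] [IsTotallyComplex K]
    (hdeg : Module.finrank ℚ K = 2) (𝔞 : Ideal (𝓞 K)) (m : ℤ) (hm : Odd m)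
    (hma : (m : 𝓞 K) ∈ 𝔞) :
    Tendsto (fun s : ℝ => (Nat.card {D : 𝓞 K // (D ∈ 𝔞 ^ 2 ∧ ∃ x : 𝓞 K, (4 : 𝓞 K) ∣ D - x ^ 2) ∧
      ¬ IsSquare (D : K) ∧ ((|Algebra.norm ℚ (D : K)| : ℚ) : ℝ) ≤ s} : ℝ) / s) atTop
      (𝓝 (π / (2 * (Ideal.absNorm 𝔞 : ℝ) ^ 2 * √|discr K|))) := by
  have h0 := qc_count0 K hdeg 𝔞 m hm hma
  have hone : (1 : Ideal (𝓞 K)) ∈ (Ideal (𝓞 K))⁰ := one_mem _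
  have hsq := (qc_lattice K hdeg ⟨1, hone⟩).comp Real.tendsto_sqrt_atTop
  have hsq2 := hsq.mul (tendsto_inv_atTop_zero.comp Real.tendsto_sqrt_atTop)
  rw [mul_zero] at hsq2
  have h1 := h0.sub hsq2
  rw [sub_zero] at h1
  refine tendsto_of_tendsto_of_tendsto_of_le_of_le' h1 h0 ?_ ?_
  · filter_upwards [eventually_gt_atTop 0] with s hs
    have hs' : 0 < √s := Real.sqrt_pos.2 hs
    simp only [Function.comp]
    rw [← div_eq_mul_inv, div_div, Real.mul_self_sqrt hs.le, ← sub_div]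
    refine div_le_div_of_nonneg_right ?_ hs.le
    rw [sub_le_iff_le_add]
    have f1 := qc_finite_norm_le K hdeg s
    have f2 := qc_finite_norm_le K hdeg (√s)
    have : Finite {D : 𝓞 K // (D ∈ 𝔞 ^ 2 ∧ ∃ x : 𝓞 K, (4 : 𝓞 K) ∣ D - x ^ 2) ∧
      ¬ IsSquare (D : K) ∧ ((|Algebra.norm ℚ (D : K)| : ℚ) : ℝ) ≤ s} :=
      Finite.of_injective (β := {x : 𝓞 K // ((|Algebra.norm ℚ (x : K)| : ℚ) : ℝ) ≤ s})
      (fun x => ⟨x.1, x.2.2.2⟩) (fun x y h => Subtype.ext (congrArg (fun z => z.1) h))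
    have : Finite {x : 𝓞 K // x ∈ (1 : Ideal (𝓞 K)) ∧
      ((|Algebra.norm ℚ (x : K)| : ℚ) : ℝ) ≤ √s} :=
      Finite.of_injective (β := {x : 𝓞 K // ((|Algebra.norm ℚ (x : K)| : ℚ) : ℝ) ≤ √s})
      (fun x => ⟨x.1, x.2.2⟩) (fun x y h => Subtype.ext (congrArg (fun z => z.1) h))
    rw [← Nat.cast_add, ← Nat.card_sum]
    classical
    have hne : ∀ D e : 𝓞 K, D = e ^ 2 → ((|Algebra.norm ℚ (D : K)| : ℚ) : ℝ) ≤ s →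
        ((|Algebra.norm ℚ (e : K)| : ℚ) : ℝ) ≤ √s := by
      intro D e hDe hD
      have h3 : (D : K) = (e : K) ^ 2 := by
        rw [hDe]; simp
      rw [h3, map_pow, abs_pow, Rat.cast_pow] at hD
      exact Real.le_sqrt_of_sq_le hD
    choose! e he using qc_isSquare K
    refine Nat.cast_le.2 (Nat.card_le_card_of_injective
      (fun x => if h : IsSquare (x.1 : K) then
        Sum.inr ⟨e x.1, by simp, hne _ _ (he _ h) x.2.2⟩ else
        Sum.inl ⟨x.1, x.2.1, h, x.2.2⟩) ?_)
    rintro ⟨x, hx⟩ ⟨y, hy⟩ hxy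
    apply Subtype.ext
    by_cases h1 : IsSquare (x : K) <;> by_cases h2 : IsSquare (y : K)
    · simp only [h1, h2, dif_pos, Sum.inr.injEq, Subtype.mk.injEq] at hxy
      change x = y
      rw [he x h1, he y h2, hxy]
    · simp [h1, h2] at hxy
    · simp [h1, h2] at hxy
    · simpa [h1, h2] using hxy
  · filter_upwards [eventually_gt_atTop 0] with s hs
    refine div_le_div_of_nonneg_right ?_ hs.le
    have := qc_finite_norm_le K hdeg s
    have : Finite {D : 𝓞 K // (D ∈ 𝔞 ^ 2 ∧ ∃ x : 𝓞 K, (4 : 𝓞 K) ∣ D - x ^ 2) ∧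
      ((|Algebra.norm ℚ (D : K)| : ℚ) : ℝ) ≤ s} :=
      Finite.of_injective (β := {x : 𝓞 K // ((|Algebra.norm ℚ (x : K)| : ℚ) : ℝ) ≤ s})
      (fun x => ⟨x.1, x.2.2⟩) (fun x y h => Subtype.ext (congrArg (fun z => z.1) h))
    refine Nat.cast_le.2 (Nat.card_le_card_of_injective (fun x => ⟨x.1, x.2.1, x.2.2.2⟩)
      (fun x y h => Subtype.ext (congrArg (fun z => z.1) h)))
end S2

open NumberField Filter
open scoped nonZeroDivisors Real

section S3
open Module

theorem qc_pair {K L : Type*} [Field K] [Field L] [Algebra K L]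
    (hKL : finrank K L = 2) (θ : L) (hn : ∀ x : K, algebraMap K L x ≠ θ) (w : L) :
    ∃ a b : K, w = algebraMap K L a + algebraMap K L b * θ := by
  have hli : LinearIndependent K ![(1 : L), θ] := by
    rw [LinearIndependent.pair_iff]
    intro s t h
    have ht : t = 0 := by
      by_contra ht
      apply hn (-s / t)
      have ht' : algebraMap K L t ≠ 0 := by simpa using ht
      rw [Algebra.smul_def, Algebra.smul_def, mul_one] at h
      rw [map_div₀, map_neg, div_eq_iff ht']
      linear_combination -h
    subst ht
    simpa using h
  let b := basisOfLinearIndependentOfCardEqFinrank hli (by simp [hKL])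
  have := b.sum_repr w
  refine ⟨b.repr w 0, b.repr w 1, ?_⟩
  have h0 : b 0 = 1 := by simp [b]
  have h1 : b 1 = θ := by simp [b]
  rw [Fin.sum_univ_two, h0, h1, Algebra.smul_def, Algebra.smul_def, mul_one] at this
  exact this.symm

theorem qc_trace_theta {K L : Type*} [Field K] [Field L] [Algebra K L]
    (hKL : finrank K L = 2) (D : K) (θ : L) (hθ : θ ^ 2 = algebraMap K L D)
    (hn : ∀ x : K, algebraMap K L x ≠ θ) : Algebra.trace K L θ = 0 := by
  have hli : LinearIndependent K ![(1 : L), θ] := by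
    rw [LinearIndependent.pair_iff]
    intro s t h
    have ht : t = 0 := by
      by_contra ht
      apply hn (-s / t)
      have ht' : algebraMap K L t ≠ 0 := by simpa using ht
      rw [Algebra.smul_def, Algebra.smul_def, mul_one] at h
      rw [map_div₀, map_neg, div_eq_iff ht']
      linear_combination -h
    subst ht
    simpa using h
  let b := basisOfLinearIndependentOfCardEqFinrank hli (by simp [hKL])
  have h0 : b 0 = 1 := by simp [b]
  have h1 : b 1 = θ := by simp [b]
  rw [Algebra.trace_eq_matrix_trace b, Matrix.trace, Fin.sum_univ_two]
  simp only [Matrix.diag_apply, Algebra.leftMulMatrix_eq_repr_mul]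
  have e0 : θ * b 0 = b 1 := by rw [h0, h1, mul_one]
  have e1 : θ * b 1 = D • b 0 := by rw [h0, h1, ← pow_two, hθ, Algebra.smul_def, mul_one]
  rw [e0, e1]
  simp

theorem qc_discr_fam (K L : Type*) [Field K] [Field L] [NumberField K] [NumberField L] [Algebra K L]
    (hKL : finrank K L = 2) (D : K) (θ : L) (hθ : θ ^ 2 = algebraMap K L D)
    (hn : ∀ x : K, algebraMap K L x ≠ θ) :
    Algebra.discr ℚ (Sum.elim (fun i => algebraMap K L (integralBasis K i))
      (fun i => algebraMap K L (integralBasis K i) * θ)) =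
      4 ^ finrank ℚ K * (discr K : ℚ) ^ 2 * Algebra.norm ℚ D := by
  set e := integralBasis K with he
  have hfin : Module.Finite K L := Module.finite_of_finrank_eq_succ hKL
  have t1 (x : K) : Algebra.trace ℚ L (algebraMap K L x) = 2 * Algebra.trace ℚ K x := by
    rw [← Algebra.trace_trace (S := K), Algebra.trace_algebraMap, hKL, map_nsmul]
    simp
  have t2 (x : K) : Algebra.trace ℚ L (algebraMap K L x * θ) = 0 := by
    rw [← Algebra.trace_trace (S := K), ← Algebra.smul_def, map_smul,
      qc_trace_theta hKL D θ hθ hn]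
    simp
  have hM : Algebra.traceMatrix ℚ (Sum.elim (fun i => algebraMap K L (e i))
      (fun i => algebraMap K L (e i) * θ)) =
      Matrix.fromBlocks ((2:ℚ) • Algebra.traceMatrix ℚ e) 0 0
        ((2:ℚ) • (Algebra.traceMatrix ℚ e * Algebra.leftMulMatrix e D)) := by
    ext i j
    rcases i with i | i <;> rcases j with j | j
    · simp only [Algebra.traceMatrix_apply, Algebra.traceForm_apply, Sum.elim_inl,
        Matrix.fromBlocks_apply₁₁, Matrix.smul_apply, smul_eq_mul]
      rw [← map_mul, t1]
    · simp only [Algebra.traceMatrix_apply, Algebra.traceForm_apply, Sum.elim_inl, Sum.elim_inr,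
        Matrix.fromBlocks_apply₁₂, Matrix.zero_apply]
      rw [← mul_assoc, ← map_mul, t2]
    · simp only [Algebra.traceMatrix_apply, Algebra.traceForm_apply, Sum.elim_inl, Sum.elim_inr,
        Matrix.fromBlocks_apply₂₁, Matrix.zero_apply]
      rw [mul_right_comm, ← map_mul, t2]
    · simp only [Algebra.traceMatrix_apply, Algebra.traceForm_apply, Sum.elim_inr,
        Matrix.fromBlocks_apply₂₂, Matrix.smul_apply, smul_eq_mul, Matrix.mul_apply]
      have : algebraMap K L (e i) * θ * (algebraMap K L (e j) * θ) =
          algebraMap K L (e i * (D * e j)) := by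
        rw [map_mul, map_mul, ← hθ]; ring
      rw [this, t1]
      congr 1
      conv_lhs => rw [← e.sum_repr (D * e j), Finset.mul_sum, map_sum]
      refine Finset.sum_congr rfl fun k _ => ?_
      rw [Algebra.leftMulMatrix_eq_repr_mul, mul_smul_comm, map_smul, smul_eq_mul, mul_comm]
  rw [Algebra.discr_def, hM, Matrix.det_fromBlocks_zero₂₁, Matrix.det_smul, Matrix.det_smul,
    Matrix.det_mul, ← Algebra.norm_eq_matrix_det, ← Algebra.discr_def, coe_discr,
    ← Module.finrank_eq_card_basis e]
  rw [show (4:ℚ) = 2 * 2 by norm_num, mul_pow]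
  ring

theorem qc_discr (K L : Type*) [Field K] [Field L] [NumberField K] [NumberField L] [Algebra K L]
    (hKL : finrank K L = 2) (D : K) (θ : L) (hθ : θ ^ 2 = algebraMap K L D)
    (hn : ∀ x : K, algebraMap K L x ≠ θ) (I : (FractionalIdeal (𝓞 K)⁰ K)ˣ)
    (hI : ∀ y : K, y ∈ (I : FractionalIdeal (𝓞 K)⁰ K) ↔
      ∃ x : K, IsIntegral ℤ ((algebraMap K L x + algebraMap K L y * θ) / 2)) :
    ((|discr L| : ℤ) : ℚ) = (discr K : ℚ) ^ 2 * |Algebra.norm ℚ D| *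
      (FractionalIdeal.absNorm (I : FractionalIdeal (𝓞 K)⁰ K)) ^ 2 := by
  set e := integralBasis K with he
  have hfin : Module.Finite K L := Module.finite_of_finrank_eq_succ hKL
  have hcard : Fintype.card (Free.ChooseBasisIndex ℤ (𝓞 K)) =
      Fintype.card (Free.ChooseBasisIndex ℤ I) := by
    rw [← finrank_eq_card_chooseBasisIndex, ← finrank_eq_card_chooseBasisIndex,
      fractionalIdeal_rank]
  let σ := Fintype.equivOfCardEq hcard
  set y := (basisOfFractionalIdeal K I).reindex σ.symm with hy
  have hymem : ∀ j, y j ∈ (I : FractionalIdeal (𝓞 K)⁰ K) := by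
    intro j
    rw [hy, Basis.reindex_apply, basisOfFractionalIdeal_apply]
    exact Subtype.property _
  choose x hx using fun j => (hI (y j)).1 (hymem j)
  let z : Free.ChooseBasisIndex ℤ (𝓞 K) ⊕ Free.ChooseBasisIndex ℤ (𝓞 K) → L :=
    Sum.elim (fun i => algebraMap K L (e i))
      (fun j => (algebraMap K L (x j) + algebraMap K L (y j) * θ) / 2)
  have hz : ∀ i, IsIntegral ℤ (z i) := by
    rintro (i | i)
    · simp only [z, Sum.elim_inl, he, integralBasis_apply]
      exact ((RingOfIntegers.isIntegral_coe _)).map (IsScalarTower.toAlgHom ℤ K L)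
    · exact hx i
  let zz : Free.ChooseBasisIndex ℤ (𝓞 K) ⊕ Free.ChooseBasisIndex ℤ (𝓞 K) → 𝓞 L :=
    fun i => ⟨z i, hz i⟩
  have hspan : ⊤ ≤ Submodule.span ℤ (Set.range zz) := by
    intro w _
    obtain ⟨a, b, hab⟩ := qc_pair hKL θ hn (w : L)
    have hb : (2 * b) ∈ (I : FractionalIdeal (𝓞 K)⁰ K) := by
      rw [hI]
      refine ⟨2 * a, ?_⟩
      have : (algebraMap K L (2 * a) + algebraMap K L (2 * b) * θ) / 2 = w := by
        rw [hab, map_mul, map_mul, map_ofNat]; ring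
      rw [this]
      exact RingOfIntegers.isIntegral_coe w
    have hb2 : (2 * b) ∈ Submodule.span ℤ (Set.range y) := by
      have : Set.range y = Set.range (basisOfFractionalIdeal K I) := by
        rw [hy, Basis.range_reindex]
      rw [this, mem_span_basisOfFractionalIdeal]
      exact hb
    rw [Submodule.mem_span_range_iff_exists_fun] at hb2
    obtain ⟨n, hn'⟩ := hb2
    have hr : IsIntegral ℤ (a - ∑ j, n j • (x j / 2)) := by
      rw [← isIntegral_algebraMap_iff (FaithfulSMul.algebraMap_injective K L)]
      have : algebraMap K L (a - ∑ j, n j • (x j / 2)) = (w : L) - ∑ j, n j • z (Sum.inr j) := by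
        have h3 : algebraMap K L (2 * b) = algebraMap K L (∑ j, n j • y j) := by rw [hn']
        have h4 : ∑ j, n j • z (Sum.inr j) = algebraMap K L (∑ j, n j • (x j / 2)) +
            algebraMap K L (∑ j, n j • y j) * θ / 2 := by
          simp only [map_sum, z, Sum.elim_inr, Finset.sum_mul, Finset.sum_div,
            ← Finset.sum_add_distrib, zsmul_eq_mul, map_mul, map_div₀, map_intCast, map_ofNat]
          refine Finset.sum_congr rfl fun j _ => ?_
          ring
        rw [h4, ← h3, hab, map_sub, map_mul, map_ofNat]; ring
      rw [this]
      exact (RingOfIntegers.isIntegral_coe w).sub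
        (IsIntegral.sum _ fun j _ => (hz (Sum.inr j)).smul (n j))
    have hr2 : (a - ∑ j, n j • (x j / 2)) ∈ Submodule.span ℤ (Set.range e) := by
      rw [he, mem_span_integralBasis]
      exact ⟨⟨_, hr⟩, rfl⟩
    rw [Submodule.mem_span_range_iff_exists_fun] at hr2
    obtain ⟨m, hm⟩ := hr2
    rw [Submodule.mem_span_range_iff_exists_fun]
    refine ⟨Sum.elim m n, ?_⟩
    apply RingOfIntegers.coe_injective
    rw [map_sum, Fintype.sum_sum_type]
    simp only [map_zsmul, Sum.elim_inl, Sum.elim_inr]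
    change ∑ i, m i • z (Sum.inl i) + ∑ j, n j • z (Sum.inr j) = (w : L)
    have h4 : ∑ j, n j • z (Sum.inr j) = algebraMap K L (∑ j, n j • (x j / 2)) +
        algebraMap K L (∑ j, n j • y j) * θ / 2 := by
      simp only [map_sum, z, Sum.elim_inr, Finset.sum_mul, Finset.sum_div,
        ← Finset.sum_add_distrib, zsmul_eq_mul, map_mul, map_div₀, map_intCast, map_ofNat]
      refine Finset.sum_congr rfl fun j _ => ?_
      ring
    have h5 : ∑ i, m i • z (Sum.inl i) = algebraMap K L (∑ i, m i • e i) := by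
      simp only [map_sum, z, Sum.elim_inl, zsmul_eq_mul, map_mul, map_intCast]
    rw [h4, h5, hn', hm, hab, map_sub, map_mul, map_ofNat]; ring
  let B := basisOfTopLeSpanOfCardEqFinrank zz hspan (by
    rw [Fintype.card_sum, RingOfIntegers.rank, ← Module.finrank_mul_finrank ℚ K L, hKL,
      ← finrank_eq_card_chooseBasisIndex, RingOfIntegers.rank]; ring)
  have hB : ⇑B = zz := coe_basisOfTopLeSpanOfCardEqFinrank _ _ _
  have hd : (discr L : ℚ) = Algebra.discr ℚ z := by
    rw [← discr_eq_discr L B, hB, Algebra.discr_def, Algebra.discr_def]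
    rw [← eq_intCast (algebraMap ℤ ℚ), RingHom.map_det]
    congr 1
    ext i j
    simp only [RingHom.mapMatrix_apply, Matrix.map_apply, Algebra.traceMatrix_apply,
      Algebra.traceForm_apply, eq_intCast]
    exact Algebra.coe_trace_int (zz i * zz j)
  let P : Matrix (Free.ChooseBasisIndex ℤ (𝓞 K) ⊕ Free.ChooseBasisIndex ℤ (𝓞 K))
      (Free.ChooseBasisIndex ℤ (𝓞 K) ⊕ Free.ChooseBasisIndex ℤ (𝓞 K)) ℚ :=
    Matrix.fromBlocks 1 (Matrix.of fun i j => e.repr (x j / 2) i) 0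
      ((1/2 : ℚ) • e.toMatrix y)
  have hP : Matrix.vecMul (Sum.elim (fun i => algebraMap K L (e i))
      (fun i => algebraMap K L (e i) * θ)) (P.map (algebraMap ℚ L)) = z := by
    have hrep (u : K) : ∑ i, algebraMap K L (e i) * algebraMap ℚ L (e.repr u i) =
        algebraMap K L u := by
      conv_rhs => rw [← e.sum_repr u, map_sum]
      refine Finset.sum_congr rfl fun i _ => ?_
      rw [Algebra.smul_def, map_mul, ← IsScalarTower.algebraMap_apply, mul_comm]
    ext j
    rcases j with j | j
    · simp [Matrix.vecMul, dotProduct, Fintype.sum_sum_type, P, z, Matrix.one_apply]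
      simp [apply_ite]
    · simp only [Matrix.vecMul, dotProduct, Fintype.sum_sum_type, P, z, Sum.elim_inl, Sum.elim_inr,
        Matrix.map_apply, Matrix.fromBlocks_apply₁₂, Matrix.fromBlocks_apply₂₂, Matrix.of_apply,
        Matrix.smul_apply, smul_eq_mul, Basis.toMatrix_apply, hrep, map_mul]
      have : ∑ i, algebraMap K L (e i) * θ *
          (algebraMap ℚ L (1 / 2) * algebraMap ℚ L (e.repr (y j) i)) =
          algebraMap K L (y j) * θ / 2 := by
        rw [← hrep (y j), Finset.sum_mul, Finset.sum_div]
        refine Finset.sum_congr rfl fun i _ => ?_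
        rw [map_div₀, map_one, map_ofNat]
        ring
      rw [this, map_div₀, map_ofNat]
      ring
  have hdetP : P.det = (1/2) ^ finrank ℚ K * e.det y := by
    simp only [P]
    rw [Matrix.det_fromBlocks_zero₂₁, Matrix.det_one, one_mul, Matrix.det_smul,
      Basis.det_apply, ← Module.finrank_eq_card_basis e]
  have hN : |e.det y| = FractionalIdeal.absNorm (I : FractionalIdeal (𝓞 K)⁰ K) :=
    det_basisOfFractionalIdeal_eq_absNorm K I σ
  rw [Int.cast_abs, hd, ← hP, Algebra.discr_of_matrix_vecMul, qc_discr_fam K L hKL D θ hθ hn,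
    hdetP, ← hN]
  simp only [abs_mul, abs_pow]
  rw [sq_abs (discr K : ℚ), sq_abs (e.det y)]
  have : |(1/2 : ℚ)| = 1/2 := by norm_num
  have h4 : |(4 : ℚ)| = 4 := by norm_num
  rw [this, h4, mul_pow, ← pow_mul, mul_comm (finrank ℚ K) 2, pow_mul, sq_abs]
  have : ((1/2:ℚ)^2) ^ finrank ℚ K * 4 ^ finrank ℚ K = 1 := by
    rw [← mul_pow]; norm_num
  linear_combination (e.det y)^2 * (discr K : ℚ)^2 * |Algebra.norm ℚ D| * this

end S3

open NumberField Filter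
open scoped nonZeroDivisors Real

section S4
open Module IntermediateField

structure QAdm (K : Type*) {Ω : Type*} [Field K] [Field Ω] [Algebra K Ω] (θ : Ω) : Prop where
  sq : ∃ D : K, θ ^ 2 = algebraMap K Ω D
  nm : ∀ x : K, algebraMap K Ω x ≠ θ

theorem QAdm.irr {K Ω : Type*} [Field K] [Field Ω] [Algebra K Ω] {θ : Ω} (h : QAdm K θ) {D : K}
    (hD : θ ^ 2 = algebraMap K Ω D) : Polynomial.X ^ 2 - Polynomial.C D = minpoly K θ := by
  apply minpoly.eq_of_irreducible_of_monic
  · apply X_pow_sub_C_irreducible_of_prime Nat.prime_two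
    intro b hb
    rw [← hb, map_pow] at hD
    rcases sq_eq_sq_iff_eq_or_eq_neg.1 hD with h1 | h1
    · exact h.nm b h1.symm
    · exact h.nm (-b) (by rw [h1, map_neg])
  · simp [hD]
  · monicity!

theorem QAdm.ne_zero {K Ω : Type*} [Field K] [Field Ω] [Algebra K Ω] {θ : Ω} (h : QAdm K θ) :
    θ ≠ 0 := fun h0 => h.nm 0 (by simp [h0])

theorem QAdm.int {K Ω : Type*} [Field K] [Field Ω] [Algebra K Ω] {θ : Ω} (h : QAdm K θ) :
    IsIntegral K θ := by
  obtain ⟨D, hD⟩ := h.sq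
  refine ⟨Polynomial.X ^ 2 - Polynomial.C D, by monicity!, by simp [hD]⟩

theorem QAdm.finrank {K Ω : Type*} [Field K] [Field Ω] [Algebra K Ω] {θ : Ω} (h : QAdm K θ) :
    finrank K K⟮θ⟯ = 2 := by
  obtain ⟨D, hD⟩ := h.sq
  rw [IntermediateField.adjoin.finrank h.int, ← h.irr hD]
  compute_degree!

theorem QAdm.conj {K Ω : Type*} [Field K] [Field Ω] [Algebra K Ω] [Normal K Ω] {θ : Ω}
    (h : QAdm K θ) : ∃ σ : Ω ≃ₐ[K] Ω, σ θ = -θ := by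
  obtain ⟨D, hD⟩ := h.sq
  have hneg : QAdm K (-θ) := ⟨⟨D, by rw [neg_sq, hD]⟩, fun x hx => h.nm (-x) (by
    rw [map_neg, hx, neg_neg])⟩
  have : IsConjRoot K (-θ) θ := by
    rw [IsConjRoot, ← h.irr hD, ← hneg.irr (D := D) (by rw [neg_sq, hD])]
  exact isConjRoot_iff_exists_algEquiv.1 this

theorem QAdm.smul {K Ω : Type*} [Field K] [Field Ω] [Algebra K Ω] {θ : Ω} (h : QAdm K θ) {t : K}
    (ht : t ≠ 0) : QAdm K (algebraMap K Ω t * θ) := by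
  obtain ⟨D, hD⟩ := h.sq
  refine ⟨⟨t ^ 2 * D, by rw [mul_pow, hD, map_mul, map_pow]⟩, fun x hx => h.nm (x / t) ?_⟩
  have ht' : algebraMap K Ω t ≠ 0 := by simpa using ht
  rw [map_div₀, hx]
  field_simp

theorem qc_exists_theta {K Ω : Type*} [Field K] [CharZero K] [Field Ω] [Algebra K Ω]
    (L : IntermediateField K Ω) (hL : Module.finrank K L = 2) :
    ∃ θ : Ω, QAdm K θ ∧ K⟮θ⟯ = L := by
  have hfin : FiniteDimensional K L := Module.finite_of_finrank_eq_succ hL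
  have hne : ∃ θ : L, ∀ x : K, algebraMap K L x ≠ θ := by
    by_contra hc
    push Not at hc
    have hsurj : Function.Surjective (Algebra.linearMap K L) := fun θ => hc θ
    have := LinearMap.finrank_le_finrank_of_surjective hsurj
    rw [hL, Module.finrank_self] at this
    omega
  obtain ⟨θ, hθ⟩ := hne
  obtain ⟨a, b, hab⟩ := qc_pair hL θ hθ (θ ^ 2)
  have h2 : (algebraMap K L 2) = 2 := map_ofNat _ 2
  have hc0 : (2 : K) ≠ 0 := two_ne_zero
  have h20 : (2 : L) ≠ 0 := by rw [← h2]; simpa using hc0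
  let θ' : L := θ - algebraMap K L (b / 2)
  have hA : QAdm K (θ' : Ω) := by
    refine ⟨⟨a + (b / 2) ^ 2, ?_⟩, ?_⟩
    · have : θ' ^ 2 = algebraMap K L (a + (b / 2) ^ 2) := by
        simp only [θ', map_add, map_pow, map_div₀, h2]
        field_simp
        linear_combination 4 * hab
      have h := congrArg (algebraMap L Ω) this
      rw [map_pow, ← IsScalarTower.algebraMap_apply] at h
      exact h
    · intro x hx
      apply hθ (x + b / 2)
      have : algebraMap K L x = θ' := by
        apply (algebraMap L Ω).injective
        rw [← IsScalarTower.algebraMap_apply]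
        exact hx
      rw [map_add, this]
      simp [θ']
  refine ⟨θ', hA, ?_⟩
  apply IntermediateField.eq_of_le_of_finrank_eq
  · rw [IntermediateField.adjoin_simple_le_iff]
    exact θ'.2
  · rw [hA.finrank, hL]

theorem qc_theta_ratio {K Ω : Type*} [Field K] [CharZero K] [Field Ω] [Algebra K Ω] {θ θ' : Ω}
    (h : QAdm K θ) (h' : QAdm K θ') (he : K⟮θ⟯ = K⟮θ'⟯) :
    ∃ s : K, s ≠ 0 ∧ θ' = algebraMap K Ω s * θ := by
  have hm : θ' ∈ K⟮θ⟯ := by rw [he]; exact IntermediateField.mem_adjoin_simple_self K θ'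
  obtain ⟨a, b, hab⟩ := qc_pair h.finrank (⟨θ, IntermediateField.mem_adjoin_simple_self K θ⟩ : K⟮θ⟯)
    (fun x hx => h.nm x (congrArg (algebraMap K⟮θ⟯ Ω) hx)) ⟨θ', hm⟩
  have hab : θ' = algebraMap K Ω a + algebraMap K Ω b * θ := congrArg (algebraMap K⟮θ⟯ Ω) hab
  obtain ⟨D, hD⟩ := h.sq
  obtain ⟨D', hD'⟩ := h'.sq
  have hb : b ≠ 0 := by
    rintro rfl
    exact h'.nm a (by simp [hab])
  have ha : a = 0 := by
    by_contra ha
    apply h.nm ((D' - a ^ 2 - b ^ 2 * D) / (2 * a * b))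
    have h1 : algebraMap K Ω (2 * a * b) ≠ 0 := by
      rw [map_ne_zero]
      exact mul_ne_zero (mul_ne_zero two_ne_zero ha) hb
    rw [map_div₀, div_eq_iff h1]
    simp only [map_sub, map_mul, map_pow, map_ofNat, ← hD, ← hD', hab]
    ring
  exact ⟨b, hb, by rw [hab, ha]; simp⟩

theorem qc_adjoin_smul {K Ω : Type*} [Field K] [Field Ω] [Algebra K Ω] {θ : Ω}
    {s : K} (hs : s ≠ 0) : K⟮algebraMap K Ω s * θ⟯ = K⟮θ⟯ := by
  apply le_antisymm
  · rw [IntermediateField.adjoin_simple_le_iff]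
    exact mul_mem (IntermediateField.algebraMap_mem _ s) (IntermediateField.mem_adjoin_simple_self K θ)
  · rw [IntermediateField.adjoin_simple_le_iff]
    have hs' : algebraMap K Ω s ≠ 0 := by simpa using hs
    have : θ = algebraMap K Ω s⁻¹ * (algebraMap K Ω s * θ) := by
      rw [map_inv₀]; field_simp
    rw [this]
    apply mul_mem (IntermediateField.algebraMap_mem _ _)
    rw [← this]
    exact IntermediateField.mem_adjoin_simple_self K _

/-- The module of second coordinates. -/
def qcJs (K : Type*) {Ω : Type*} [Field K] [NumberField K] [Field Ω] [Algebra K Ω] (θ : Ω) :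
    Submodule (𝓞 K) K where
  carrier := {y | ∃ x : K, IsIntegral ℤ ((algebraMap K Ω x + algebraMap K Ω y * θ) / 2)}
  zero_mem' := ⟨0, by simpa using isIntegral_zero⟩
  add_mem' := by
    rintro a b ⟨x, hx⟩ ⟨y, hy⟩
    refine ⟨x + y, ?_⟩
    have := hx.add hy
    have e : (algebraMap K Ω (x + y) + algebraMap K Ω (a + b) * θ) / 2 =
        (algebraMap K Ω x + algebraMap K Ω a * θ) / 2 +
        (algebraMap K Ω y + algebraMap K Ω b * θ) / 2 := by
      simp only [map_add]; ring
    rw [e]; exact this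
  smul_mem' := by
    rintro c a ⟨x, hx⟩
    refine ⟨c * x, ?_⟩
    have hc : IsIntegral ℤ (algebraMap K Ω (c : K)) :=
      (RingOfIntegers.isIntegral_coe c).map (IsScalarTower.toAlgHom ℤ K Ω)
    have := hc.mul hx
    have e : (algebraMap K Ω (c * x) + algebraMap K Ω (c • a) * θ) / 2 =
        algebraMap K Ω (c : K) * ((algebraMap K Ω x + algebraMap K Ω a * θ) / 2) := by
      rw [show c • a = (c : K) * a from rfl, map_mul, map_mul]; ring
    rw [e]; exact this

theorem qc_mem_J {K Ω : Type*} [Field K] [NumberField K] [Field Ω] [Algebra K Ω] [Normal K Ω]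
    {θ : Ω} (h : QAdm K θ) {D : K} (hD : θ ^ 2 = algebraMap K Ω D) (y : K) :
    y ∈ qcJs K θ ↔ ∃ x t : 𝓞 K, (x : K) ^ 2 - y ^ 2 * D = 4 * (t : K) := by
  have : CharZero Ω := charZero_of_injective_algebraMap (algebraMap K Ω).injective
  have h2 : (algebraMap K Ω 2) = 2 := map_ofNat _ 2
  have h4 : (algebraMap K Ω 4) = 4 := map_ofNat _ 4
  have hinj := FaithfulSMul.algebraMap_injective K Ω
  constructor
  · rintro ⟨x, hx⟩
    obtain ⟨σ, hσ⟩ := h.conj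
    have hx' : IsIntegral ℤ ((algebraMap K Ω x - algebraMap K Ω y * θ) / 2) := by
      have := hx.map (σ.toAlgHom.restrictScalars ℤ)
      have e : (algebraMap K Ω x - algebraMap K Ω y * θ) / 2 =
          σ ((algebraMap K Ω x + algebraMap K Ω y * θ) / 2) := by
        rw [map_div₀, map_add, map_mul, hσ, AlgEquiv.commutes, AlgEquiv.commutes, map_ofNat]
        ring
      rw [e]; exact this
    have hxi : IsIntegral ℤ x := by
      rw [← isIntegral_algebraMap_iff hinj]
      have := hx.add hx'
      have e : algebraMap K Ω x = (algebraMap K Ω x + algebraMap K Ω y * θ) / 2 +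
        (algebraMap K Ω x - algebraMap K Ω y * θ) / 2 := by ring
      rw [e]; exact this
    have hti : IsIntegral ℤ ((x ^ 2 - y ^ 2 * D) / 4) := by
      rw [← isIntegral_algebraMap_iff hinj]
      have := hx.mul hx'
      have e : algebraMap K Ω ((x ^ 2 - y ^ 2 * D) / 4) =
          (algebraMap K Ω x + algebraMap K Ω y * θ) / 2 *
          ((algebraMap K Ω x - algebraMap K Ω y * θ) / 2) := by
        simp only [map_div₀, map_sub, map_pow, map_mul, h4, ← hD]
        ring
      rw [e]; exact this
    refine ⟨⟨x, hxi⟩, ⟨_, hti⟩, ?_⟩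
    change x ^ 2 - y ^ 2 * D = 4 * ((x ^ 2 - y ^ 2 * D) / 4)
    ring
  · rintro ⟨x, t, hxt⟩
    refine ⟨x, ?_⟩
    apply isIntegral_trans (A := 𝓞 K)
    refine ⟨Polynomial.X ^ 2 + Polynomial.C (-x) * Polynomial.X + Polynomial.C t, by monicity!, ?_⟩
    simp only [Polynomial.eval₂_add, Polynomial.eval₂_pow, Polynomial.eval₂_X,
        Polynomial.eval₂_mul, Polynomial.eval₂_C, Polynomial.C_neg, Polynomial.eval₂_neg]
    have e1 : algebraMap (𝓞 K) Ω x = algebraMap K Ω (x : K) := rfl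
    have e2 : algebraMap (𝓞 K) Ω t = algebraMap K Ω (t : K) := rfl
    rw [e1, e2]
    have := congrArg (algebraMap K Ω) hxt
    simp only [map_sub, map_pow, map_mul, h4, ← hD] at this
    linear_combination -this / 4

theorem qc_int_of_sq {K : Type*} [Field K] [NumberField K] {z : K} {a : 𝓞 K}
    (h : z ^ 2 = (a : K)) : ∃ b : 𝓞 K, (b : K) = z := by
  have : IsIntegral ℤ z := by
    apply IsIntegral.of_pow (n := 2) (by norm_num)
    rw [h]; exact RingOfIntegers.isIntegral_coe a
  exact ⟨⟨z, this⟩, rfl⟩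

theorem QAdm.D_ne {K Ω : Type*} [Field K] [Field Ω] [Algebra K Ω] {θ : Ω} (h : QAdm K θ) {D : K}
    (hD : θ ^ 2 = algebraMap K Ω D) : D ≠ 0 := by
  rintro rfl
  rw [map_zero] at hD
  exact h.ne_zero (by simpa using hD)

theorem qc_J_fractional {K Ω : Type*} [Field K] [NumberField K] [Field Ω] [Algebra K Ω] [Normal K Ω]
    {θ : Ω} (h : QAdm K θ) : IsFractional (𝓞 K)⁰ (qcJs K θ) := by
  obtain ⟨D, hD⟩ := h.sq
  obtain ⟨p, q, hq, hpq⟩ := IsFractionRing.div_surjective (A := 𝓞 K) D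
  have hq0 : (q : K) ≠ 0 := by simpa using nonZeroDivisors.ne_zero hq
  have hpq : (p : K) / (q : K) = D := hpq
  have hp0 : p ≠ 0 := by
    rintro rfl
    exact h.D_ne hD (by rw [← hpq]; simp)
  refine ⟨p, mem_nonZeroDivisors_of_ne_zero hp0, fun y hy => ?_⟩
  obtain ⟨x, t, hxt⟩ := (qc_mem_J h hD y).1 hy
  have : ((p : K) * y) ^ 2 = ((x ^ 2 - 4 * t) * (p * q) : 𝓞 K) := by
    push_cast
    have : y ^ 2 * D = (x:K)^2 - 4 * t := by linear_combination -hxt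
    rw [← hpq] at this
    have e : (x:K)^2 - 4 * t = y ^ 2 * (p / q) := this.symm
    change _ = (((x : K) ^ 2 - 4 * (t : K)) * ((p : K) * (q : K)))
    rw [e]
    field_simp
  obtain ⟨b, hb⟩ := qc_int_of_sq this
  exact ⟨b, hb⟩

noncomputable def qcJ (K : Type*) {Ω : Type*} [Field K] [NumberField K] [Field Ω] [Algebra K Ω]
    [Normal K Ω] (θ : Ω) (h : QAdm K θ) : FractionalIdeal (𝓞 K)⁰ K :=
  ⟨qcJs K θ, qc_J_fractional h⟩

theorem qc_memJ' {K Ω : Type*} [Field K] [NumberField K] [Field Ω] [Algebra K Ω]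
    [Normal K Ω] {θ : Ω} (h : QAdm K θ) (y : K) : y ∈ qcJ K θ h ↔
      ∃ x : K, IsIntegral ℤ ((algebraMap K Ω x + algebraMap K Ω y * θ) / 2) := Iff.rfl

theorem qc_memJ {K Ω : Type*} [Field K] [NumberField K] [Field Ω] [Algebra K Ω]
    [Normal K Ω] {θ : Ω} (h : QAdm K θ) {D : K} (hD : θ ^ 2 = algebraMap K Ω D) (y : K) :
    y ∈ qcJ K θ h ↔ ∃ x t : 𝓞 K, (x : K) ^ 2 - y ^ 2 * D = 4 * (t : K) := qc_mem_J h hD y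

theorem qc_J_ne {K Ω : Type*} [Field K] [NumberField K] [Field Ω] [Algebra K Ω]
    [Normal K Ω] {θ : Ω} (h : QAdm K θ) : qcJ K θ h ≠ 0 := by
  obtain ⟨D, hD⟩ := h.sq
  obtain ⟨p, q, hq, hpq⟩ := IsFractionRing.div_surjective (A := 𝓞 K) D
  have hq0 : (q : K) ≠ 0 := by simpa using nonZeroDivisors.ne_zero hq
  have hpq : (p : K) / (q : K) = D := hpq
  intro h0
  have : (2 * (q : K)) ∈ qcJ K θ h := by
    rw [qc_memJ h hD]
    refine ⟨0, -(p * q), ?_⟩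
    rw [← hpq]
    push_cast
    change (0:K) ^ 2 - _ = 4 * (-((p : K) * (q : K)))
    field_simp
    ring
  rw [h0, FractionalIdeal.mem_zero_iff] at this
  exact hq0 (by simpa using this)

theorem qc_J_smul {K Ω : Type*} [Field K] [NumberField K] [Field Ω] [Algebra K Ω]
    [Normal K Ω] {θ : Ω} (h : QAdm K θ) {t : K} (ht : t ≠ 0) :
    FractionalIdeal.spanSingleton (𝓞 K)⁰ t * qcJ K _ (h.smul ht) = qcJ K θ h := by
  ext y
  rw [FractionalIdeal.mem_singleton_mul]
  have key : ∀ y' : K, y' ∈ qcJ K _ (h.smul ht) ↔ t * y' ∈ qcJ K θ h := by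
    intro y'
    rw [qc_memJ', qc_memJ']
    simp only [map_mul]
    refine exists_congr fun x => ?_
    rw [show algebraMap K Ω y' * (algebraMap K Ω t * θ) = algebraMap K Ω t * algebraMap K Ω y' * θ by ring]
  constructor
  · rintro ⟨y', hy', rfl⟩
    exact (key y').1 hy'
  · intro hy
    refine ⟨t⁻¹ * y, (key _).2 ?_, ?_⟩
    · rwa [mul_inv_cancel_left₀ ht]
    · rw [mul_inv_cancel_left₀ ht]

theorem qc_discr_J {K Ω : Type*} [Field K] [NumberField K] [Field Ω] [Algebra K Ω]
    [Normal K Ω] {θ : Ω} (h : QAdm K θ) {D : K} (hD : θ ^ 2 = algebraMap K Ω D)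
    [NumberField K⟮θ⟯] :
    ((|discr K⟮θ⟯| : ℤ) : ℚ) = (discr K : ℚ) ^ 2 * |Algebra.norm ℚ D| *
      (FractionalIdeal.absNorm (qcJ K θ h)) ^ 2 := by
  have := qc_discr K K⟮θ⟯ h.finrank D ⟨θ, IntermediateField.mem_adjoin_simple_self K θ⟩
    (Subtype.ext hD) (fun x hx => h.nm x (congrArg (algebraMap K⟮θ⟯ Ω) hx))
    (Units.mk0 _ (qc_J_ne h)) (by
      intro y
      rw [Units.val_mk0, qc_memJ']
      refine exists_congr fun x => ?_
      rw [← isIntegral_algebraMap_iff (FaithfulSMul.algebraMap_injective K⟮θ⟯ Ω)]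
      simp only [map_div₀, map_add, map_mul, map_ofNat, ← IsScalarTower.algebraMap_apply]
      rfl)
  rw [this, Units.val_mk0]

end S4

open NumberField Filter
open scoped nonZeroDivisors Real

section S5
open Module IntermediateField

theorem qc_rep (K : Type*) [Field K] [NumberField K] (c : ClassGroup (𝓞 K)) :
    ∃ 𝔞 : (Ideal (𝓞 K))⁰, ClassGroup.mk0 𝔞 = c ∧
      ∃ m : ℤ, Odd m ∧ (m : 𝓞 K) ∈ (𝔞 : Ideal (𝓞 K)) := by
  obtain ⟨I, hI⟩ := ClassGroup.mk0_surjective c⁻¹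
  have hI0 : (I : Ideal (𝓞 K)) ≠ 0 := nonZeroDivisors.ne_zero I.2
  have h20 : (Ideal.span {(2 : 𝓞 K)}) ≠ 0 := by
    rw [Ne, Ideal.zero_eq_bot, Ideal.span_singleton_eq_bot]; exact two_ne_zero
  obtain ⟨x, hx⟩ := IsDedekindDomain.exists_sup_span_eq
    (I := (I : Ideal (𝓞 K)) * Ideal.span {2}) (J := I) Ideal.mul_le_left
    (mul_ne_zero hI0 h20)
  have hxI : Ideal.span {x} ≤ (I : Ideal (𝓞 K)) := by
    conv_rhs => rw [← hx]
    exact le_sup_right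
  obtain ⟨𝔞, h𝔞⟩ := Ideal.dvd_iff_le.2 hxI
  have hcop : Ideal.span {(2 : 𝓞 K)} + 𝔞 = 1 := by
    rw [h𝔞, ← Ideal.add_eq_sup, ← mul_add] at hx
    exact mul_left_cancel₀ hI0 (by rw [hx, mul_one])
  have h𝔞0 : 𝔞 ≠ 0 := by
    rintro rfl
    rw [add_zero, Ideal.one_eq_top, Ideal.span_singleton_eq_top] at hcop
    have h4 := hcop.map (Algebra.norm ℤ)
    rw [show (2 : 𝓞 K) = algebraMap ℤ (𝓞 K) 2 by simp, Algebra.norm_algebraMap,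
      isUnit_pow_iff Module.finrank_pos.ne', Int.isUnit_iff] at h4
    omega
  have hA : 𝔞 ∈ (Ideal (𝓞 K))⁰ := mem_nonZeroDivisors_of_ne_zero h𝔞0
  obtain ⟨A, rfl⟩ : ∃ A : (Ideal (𝓞 K))⁰, (A : Ideal (𝓞 K)) = 𝔞 := ⟨⟨𝔞, hA⟩, rfl⟩
  refine ⟨A, ?_, ?_⟩
  · have hp : Submodule.IsPrincipal ((I * A : (Ideal (𝓞 K))⁰) : Ideal (𝓞 K)) := by
      rw [Submonoid.coe_mul, ← h𝔞]
      exact ⟨x, rfl⟩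
    have h1 : ClassGroup.mk0 (I * A) = 1 := (ClassGroup.mk0_eq_one_iff (I * A).2).2 hp
    rw [map_mul, hI] at h1
    exact (inv_mul_eq_one.1 h1).symm
  · have hN0 : Ideal.absNorm (A : Ideal (𝓞 K)) ≠ 0 := by rw [Ne, Ideal.absNorm_eq_zero_iff]; exact h𝔞0
    obtain ⟨k, m, hm, hkm⟩ := Nat.exists_eq_two_pow_mul_odd hN0
    have hmem := Ideal.absNorm_mem (A : Ideal (𝓞 K))
    have hc : IsCoprime (Ideal.span {(2 : 𝓞 K)} ^ k) (A : Ideal (𝓞 K)) :=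
      IsCoprime.pow_left (Ideal.isCoprime_iff_add.2 hcop)
    rw [Ideal.isCoprime_iff_exists] at hc
    obtain ⟨i, hi, j, hj, hij⟩ := hc
    rw [Ideal.span_singleton_pow, Ideal.mem_span_singleton] at hi
    obtain ⟨b, rfl⟩ := hi
    refine ⟨m, by exact_mod_cast hm, ?_⟩
    have : (((m : ℤ)) : 𝓞 K) = ((Ideal.absNorm (A : Ideal (𝓞 K)) : ℕ) : 𝓞 K) * b + j * m := by
      rw [hkm]; push_cast
      linear_combination -(m : 𝓞 K) * hij
    rw [this]
    exact Ideal.add_mem _ (Ideal.mul_mem_right _ _ hmem) (Ideal.mul_mem_right _ _ hj)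

theorem qc_good {K Ω : Type*} [Field K] [NumberField K] [Field Ω] [Algebra K Ω]
    [Normal K Ω] {θ : Ω} (h : QAdm K θ) (𝔞 : Ideal (𝓞 K)) (h0 : 𝔞 ≠ ⊥) (m : ℤ) (hm : Odd m)
    (hma : (m : 𝓞 K) ∈ 𝔞) :
    ((𝔞 : FractionalIdeal (𝓞 K)⁰ K))⁻¹ ≤ qcJ K θ h ↔
      ∃ D : 𝓞 K, θ ^ 2 = algebraMap K Ω D ∧ D ∈ 𝔞 ^ 2 ∧ ∃ x, (4 : 𝓞 K) ∣ D - x ^ 2 := by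
  set A : FractionalIdeal (𝓞 K)⁰ K := (𝔞 : FractionalIdeal (𝓞 K)⁰ K) with hA
  have hA0 : A ≠ 0 := FractionalIdeal.coeIdeal_ne_zero.2 h0
  have hAA : A⁻¹ * A⁻¹ * ((𝔞 ^ 2 : Ideal (𝓞 K)) : FractionalIdeal (𝓞 K)⁰ K) = 1 := by
    rw [FractionalIdeal.coeIdeal_pow, ← hA]
    field_simp
  constructor
  · intro hle
    obtain ⟨D₀, hD₀⟩ := h.sq
    have h1 : (1 : K) ∈ A⁻¹ := by
      rw [FractionalIdeal.mem_inv_iff hA0]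
      intro y hy
      rw [one_mul]
      exact FractionalIdeal.coeIdeal_le_one hy
    obtain ⟨x, t, hxt⟩ := (qc_memJ h hD₀ 1).1 (hle h1)
    have hD : D₀ = ((x ^ 2 - 4 * t : 𝓞 K) : K) := by
      change D₀ = (x : K) ^ 2 - 4 * (t : K)
      linear_combination -hxt
    refine ⟨x ^ 2 - 4 * t, by rw [hD₀, hD], ?_, x, ⟨-t, by ring⟩⟩
    set D := x ^ 2 - 4 * t
    have hsq : ∀ y ∈ A⁻¹, ∃ b : 𝓞 K, (b : K) = y ^ 2 * D := by
      intro y hy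
      obtain ⟨x', t', hxt'⟩ := (qc_memJ h hD₀ y).1 (hle hy)
      refine ⟨x' ^ 2 - 4 * t', ?_⟩
      change (x' : K) ^ 2 - 4 * (t' : K) = _
      rw [hD] at hxt'
      linear_combination hxt'
    have hle2 : FractionalIdeal.spanSingleton (𝓞 K)⁰ (D : K) * (A⁻¹ * A⁻¹) ≤ 1 := by
      rw [← mul_assoc, FractionalIdeal.mul_le]
      intro i hi j hj
      rw [FractionalIdeal.mem_singleton_mul] at hi
      obtain ⟨y, hy, rfl⟩ := hi
      obtain ⟨b, hb⟩ := hsq y hy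
      obtain ⟨b', hb'⟩ := hsq j hj
      obtain ⟨e, he⟩ := qc_int_of_sq (z := (D : K) * y * j) (a := b * b') (by
        change _ = (b : K) * (b' : K)
        rw [hb, hb']; ring)
      rw [FractionalIdeal.mem_one_iff]
      exact ⟨e, he⟩
    have hle3 : FractionalIdeal.spanSingleton (𝓞 K)⁰ (D : K) ≤
        ((𝔞 ^ 2 : Ideal (𝓞 K)) : FractionalIdeal (𝓞 K)⁰ K) := by
      have := mul_le_mul_left hle2 ((𝔞 ^ 2 : Ideal (𝓞 K)) : FractionalIdeal (𝓞 K)⁰ K)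
      rwa [mul_assoc, hAA, mul_one, one_mul] at this
    have := hle3 (FractionalIdeal.mem_spanSingleton_self _ _)
    rw [FractionalIdeal.mem_coeIdeal] at this
    obtain ⟨x', hx', hxe⟩ := this
    rwa [RingOfIntegers.coe_injective hxe] at hx'
  · rintro ⟨D, hD, hD2, x, s, hs⟩ y hy
    have hyy : ∃ b : 𝓞 K, (b : K) = y ^ 2 * D := by
      have : y * y * (D : K) ∈ A⁻¹ * A⁻¹ * ((𝔞 ^ 2 : Ideal (𝓞 K)) : FractionalIdeal (𝓞 K)⁰ K) :=
        FractionalIdeal.mul_mem_mul (FractionalIdeal.mul_mem_mul hy hy)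
          (FractionalIdeal.mem_coeIdeal_of_mem _ hD2)
      rw [hAA, FractionalIdeal.mem_one_iff] at this
      obtain ⟨b, hb⟩ := this
      exact ⟨b, hb.trans (by ring)⟩
    have hmy : ∃ e : 𝓞 K, (e : K) = m * y := by
      have hy' : y ∈ A⁻¹ := hy
      rw [FractionalIdeal.mem_inv_iff hA0] at hy'
      have := hy' ((m : 𝓞 K) : K) (FractionalIdeal.mem_coeIdeal_of_mem _ hma)
      rw [FractionalIdeal.mem_one_iff] at this
      obtain ⟨b, hb⟩ := this
      refine ⟨b, hb.trans ?_⟩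
      rw [mul_comm]; simp
    obtain ⟨b, hb⟩ := hyy
    obtain ⟨e, he⟩ := hmy
    obtain ⟨k, hk⟩ := hm
    change y ∈ qcJ K θ h
    rw [qc_memJ h hD]
    refine ⟨x * e, ((k : 𝓞 K) ^ 2 + k) * b - e ^ 2 * s, ?_⟩
    have hs' : (D : K) - (x : K) ^ 2 = 4 * (s : K) := by
      have := congrArg (algebraMap (𝓞 K) K) hs
      rw [map_sub, map_pow, map_mul, map_ofNat] at this
      exact this
    have hk' : (((k : 𝓞 K)) : K) = (k : K) := by simp
    change ((x : K) * (e : K)) ^ 2 - y ^ 2 * (D : K) =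
      4 * (((((k : 𝓞 K)) : K) ^ 2 + ((k : 𝓞 K) : K)) * (b : K) - (e : K) ^ 2 * (s : K))
    rw [hk', hb, he, hk]
    push_cast
    linear_combination -(2 * (k : K) + 1)^2 * y^2 * hs'

theorem qc_exists_ct {K Ω : Type*} [Field K] [NumberField K] [Field Ω] [Algebra K Ω] [Normal K Ω]
    (a : ClassGroup (𝓞 K) → (Ideal (𝓞 K))⁰) (ha : ∀ c, ClassGroup.mk0 (a c) = c)
    (L : IntermediateField K Ω) (hL : Module.finrank K L = 2) (𝔣 : Ideal (𝓞 K)) (hf : 𝔣 ≠ ⊥) :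
    ∃ c : ClassGroup (𝓞 K), ∃ θ : Ω, ∃ h : QAdm K θ, K⟮θ⟯ = L ∧
      (𝔣 : FractionalIdeal (𝓞 K)⁰ K) * qcJ K θ h =
        (((a c : Ideal (𝓞 K)) : FractionalIdeal (𝓞 K)⁰ K))⁻¹ := by
  obtain ⟨θ₀, h₀, hθ₀⟩ := qc_exists_theta L hL
  have hF : (𝔣 : FractionalIdeal (𝓞 K)⁰ K) * qcJ K θ₀ h₀ ≠ 0 :=
    mul_ne_zero (FractionalIdeal.coeIdeal_ne_zero.2 hf) (qc_J_ne h₀)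
  set U := Units.mk0 _ hF with hU
  set c := (ClassGroup.mk K U)⁻¹ with hc
  have h1 : ClassGroup.mk K (U * FractionalIdeal.mk0 K (a c)) = 1 := by
    rw [map_mul, ClassGroup.mk_mk0, ha, hc, mul_inv_cancel]
  rw [ClassGroup.mk_eq_one_iff, FractionalIdeal.isPrincipal_iff] at h1
  obtain ⟨t, ht⟩ := h1
  rw [Units.val_mul, FractionalIdeal.coe_mk0, hU, Units.val_mk0] at ht
  have ha0 : ((a c : Ideal (𝓞 K)) : FractionalIdeal (𝓞 K)⁰ K) ≠ 0 :=
    FractionalIdeal.coeIdeal_ne_zero.2 (nonZeroDivisors.ne_zero (a c).2)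
  have ht0 : t ≠ 0 := by
    rintro rfl
    rw [FractionalIdeal.spanSingleton_zero] at ht
    exact mul_ne_zero hF ha0 ht
  have hts : FractionalIdeal.spanSingleton (𝓞 K)⁰ t ≠ 0 := by
    rwa [Ne, FractionalIdeal.spanSingleton_eq_zero_iff]
  refine ⟨c, _, h₀.smul ht0, by rw [qc_adjoin_smul ht0, hθ₀], ?_⟩
  rw [← qc_J_smul h₀ ht0] at ht
  apply mul_left_cancel₀ hts
  apply mul_right_cancel₀ ha0
  rw [mul_assoc _ (_⁻¹) _, inv_mul_cancel₀ ha0, mul_one]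
  refine Eq.trans ?_ ht
  ring

theorem qc_unique {K Ω : Type*} [Field K] [NumberField K] [Field Ω] [Algebra K Ω] [Normal K Ω]
    (a : ClassGroup (𝓞 K) → (Ideal (𝓞 K))⁰) (ha : ∀ c, ClassGroup.mk0 (a c) = c)
    (𝔣 : Ideal (𝓞 K)) {θ θ' : Ω} (h : QAdm K θ) (h' : QAdm K θ') (he : K⟮θ⟯ = K⟮θ'⟯)
    {c c' : ClassGroup (𝓞 K)}
    (hc : (𝔣 : FractionalIdeal (𝓞 K)⁰ K) * qcJ K θ h =
        (((a c : Ideal (𝓞 K)) : FractionalIdeal (𝓞 K)⁰ K))⁻¹)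
    (hc' : (𝔣 : FractionalIdeal (𝓞 K)⁰ K) * qcJ K θ' h' =
        (((a c' : Ideal (𝓞 K)) : FractionalIdeal (𝓞 K)⁰ K))⁻¹) :
    c = c' ∧ ∃ u : (𝓞 K)ˣ, θ' = algebraMap K Ω ((u : 𝓞 K) : K) * θ := by
  obtain ⟨s, hs, rfl⟩ := qc_theta_ratio h h' he
  have ha0 : ∀ c, ((a c : Ideal (𝓞 K)) : FractionalIdeal (𝓞 K)⁰ K) ≠ 0 := fun c =>
    FractionalIdeal.coeIdeal_ne_zero.2 (nonZeroDivisors.ne_zero (a c).2)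
  have hJ := qc_J_smul h hs
  have key : ((a c' : Ideal (𝓞 K)) : FractionalIdeal (𝓞 K)⁰ K) =
      FractionalIdeal.spanSingleton (𝓞 K)⁰ s * ((a c : Ideal (𝓞 K)) : FractionalIdeal (𝓞 K)⁰ K) := by
    rw [← hJ, mul_left_comm, hc'] at hc
    have h3 := congrArg (fun z => ((a c' : Ideal (𝓞 K)) : FractionalIdeal (𝓞 K)⁰ K) * (z *
      ((a c : Ideal (𝓞 K)) : FractionalIdeal (𝓞 K)⁰ K))) hc
    simp only [inv_mul_cancel₀ (ha0 c), mul_one] at h3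
    rw [← h3]
    have := ha0 c'
    field_simp
  have hcc : c = c' := by
    rw [← ha c, ← ha c', ← ClassGroup.mk_mk0 K, ← ClassGroup.mk_mk0 K, eq_comm, ← div_eq_one,
      ← map_div, ClassGroup.mk_eq_one_iff, FractionalIdeal.isPrincipal_iff]
    refine ⟨s, ?_⟩
    rw [Units.val_div_eq_div_val, FractionalIdeal.coe_mk0, FractionalIdeal.coe_mk0, key,
      mul_div_assoc, div_self (ha0 c), mul_one]
  subst hcc
  refine ⟨rfl, ?_⟩
  have h1 : FractionalIdeal.spanSingleton (𝓞 K)⁰ s = 1 := by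
    apply mul_right_cancel₀ (ha0 c)
    rw [← key, one_mul]
  have hs1 : s ∈ (1 : FractionalIdeal (𝓞 K)⁰ K) := by
    rw [← h1]; exact FractionalIdeal.mem_spanSingleton_self _ _
  have h2 : (1 : K) ∈ FractionalIdeal.spanSingleton (𝓞 K)⁰ s := by
    rw [h1, FractionalIdeal.mem_one_iff]; exact ⟨1, map_one _⟩
  rw [FractionalIdeal.mem_one_iff] at hs1
  rw [FractionalIdeal.mem_spanSingleton] at h2
  obtain ⟨u, hu⟩ := hs1
  obtain ⟨v, hv⟩ := h2
  have huv : u * v = 1 := by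
    apply RingOfIntegers.coe_injective
    rw [map_mul, map_one, hu, mul_comm, ← hv, Algebra.smul_def]
  refine ⟨⟨u, v, huv, by rw [mul_comm, huv]⟩, ?_⟩
  rw [← hu]

theorem qc_J_unit {K Ω : Type*} [Field K] [NumberField K] [Field Ω] [Algebra K Ω] [Normal K Ω]
    {θ : Ω} (h : QAdm K θ) (u : (𝓞 K)ˣ) (h' : QAdm K (algebraMap K Ω ((u : 𝓞 K) : K) * θ)) :
    qcJ K _ h' = qcJ K θ h := by
  have hu : ((u : 𝓞 K) : K) ≠ 0 := by simp
  rw [← qc_J_smul h hu]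
  have : FractionalIdeal.spanSingleton (𝓞 K)⁰ ((u : 𝓞 K) : K) = 1 := by
    apply le_antisymm
    · rw [FractionalIdeal.spanSingleton_le_iff_mem, FractionalIdeal.mem_one_iff]
      exact ⟨u, rfl⟩
    · rw [← FractionalIdeal.spanSingleton_one, FractionalIdeal.spanSingleton_le_iff_mem,
        FractionalIdeal.mem_spanSingleton]
      refine ⟨((u⁻¹ : (𝓞 K)ˣ) : 𝓞 K), ?_⟩
      rw [Algebra.smul_def]
      change algebraMap (𝓞 K) K _ * algebraMap (𝓞 K) K _ = 1
      rw [← map_mul, Units.inv_mul, map_one]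
  rw [this, one_mul]

theorem qc_discr_f {K Ω : Type*} [Field K] [NumberField K] [Field Ω] [Algebra K Ω]
    [Normal K Ω] {θ : Ω} (h : QAdm K θ) {D : K} (hD : θ ^ 2 = algebraMap K Ω D)
    [NumberField K⟮θ⟯] (𝔣 𝔞 : Ideal (𝓞 K)) (h0 : 𝔞 ≠ ⊥)
    (hf : (𝔣 : FractionalIdeal (𝓞 K)⁰ K) * qcJ K θ h = (𝔞 : FractionalIdeal (𝓞 K)⁰ K)⁻¹) :
    ((|discr K⟮θ⟯| : ℤ) : ℝ) * (Ideal.absNorm 𝔣 : ℝ) ^ 2 * (Ideal.absNorm 𝔞 : ℝ) ^ 2 =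
      (discr K : ℝ) ^ 2 * ((|Algebra.norm ℚ D| : ℚ) : ℝ) := by
  have h1 := qc_discr_J h hD
  have h2 := congrArg (FractionalIdeal.absNorm (R := 𝓞 K) (K := K)) hf
  rw [map_mul, map_inv₀, FractionalIdeal.coeIdeal_absNorm, FractionalIdeal.coeIdeal_absNorm] at h2
  have hN0 : (Ideal.absNorm 𝔞 : ℚ) ≠ 0 := by
    rw [Nat.cast_ne_zero, Ne, Ideal.absNorm_eq_zero_iff]; exact h0
  have h3 : (Ideal.absNorm 𝔣 : ℚ) * FractionalIdeal.absNorm (qcJ K θ h) * Ideal.absNorm 𝔞 = 1 := by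
    rw [h2, inv_mul_cancel₀ hN0]
  have : ((|discr K⟮θ⟯| : ℤ) : ℚ) * (Ideal.absNorm 𝔣 : ℚ) ^ 2 * (Ideal.absNorm 𝔞 : ℚ) ^ 2 =
      (discr K : ℚ) ^ 2 * |Algebra.norm ℚ D| := by
    rw [h1]
    have : (discr K : ℚ) ^ 2 * |Algebra.norm ℚ D| *
      (FractionalIdeal.absNorm (qcJ K θ h)) ^ 2 * (Ideal.absNorm 𝔣 : ℚ) ^ 2 *
      (Ideal.absNorm 𝔞 : ℚ) ^ 2 = (discr K : ℚ) ^ 2 * |Algebra.norm ℚ D| *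
      ((Ideal.absNorm 𝔣 : ℚ) * FractionalIdeal.absNorm (qcJ K θ h) * Ideal.absNorm 𝔞) ^ 2 := by ring
    rw [this, h3]; ring
  exact_mod_cast this

end S5


open NumberField Filter
open scoped nonZeroDivisors Real

section S6
open Module IntermediateField Topology

abbrev QF (K : Type*) [Field K] :=
  {L : IntermediateField K (AlgebraicClosure K) // Module.finrank K L = 2}

abbrev QNZ (K : Type*) [Field K] := {I : Ideal (𝓞 K) // I ≠ ⊥}

theorem QF.nf {K : Type*} [Field K] [NumberField K] (L : QF K) : NumberField L.1 := by
  have hfin : FiniteDimensional K L.1 := Module.finite_of_finrank_eq_succ L.2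
  exact NumberField.of_module_finite K L.1

noncomputable def qcDelta {K : Type*} [Field K] [NumberField K] (L : QF K) : ℝ :=
  ((|@discr L.1 _ L.nf| : ℤ) : ℝ)

theorem qc_delta_le {K : Type*} [Field K] [NumberField K] (L : QF K) {θ : AlgebraicClosure K}
    (h : QAdm K θ) {D : K} (hD : θ ^ 2 = algebraMap K (AlgebraicClosure K) D) (hL : K⟮θ⟯ = L.1)
    (𝔣 𝔞 : Ideal (𝓞 K)) (h0 : 𝔞 ≠ ⊥)
    (hf : (𝔣 : FractionalIdeal (𝓞 K)⁰ K) * qcJ K θ h = (𝔞 : FractionalIdeal (𝓞 K)⁰ K)⁻¹) (X : ℝ) :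
    qcDelta L * (Ideal.absNorm 𝔣 : ℝ) ^ 2 ≤ X ↔ ((|Algebra.norm ℚ D| : ℚ) : ℝ) ≤
      X * ((Ideal.absNorm 𝔞 : ℝ) ^ 2 / (discr K : ℝ) ^ 2) := by
  obtain ⟨L, hL2⟩ := L
  subst hL
  have : NumberField K⟮θ⟯ := QF.nf ⟨_, hL2⟩
  have key := qc_discr_f h hD 𝔣 𝔞 h0 hf
  have hN0 : (0 : ℝ) < (Ideal.absNorm 𝔞 : ℝ) := by
    rw [Nat.cast_pos, Nat.pos_iff_ne_zero, Ne, Ideal.absNorm_eq_zero_iff]; exact h0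
  have hd0 : (0 : ℝ) < (discr K : ℝ) ^ 2 := by
    have : (discr K : ℝ) ≠ 0 := by exact_mod_cast discr_ne_zero K
    positivity
  change ((|discr K⟮θ⟯| : ℤ) : ℝ) * _ ≤ X ↔ _
  rw [← mul_div_assoc, le_div_iff₀ hd0, mul_comm _ ((discr K : ℝ) ^ 2), ← key]
  rw [mul_le_mul_iff_left₀ (by positivity)]

theorem qc_sqrt {K : Type*} [Field K] [NumberField K] (P : 𝓞 K → Prop)
    (hP : ∀ D, P D → ¬ IsSquare (D : K)) :
    Nonempty ({D : 𝓞 K // P D} × ℤˣ ≃ {θ : AlgebraicClosure K //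
      ∃ D : 𝓞 K, θ ^ 2 = algebraMap K (AlgebraicClosure K) D ∧ P D}) := by
  have hex : ∀ D : 𝓞 K, ∃ θ : AlgebraicClosure K, θ ^ 2 = algebraMap K (AlgebraicClosure K) D :=
    fun D => IsAlgClosed.exists_pow_nat_eq _ (by norm_num)
  choose r hr using hex
  have hinj := (algebraMap K (AlgebraicClosure K)).injective
  let f : {D : 𝓞 K // P D} × ℤˣ → {θ : AlgebraicClosure K //
      ∃ D : 𝓞 K, θ ^ 2 = algebraMap K (AlgebraicClosure K) D ∧ P D} := fun p =>
    ⟨((p.2 : ℤ) : AlgebraicClosure K) * r p.1.1, p.1.1, by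
      rw [mul_pow, hr]
      rcases Int.units_eq_one_or p.2 with h | h <;> simp [h], p.1.2⟩
  refine ⟨Equiv.ofBijective f ⟨?_, ?_⟩⟩
  · rintro ⟨⟨D, hD⟩, u⟩ ⟨⟨D', hD'⟩, u'⟩ h
    have h1 : ((u : ℤ) : AlgebraicClosure K) * r D = ((u' : ℤ) : AlgebraicClosure K) * r D' :=
      congrArg Subtype.val h
    have h2 : D = D' := by
      have h3 := congrArg (fun z => z ^ 2) h1
      simp only [mul_pow, hr] at h3
      have hu : ∀ u : ℤˣ, ((u : ℤ) : AlgebraicClosure K) ^ 2 = 1 := by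
        intro u
        rcases Int.units_eq_one_or u with h | h <;> simp [h]
      rw [hu, hu, one_mul, one_mul] at h3
      exact RingOfIntegers.coe_injective (hinj h3)
    subst h2
    have hr0 : r D ≠ 0 := by
      intro h0
      have := hr D
      rw [h0] at this
      have h5 : (D : K) = 0 := by
        apply hinj; rw [← this]; simp
      exact hP D hD ⟨0, by rw [h5]; simp⟩
    have h4 := mul_right_cancel₀ hr0 h1
    have h5 : (u : ℤ) = u' := by exact_mod_cast h4
    rw [Units.ext h5]
  · rintro ⟨θ, D, hD, hPD⟩
    rw [← hr D] at hD
    rcases sq_eq_sq_iff_eq_or_eq_neg.1 hD with h | h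
    · exact ⟨(⟨D, hPD⟩, 1), Subtype.ext (by simp [f, h])⟩
    · exact ⟨(⟨D, hPD⟩, -1), Subtype.ext (by simp [f, h])⟩

/-- condition on D -/
def qcP {K : Type*} [Field K] [NumberField K] (𝔞 : Ideal (𝓞 K)) (s : ℝ) (D : 𝓞 K) : Prop :=
  (D ∈ 𝔞 ^ 2 ∧ ∃ x, (4 : 𝓞 K) ∣ D - x ^ 2) ∧ ¬ IsSquare (D : K) ∧
    ((|Algebra.norm ℚ (D : K)| : ℚ) : ℝ) ≤ s

theorem qc_adm_of {K : Type*} [Field K] [NumberField K] {θ : AlgebraicClosure K} {D : K}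
    (hD : θ ^ 2 = algebraMap K (AlgebraicClosure K) D) (hs : ¬ IsSquare D) : QAdm K θ := by
  refine ⟨⟨D, hD⟩, fun x hx => hs ⟨x, ?_⟩⟩
  apply (algebraMap K (AlgebraicClosure K)).injective
  rw [← hD, ← hx, map_mul, sq]

theorem qc_nsq {K : Type*} [Field K] [NumberField K] {θ : AlgebraicClosure K} {D : K}
    (hD : θ ^ 2 = algebraMap K (AlgebraicClosure K) D) (h : QAdm K θ) : ¬ IsSquare D := by
  rintro ⟨x, rfl⟩
  rw [← sq, map_pow] at hD
  rcases sq_eq_sq_iff_eq_or_eq_neg.1 hD with h1 | h1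
  · exact h.nm x h1.symm
  · exact h.nm (-x) (by rw [h1, map_neg])

abbrev QG (K : Type*) [Field K] [NumberField K] (X : ℝ) :=
  {p : QF K × QNZ K // qcDelta p.1 * (Ideal.absNorm p.2.1 : ℝ) ^ 2 ≤ X}

theorem qc_bij (K : Type*) [Field K] [NumberField K]
    (a : ClassGroup (𝓞 K) → (Ideal (𝓞 K))⁰) (ha : ∀ c, ClassGroup.mk0 (a c) = c)
    (hm : ∀ c, ∃ m : ℤ, Odd m ∧ (m : 𝓞 K) ∈ (a c : Ideal (𝓞 K))) (X : ℝ) :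
    Nonempty (QG K X × (𝓞 K)ˣ ≃ Σ c : ClassGroup (𝓞 K), {θ : AlgebraicClosure K //
      ∃ D : 𝓞 K, θ ^ 2 = algebraMap K (AlgebraicClosure K) D ∧
        qcP (a c : Ideal (𝓞 K))
          (X * ((Ideal.absNorm (a c : Ideal (𝓞 K)) : ℝ) ^ 2 / (discr K : ℝ) ^ 2)) D}) := by
  have ha0 : ∀ c, (a c : Ideal (𝓞 K)) ≠ ⊥ := fun c => nonZeroDivisors.ne_zero (a c).2
  have ha1 : ∀ c, ((a c : Ideal (𝓞 K)) : FractionalIdeal (𝓞 K)⁰ K) ≠ 0 := fun c =>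
    FractionalIdeal.coeIdeal_ne_zero.2 (ha0 c)
  choose c θ h hL hf using fun p : QF K × QNZ K =>
    qc_exists_ct a ha p.1.1 p.1.2 p.2.1 p.2.2
  have hu0 : ∀ u : (𝓞 K)ˣ, ((u : 𝓞 K) : K) ≠ 0 := fun u => by simp
  have hmem : ∀ (p : QG K X) (u : (𝓞 K)ˣ), ∃ D : 𝓞 K,
      (algebraMap K (AlgebraicClosure K) ((u : 𝓞 K) : K) * θ p.1) ^ 2 =
        algebraMap K (AlgebraicClosure K) D ∧ qcP (a (c p.1) : Ideal (𝓞 K))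
          (X * ((Ideal.absNorm (a (c p.1) : Ideal (𝓞 K)) : ℝ) ^ 2 / (discr K : ℝ) ^ 2)) D := by
    rintro ⟨p, hp⟩ u
    have hA := (h p).smul (hu0 u)
    have hf' : (p.2.1 : FractionalIdeal (𝓞 K)⁰ K) * qcJ K _ hA =
        ((a (c p) : Ideal (𝓞 K)) : FractionalIdeal (𝓞 K)⁰ K)⁻¹ := by
      rw [qc_J_unit (h p) u hA, hf p]
    obtain ⟨m, hm1, hm2⟩ := hm (c p)
    have hle : ((a (c p) : Ideal (𝓞 K)) : FractionalIdeal (𝓞 K)⁰ K)⁻¹ ≤ qcJ K _ hA := by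
      rw [← hf']
      calc _ ≤ 1 * qcJ K _ hA := mul_le_mul_left FractionalIdeal.coeIdeal_le_one _
        _ = _ := one_mul _
    obtain ⟨D, hD, hD2, hx⟩ := (qc_good hA _ (ha0 _) m hm1 hm2).1 hle
    refine ⟨D, hD, ⟨hD2, hx⟩, qc_nsq hD hA, ?_⟩
    exact (qc_delta_le p.1 hA hD (by rw [qc_adjoin_smul (hu0 u), hL]) p.2.1 _ (ha0 _) hf' X).1 hp
  let f : QG K X × (𝓞 K)ˣ → Σ c : ClassGroup (𝓞 K), {θ : AlgebraicClosure K //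
      ∃ D : 𝓞 K, θ ^ 2 = algebraMap K (AlgebraicClosure K) D ∧
        qcP (a c : Ideal (𝓞 K))
          (X * ((Ideal.absNorm (a c : Ideal (𝓞 K)) : ℝ) ^ 2 / (discr K : ℝ) ^ 2)) D} :=
    fun q => ⟨c q.1.1, ⟨algebraMap K (AlgebraicClosure K) ((q.2 : 𝓞 K) : K) * θ q.1.1,
      hmem q.1 q.2⟩⟩
  refine ⟨Equiv.ofBijective f ⟨?_, ?_⟩⟩
  · rintro ⟨⟨p, hp⟩, u⟩ ⟨⟨p', hp'⟩, u'⟩ heq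
    have h1 : c p = c p' := congrArg Sigma.fst heq
    have h2 : algebraMap K (AlgebraicClosure K) ((u : 𝓞 K) : K) * θ p =
        algebraMap K (AlgebraicClosure K) ((u' : 𝓞 K) : K) * θ p' :=
      congrArg (fun z => z.2.1) heq
    have hA := (h p).smul (hu0 u)
    have hA' := (h p').smul (hu0 u')
    have hJ : qcJ K _ hA = qcJ K _ hA' := by
      congr 1
    have hLL : p.1 = p'.1 := by
      apply Subtype.ext
      rw [← hL p, ← hL p', ← qc_adjoin_smul (hu0 u), h2, qc_adjoin_smul (hu0 u')]
    have hFF : p.2 = p'.2 := by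
      apply Subtype.ext
      apply FractionalIdeal.coeIdeal_injective (R := 𝓞 K) (K := K)
      apply mul_right_cancel₀ (qc_J_ne hA)
      rw [qc_J_unit (h p) u hA, hf p, ← qc_J_unit (h p) u hA, hJ, qc_J_unit (h p') u' hA',
        hf p', h1]
    have hpp : p = p' := Prod.ext hLL hFF
    subst hpp
    have h3 := mul_right_cancel₀ (h p).ne_zero h2
    have h4 : u = u' := Units.ext (RingOfIntegers.coe_injective
      ((algebraMap K (AlgebraicClosure K)).injective h3))
    rw [h4]
  · rintro ⟨c₀, θ₀, D, hD, hP⟩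
    have hA := qc_adm_of hD hP.2.1
    obtain ⟨m, hm1, hm2⟩ := hm c₀
    have hle := (qc_good hA _ (ha0 c₀) m hm1 hm2).2 ⟨D, hD, hP.1⟩
    have hle1 : ((a c₀ : Ideal (𝓞 K)) : FractionalIdeal (𝓞 K)⁰ K)⁻¹ * (qcJ K _ hA)⁻¹ ≤ 1 := by
      calc _ ≤ qcJ K _ hA * (qcJ K _ hA)⁻¹ := mul_le_mul_left hle _
        _ = 1 := mul_inv_cancel₀ (qc_J_ne hA)
    obtain ⟨𝔣, h𝔣⟩ := FractionalIdeal.le_one_iff_exists_coeIdeal.1 hle1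
    have hf0 : 𝔣 ≠ ⊥ := by
      rw [← FractionalIdeal.coeIdeal_ne_zero (K := K), h𝔣]
      exact mul_ne_zero (inv_ne_zero (ha1 _)) (inv_ne_zero (qc_J_ne hA))
    have hfJ : (𝔣 : FractionalIdeal (𝓞 K)⁰ K) * qcJ K _ hA =
        ((a c₀ : Ideal (𝓞 K)) : FractionalIdeal (𝓞 K)⁰ K)⁻¹ := by
      rw [h𝔣, mul_assoc, inv_mul_cancel₀ (qc_J_ne hA), mul_one]
    let p : QF K × QNZ K := (⟨K⟮θ₀⟯, hA.finrank⟩, ⟨𝔣, hf0⟩)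
    have hp : qcDelta p.1 * (Ideal.absNorm p.2.1 : ℝ) ^ 2 ≤ X :=
      (qc_delta_le p.1 hA hD rfl 𝔣 _ (ha0 c₀) hfJ X).2 hP.2.2
    obtain ⟨hcc, u, hu⟩ := qc_unique a ha 𝔣 (h p) hA (hL p) (hf p) hfJ
    refine ⟨(⟨p, hp⟩, u), ?_⟩
    subst hcc
    simp only [f]
    congr 1
    exact Subtype.ext hu.symm

theorem qc_units (K : Type*) [Field K] [NumberField K] (hdeg : Module.finrank ℚ K = 2)
    [IsTotallyComplex K] :
    Finite (𝓞 K)ˣ ∧ Nat.card (𝓞 K)ˣ = rootsOfUnityCount K := by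
  have htop : ∀ u : (𝓞 K)ˣ, u ∈ Units.torsion K := by
    intro u
    rw [Units.mem_torsion]
    intro w
    have h1 := qc_norm_eq K hdeg w ((u : 𝓞 K) : K)
    have h2 := isUnit_iff_norm.1 u.isUnit
    rw [RingOfIntegers.coe_norm] at h2
    have h2' : |(Algebra.norm ℚ) ((u : 𝓞 K) : K)| = 1 := h2
    rw [h2'] at h1
    have h3 : (w ((u : 𝓞 K) : K)) ^ 2 = 1 := by rw [← h1]; simp
    have h4 := apply_nonneg w ((u : 𝓞 K) : K)
    change w ((u : 𝓞 K) : K) = 1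
    nlinarith
  have hfin : Finite (𝓞 K)ˣ :=
    Finite.of_injective (fun u => (⟨u, htop u⟩ : Units.torsion K)) fun u v huv => by
      simpa using huv
  refine ⟨hfin, ?_⟩
  apply Nat.card_congr
  refine Equiv.ofBijective (fun u => ⟨((u : 𝓞 K) : K), ?_⟩) ⟨?_, ?_⟩
  · have := htop u
    rw [Units.torsion, CommGroup.mem_torsion, isOfFinOrder_iff_pow_eq_one] at this
    obtain ⟨n, hn, hu⟩ := this
    refine ⟨n, hn, ?_⟩
    have := congrArg (fun v : (𝓞 K)ˣ => algebraMap (𝓞 K) K (v : 𝓞 K)) hu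
    simp only [Units.val_pow_eq_pow_val, map_pow, Units.val_one, map_one] at this
    exact this
  · intro u v huv
    have h1 : ((u : 𝓞 K) : K) = ((v : 𝓞 K) : K) := by
      simpa only [Subtype.mk.injEq] using huv
    exact Units.ext (RingOfIntegers.coe_injective h1)
  · rintro ⟨x, n, hn, hx⟩
    have hxi : IsIntegral ℤ x := IsIntegral.of_pow hn (by rw [hx]; exact isIntegral_one)
    let y : 𝓞 K := ⟨x, hxi⟩
    have hy : y ^ n = 1 := by
      apply RingOfIntegers.coe_injective
      rw [map_pow, map_one]; exact hx
    refine ⟨Units.ofPowEqOne y n hy hn.ne', ?_⟩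
    apply Subtype.ext
    rfl

theorem qc_g (K : Type*) [Field K] [NumberField K] (hdeg : Module.finrank ℚ K = 2)
    [IsTotallyComplex K] :
    (∀ X, Finite (QG K X)) ∧ 0 < rootsOfUnityCount K ∧
    Tendsto (fun X : ℝ => (Nat.card (QG K X) : ℝ) / X) atTop
      (𝓝 ((classNumber K : ℝ) * π / (rootsOfUnityCount K * ((discr K : ℝ) ^ 2 * √|discr K|)))) := by
  choose a ha hm using qc_rep K
  have ha0 : ∀ c, (a c : Ideal (𝓞 K)) ≠ ⊥ := fun c => nonZeroDivisors.ne_zero (a c).2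
  obtain ⟨hUfin, hUcard⟩ := qc_units K hdeg
  have hPfin : ∀ (𝔞 : Ideal (𝓞 K)) (s : ℝ), Finite {D : 𝓞 K // qcP 𝔞 s D} := by
    intro 𝔞 s
    have := qc_finite_norm_le K hdeg s
    exact Finite.of_injective (β := {x : 𝓞 K // ((|Algebra.norm ℚ (x:K)|:ℚ):ℝ) ≤ s})
      (fun D => ⟨D.1, D.2.2.2⟩) fun D D' h => Subtype.ext (congrArg (fun z => z.1) h)
  have hsq : ∀ (𝔞 : Ideal (𝓞 K)) (s : ℝ), Finite {θ : AlgebraicClosure K //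
      ∃ D : 𝓞 K, θ ^ 2 = algebraMap K (AlgebraicClosure K) D ∧ qcP 𝔞 s D} ∧
      Nat.card {θ : AlgebraicClosure K //
        ∃ D : 𝓞 K, θ ^ 2 = algebraMap K (AlgebraicClosure K) D ∧ qcP 𝔞 s D} =
      2 * Nat.card {D : 𝓞 K // qcP 𝔞 s D} := by
    intro 𝔞 s
    obtain ⟨e⟩ := qc_sqrt (qcP 𝔞 s) fun D hD => hD.2.1
    have := hPfin 𝔞 s
    refine ⟨Finite.of_equiv _ e, ?_⟩
    rw [← Nat.card_congr e, Nat.card_prod, mul_comm]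
    simp
  let r : ClassGroup (𝓞 K) → ℝ := fun c =>
    (Ideal.absNorm (a c : Ideal (𝓞 K)) : ℝ) ^ 2 / (discr K : ℝ) ^ 2
  have hcount : ∀ X, Nat.card (QG K X) * rootsOfUnityCount K =
      ∑ c, 2 * Nat.card {D : 𝓞 K // qcP (a c : Ideal (𝓞 K)) (X * r c) D} := by
    intro X
    obtain ⟨e⟩ := qc_bij K a ha hm X
    have := fun c => (hsq (a c) (X * r c)).1
    rw [← hUcard, ← Nat.card_prod, Nat.card_congr e, Nat.card_sigma]
    exact Finset.sum_congr rfl fun c _ => (hsq (a c) (X * r c)).2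
  have hw : 0 < rootsOfUnityCount K := by
    rw [← hUcard]; exact Nat.card_pos
  refine ⟨?_, hw, ?_⟩
  · intro X
    obtain ⟨e⟩ := qc_bij K a ha hm X
    have := fun c => (hsq (a c) (X * r c)).1
    exact Finite.of_injective (fun p : QG K X => e (p, 1)) fun p p' h => by
      simpa using e.injective h
  have hd0 : (discr K : ℝ) ≠ 0 := by exact_mod_cast discr_ne_zero K
  have hr0 : ∀ c, 0 < r c := by
    intro c
    have : (0 : ℝ) < (Ideal.absNorm (a c : Ideal (𝓞 K)) : ℝ) := by
      rw [Nat.cast_pos, Nat.pos_iff_ne_zero, Ne, Ideal.absNorm_eq_zero_iff]; exact ha0 c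
    positivity
  have hlim : ∀ c, Tendsto (fun X : ℝ =>
      (Nat.card {D : 𝓞 K // qcP (a c : Ideal (𝓞 K)) (X * r c) D} : ℝ) / X) atTop
      (𝓝 (π / (2 * ((discr K : ℝ) ^ 2 * √|discr K|)))) := by
    intro c
    obtain ⟨m, hm1, hm2⟩ := hm c
    have h1 := qc_count K hdeg (a c) m hm1 hm2
    have h2 : Tendsto (fun X : ℝ => X * r c) atTop atTop := tendsto_id.atTop_mul_const (hr0 c)
    have h3 := (h1.comp h2).mul_const (r c)
    have hN : (0 : ℝ) < (Ideal.absNorm (a c : Ideal (𝓞 K)) : ℝ) := by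
      rw [Nat.cast_pos, Nat.pos_iff_ne_zero, Ne, Ideal.absNorm_eq_zero_iff]; exact ha0 c
    have hsd : 0 < √|(discr K : ℝ)| := Real.sqrt_pos.2 (abs_pos.2 hd0)
    have e1 : π / (2 * ((discr K : ℝ) ^ 2 * √|discr K|)) =
        π/(2*(Ideal.absNorm (a c : Ideal (𝓞 K)) : ℝ)^2*√|discr K|) * r c := by
      simp only [r]
      push_cast
      field_simp
    rw [e1]
    refine h3.congr fun X => ?_
    have hr := (hr0 c).ne'
    simp only [Function.comp]
    rw [div_mul_eq_mul_div, mul_div_mul_right _ _ hr]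
    rfl
  have hsum := tendsto_finsetSum (Finset.univ : Finset (ClassGroup (𝓞 K)))
    fun c _ => (hlim c).const_mul 2
  have h5 := hsum.div_const (rootsOfUnityCount K : ℝ)
  have hw' : (rootsOfUnityCount K : ℝ) ≠ 0 := by exact_mod_cast hw.ne'
  refine (h5.congr fun X => ?_).trans (le_of_eq ?_)
  · have h6 : (Nat.card (QG K X) : ℝ) * rootsOfUnityCount K =
      ∑ c, 2 * (Nat.card {D : 𝓞 K // qcP (a c : Ideal (𝓞 K)) (X * r c) D} : ℝ) := by
      exact_mod_cast hcount X
    have h7 : (Nat.card (QG K X) : ℝ) = (∑ c, 2 * (Nat.card {D : 𝓞 K // qcP (a c : Ideal (𝓞 K)) (X * r c) D} : ℝ)) / rootsOfUnityCount K := by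
      rw [← h6]; field_simp
    rw [h7, div_right_comm, Finset.sum_div _ _ X]
    simp only [mul_div_assoc]
  · congr 1
    have hsd : 0 < √|(discr K : ℝ)| := Real.sqrt_pos.2 (abs_pos.2 hd0)
    rw [Finset.sum_const, Finset.card_univ, nsmul_eq_mul, classNumber]
    push_cast
    field_simp

end S6


open NumberField Filter
open scoped nonZeroDivisors Real

section S7
open Module IntermediateField Topology

theorem qc_summable (K : Type*) [Field K] [NumberField K] :
    Summable fun I : QNZ K => ((Ideal.absNorm I.1 : ℝ)) ^ (-2 : ℤ) := by
  have h1 : Tendsto (fun n : ℕ => (∑ k ∈ Finset.Icc 1 n,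
      (Nat.card {I : Ideal (𝓞 K) // Ideal.absNorm I = k} : ℝ)) / (n : ℝ)) atTop
      (𝓝 ((2 ^ InfinitePlace.nrRealPlaces K * (2 * π) ^ InfinitePlace.nrComplexPlaces K * Units.regulator K * classNumber K) /
            (Units.torsionOrder K * Real.sqrt |discr K|))) := by
    refine ((Ideal.tendsto_norm_le_div_atTop₀ K).comp tendsto_natCast_atTop_atTop).congr fun n ↦ ?_
    simp only [Function.comp_apply, Nat.cast_le, ← Nat.cast_sum]
    congr
    rw [← add_left_inj 1, ← Ideal.card_norm_le_eq_card_norm_le_add_one,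
      show Finset.Icc 1 n = Finset.Ioc 0 n from Finset.Icc_succ_left_eq_Ioc _ _,
      show 1 = Nat.card {I : Ideal (𝓞 K) // Ideal.absNorm I = 0} by simp [Ideal.absNorm_eq_zero_iff],
      Finset.sum_Ioc_add_eq_sum_Icc (n.zero_le),
      ← Finset.card_preimage_eq_sum_card_image_eq (fun k _ ↦ Ideal.finite_setOfPred_absNorm_eq k)]
    simp [Set.coe_eq_subtype]
  have h2 : LSeriesSummable (fun n => ((Nat.card {I : Ideal (𝓞 K) // Ideal.absNorm I = n} : ℝ) : ℂ)) 2 := by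
    refine LSeriesSummable_of_sum_norm_bigO_and_nonneg (r := 1)
      (f := fun n => (Nat.card {I : Ideal (𝓞 K) // Ideal.absNorm I = n} : ℝ)) ?_
      (fun n => Nat.cast_nonneg _) zero_le_one (by norm_num)
    exact Asymptotics.isBigO_atTop_natCast_rpow_of_tendsto_div_rpow (by simpa using h1)
  have h3 := h2.norm
  let φ : QNZ K → ℕ := fun I => Ideal.absNorm I.1
  have hfib : ∀ n, Finite {I : QNZ K // φ I = n} := by
    intro n
    have : Finite {I : Ideal (𝓞 K) // Ideal.absNorm I = n} := Ideal.finite_setOfPred_absNorm_eq n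
    exact Finite.of_injective (β := {I : Ideal (𝓞 K) // Ideal.absNorm I = n})
      (fun I => ⟨I.1.1, I.2⟩) fun I J h => Subtype.ext (Subtype.ext (congrArg (fun z => z.1) h))
  rw [← (Equiv.sigmaFiberEquiv φ).summable_iff]
  rw [summable_sigma_of_nonneg]
  · refine ⟨fun n => ?_, ?_⟩
    · have := hfib n
      exact Summable.of_finite
    · refine Summable.of_nonneg_of_le (fun n => tsum_nonneg fun I => ?_) (fun n => ?_) h3
      · simp only [Function.comp]; positivity
      · have := hfib n
        have e1 : ∀ I : {I : QNZ K // φ I = n}, ((fun I : QNZ K => ((Ideal.absNorm I.1 : ℝ)) ^ (-2 : ℤ)) ∘ (Equiv.sigmaFiberEquiv φ)) ⟨n, I⟩ = (n : ℝ) ^ (-2 : ℤ) := by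
          rintro ⟨I, hI⟩
          change ((φ I : ℕ) : ℝ) ^ (-2 : ℤ) = _
          rw [hI]
        rw [tsum_congr e1, tsum_const, nsmul_eq_mul, LSeries.norm_term_eq]
        rcases eq_or_ne n 0 with rfl | hn
        · have : IsEmpty {I : QNZ K // φ I = 0} := by
            refine ⟨fun I => I.1.2 ?_⟩
            exact Ideal.absNorm_eq_zero_iff.mp I.2
          simp
        · rw [if_neg hn]
          have : Nat.card {I : QNZ K // φ I = n} ≤ Nat.card {I : Ideal (𝓞 K) // Ideal.absNorm I = n} := by
            have : Finite {I : Ideal (𝓞 K) // Ideal.absNorm I = n} := Ideal.finite_setOfPred_absNorm_eq n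
            exact Nat.card_le_card_of_injective (β := {I : Ideal (𝓞 K) // Ideal.absNorm I = n})
              (fun I => ⟨I.1.1, I.2⟩) fun I J h => Subtype.ext (Subtype.ext (congrArg (fun z => z.1) h))
          have h5 : (Nat.card {I : QNZ K // φ I = n} : ℝ) ≤ Nat.card {I : Ideal (𝓞 K) // Ideal.absNorm I = n} := by
            exact_mod_cast this
          have h6 : (n : ℝ) ^ (2 : ℂ).re = (n : ℝ) ^ 2 := by simp
          rw [h6, div_eq_mul_inv, Complex.norm_real, Real.norm_of_nonneg (Nat.cast_nonneg _),
            zpow_neg]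
          norm_cast at h5 ⊢
          gcongr
  · intro x
    simp only [Function.comp]; positivity

/-- Generic dominated convergence step. -/
theorem qc_dom {ι : Type*} (c N : ι → ℝ) (hN : ∀ i, 1 ≤ N i)
    (hc : ∀ i, |c i| ≤ 1) (hs : Summable fun i => N i ^ (-2 : ℤ)) (F : ℝ → ℝ) (A C : ℝ)
    (hF : Tendsto (fun X => F X / X) atTop (𝓝 A)) (hC : ∀ X, 0 < X → |F X| ≤ C * X) :
    Tendsto (fun X => (∑' i, c i * F (X / N i ^ 2)) / X) atTop
      (𝓝 (A * ∑' i, c i * N i ^ (-2 : ℤ))) := by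
  have h0 : ∀ i, 0 < N i := fun i => lt_of_lt_of_le one_pos (hN i)
  have hC0 : 0 ≤ C := by have := (abs_nonneg _).trans (hC 1 one_pos); linarith
  rw [← tsum_mul_left]
  have key := tendsto_tsum_of_dominated_convergence (𝓕 := atTop)
    (f := fun X i => c i * F (X / N i ^ 2) / X) (g := fun i => A * (c i * N i ^ (-2 : ℤ)))
    (bound := fun i => C * N i ^ (-2 : ℤ)) (hs.mul_left C) ?_ ?_
  · refine key.congr fun X => ?_
    rw [tsum_div_const]
  · intro i
    have hh : Tendsto (fun X => X / N i ^ 2) atTop atTop :=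
      tendsto_id.atTop_div_const (pow_pos (h0 i) 2)
    have := ((hF.comp hh).mul_const (c i * N i ^ (-2 : ℤ)))
    refine this.congr' ?_
    filter_upwards [eventually_gt_atTop 0] with X hX
    have := h0 i
    simp only [Function.comp, zpow_neg]
    norm_cast
    field_simp
  · filter_upwards [eventually_gt_atTop 0] with X hX i
    have hp := pow_pos (h0 i) 2
    have h1 := hC (X / N i ^ 2) (by positivity)
    rw [Real.norm_eq_abs, abs_div, abs_mul, abs_of_pos hX, div_le_iff₀ hX]
    calc |c i| * |F (X / N i ^ 2)| ≤ 1 * (C * (X / N i ^ 2)) := by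
          gcongr
          exact hc i
      _ = _ := by
          rw [zpow_neg]; norm_cast; field_simp

end S7


open NumberField Filter
open scoped nonZeroDivisors Real

section S8
open Module IntermediateField Topology

theorem qc_card_fiber {T ι : Type*} [Finite T] (φ : T → ι) :
    (Nat.card T : ℝ) = ∑' i, (Nat.card {t // φ t = i} : ℝ) := by
  have h1 : ∀ (U : Type _) [Finite U], ∑' _ : U, (1 : ℝ) = Nat.card U := by
    intro U _
    rw [tsum_const, nsmul_eq_mul, mul_one]
  rw [← h1 T, ← (Equiv.sigmaFiberEquiv φ).tsum_eq]
  have : Finite ((i : ι) × {t // φ t = i}) := Finite.of_equiv T (Equiv.sigmaFiberEquiv φ).symm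
  rw [Summable.tsum_sigma' (fun i => Summable.of_finite) Summable.of_finite]
  exact tsum_congr fun i => by rw [tsum_const, nsmul_eq_mul, mul_one]

variable {K : Type*} [Field K] [NumberField K]

theorem qc_delta_one (L : QF K) : 1 ≤ qcDelta L := by
  have := L.nf
  have h : 0 < |@discr L.1 _ L.nf| := abs_pos.mpr (@discr_ne_zero L.1 _ L.nf)
  unfold qcDelta
  exact_mod_cast h

theorem qc_N_one (I : QNZ K) : (1 : ℝ) ≤ Ideal.absNorm I.1 := by
  have : Ideal.absNorm I.1 ≠ 0 := fun h => I.2 (Ideal.absNorm_eq_zero_iff.mp h)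
  exact_mod_cast Nat.one_le_iff_ne_zero.mpr this

abbrev QFX (K : Type*) [Field K] [NumberField K] (X : ℝ) := {L : QF K // qcDelta L ≤ X}

theorem qc_QFX_inj (X : ℝ) : ∃ i : QFX K X → QG K X, Function.Injective i := by
  refine ⟨fun L => ⟨(L.1, ⟨⊤, by simp⟩), by simpa using L.2⟩, fun L L' h => Subtype.ext ?_⟩
  exact congrArg (fun z => z.1.1) h

theorem qc_g_eq (hfin : ∀ X, Finite (QG K X)) (X : ℝ) :
    (Nat.card (QG K X) : ℝ) =
      ∑' I : QNZ K, 1 * (Nat.card (QFX K (X / (Ideal.absNorm I.1 : ℝ) ^ 2)) : ℝ) := by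
  have := hfin X
  rw [qc_card_fiber (fun p : QG K X => p.1.2)]
  refine tsum_congr fun I => ?_
  rw [one_mul]
  congr 1
  have hp : (0 : ℝ) < (Ideal.absNorm I.1 : ℝ) ^ 2 := by have := qc_N_one I; positivity
  refine Nat.card_congr ⟨fun p => ⟨p.1.1.1, ?_⟩, fun L => ⟨⟨(L.1, I), ?_⟩, rfl⟩, ?_, ?_⟩
  · rw [le_div_iff₀ hp]
    have := p.1.2
    rw [p.2] at this
    exact this
  · exact (le_div_iff₀ hp).mp L.2
  · rintro ⟨⟨⟨L, J⟩, h⟩, rfl⟩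
    rfl
  · intro L
    rfl

abbrev QPr (K : Type*) [Field K] := {p : Ideal (𝓞 K) // Prime p}

noncomputable def qcProd (S : Finset (QPr K)) : Ideal (𝓞 K) := ∏ p ∈ S, p.1


theorem qc_prod_ne (S : Finset (QPr K)) : qcProd S ≠ ⊥ := by
  unfold qcProd
  exact Finset.prod_ne_zero_iff.mpr fun p _ => p.2.ne_zero

theorem qc_prod_dvd (S : Finset (QPr K)) (I : Ideal (𝓞 K)) :
    qcProd S ∣ I ↔ ∀ p ∈ S, p.1 ∣ I := by
  classical
  constructor
  · intro h p hp
    exact (Finset.dvd_prod_of_mem (fun p : QPr K => p.1) hp).trans h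
  · intro h
    have : qcProd S = ∏ p ∈ S.image Subtype.val, p := by
      rw [Finset.prod_image fun a _ b _ h => Subtype.ext h]; rfl
    rw [this]
    apply Finset.prod_primes_dvd
    · intro a ha
      obtain ⟨p, hp, rfl⟩ := Finset.mem_image.mp ha
      exact p.2
    · intro a ha
      obtain ⟨p, hp, rfl⟩ := Finset.mem_image.mp ha
      exact h p hp

theorem qc_prod_inj : Function.Injective (fun S : Finset (QPr K) => (⟨qcProd S, qc_prod_ne S⟩ : QNZ K)) := by
  intro S T h
  have h' : qcProd S = qcProd T := congrArg (fun z => z.1) h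
  have key : ∀ (S : Finset (QPr K)) (p : QPr K), p ∈ S ↔ p.1 ∣ qcProd S := by
    intro S p
    constructor
    · intro hp
      exact Finset.dvd_prod_of_mem (fun p : QPr K => p.1) hp
    · intro hp
      obtain ⟨q, hq, hd⟩ := (p.2.dvd_finsetProd_iff _).mp hp
      have : p.1 = q.1 := associated_iff_eq.mp ((Prime.dvd_prime_iff_associated p.2 q.2).mp hd)
      rwa [Subtype.ext this]
  ext p
  rw [key, key, h']

theorem qc_f_eq (hfin : ∀ X, Finite (QG K X)) (X : ℝ) :
    (Nat.card (QFX K X) : ℝ) =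
      ∑' S : Finset (QPr K), (-1 : ℝ) ^ S.card * (Nat.card (QG K (X / (Ideal.absNorm (qcProd S) : ℝ) ^ 2)) : ℝ) := by
  classical
  have := hfin X
  have := Fintype.ofFinite (QG K X)
  have hpf : ∀ I : QNZ K, {p : QPr K | p.1 ∣ I.1}.Finite := by
    intro I
    have h1 : {J : Ideal (𝓞 K) | J ∣ I.1}.Finite := by
      have := UniqueFactorizationMonoid.fintypeSubtypeDvd I.1 I.2
      exact Finite.of_fintype {J : Ideal (𝓞 K) // J ∣ I.1}
    exact Set.Finite.preimage (f := fun p : QPr K => p.1) (Subtype.val_injective.injOn) h1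
  have h1 : ∀ S : Finset (QPr K), (Nat.card (QG K (X / (Ideal.absNorm (qcProd S) : ℝ) ^ 2)) : ℝ) =
      ∑ t : QG K X, if qcProd S ∣ t.1.2.1 then (1 : ℝ) else 0 := by
    intro S
    rw [Finset.sum_boole]
    congr 1
    have hp : (0 : ℝ) < (Ideal.absNorm (qcProd S) : ℝ) ^ 2 := by
      have := qc_N_one (⟨qcProd S, qc_prod_ne S⟩ : QNZ K)
      simp only at this
      positivity
    rw [← Fintype.card_subtype, ← Nat.card_eq_fintype_card]
    refine Nat.card_congr (Equiv.ofBijective (fun t => ⟨⟨(t.1.1, ⟨qcProd S * t.1.2.1, mul_ne_zero (qc_prod_ne S) t.1.2.2⟩), ?_⟩, ?_⟩) ⟨?_, ?_⟩)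
    · have := t.2
      rw [le_div_iff₀ hp] at this
      simp only [map_mul, Nat.cast_mul]
      nlinarith
    · exact dvd_mul_right _ _
    · intro t t' h
      have h2 : t.1.1 = t'.1.1 := congrArg (fun z => z.1.1.1) h
      have h3 : qcProd S * t.1.2.1 = qcProd S * t'.1.2.1 := congrArg (fun z => z.1.1.2.1) h
      have h4 := mul_left_cancel₀ (qc_prod_ne S) h3
      exact Subtype.ext (Prod.ext h2 (Subtype.ext h4))
    · rintro ⟨⟨⟨L, ⟨I, hI⟩⟩, ht⟩, J, hJ⟩
      simp only at hJ
      subst hJ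
      refine ⟨⟨(L, ⟨J, right_ne_zero_of_mul hI⟩), ?_⟩, rfl⟩
      rw [le_div_iff₀ hp]
      simp only [map_mul, Nat.cast_mul] at ht
      simp only
      nlinarith
  have h2 : ∀ t : QG K X, HasSum (fun S : Finset (QPr K) => (-1 : ℝ) ^ S.card *
      if qcProd S ∣ t.1.2.1 then (1 : ℝ) else 0) (if t.1.2.1 = ⊤ then 1 else 0) := by
    intro t
    have h3 : ∀ S : Finset (QPr K), qcProd S ∣ t.1.2.1 ↔ S ∈ (hpf t.1.2).toFinset.powerset := by
      intro S
      rw [qc_prod_dvd, Finset.mem_powerset]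
      constructor
      · intro h p hp
        exact (hpf t.1.2).mem_toFinset.mpr (h p hp)
      · intro h p hp
        exact (hpf t.1.2).mem_toFinset.mp (h hp)
    have h4 := hasSum_sum_of_ne_finset_zero (L := SummationFilter.unconditional _) (f := fun S : Finset (QPr K) => (-1 : ℝ) ^ S.card *
      if qcProd S ∣ t.1.2.1 then (1 : ℝ) else 0) (s := (hpf t.1.2).toFinset.powerset) (by
        intro S hS
        rw [← h3] at hS
        simp [hS])
    convert h4 using 1
    rw [Finset.sum_congr rfl (g := fun S => (((-1 : ℤ) ^ S.card : ℤ) : ℝ))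
      (by intro S hS; rw [if_pos ((h3 S).mpr hS)]; simp), ← Int.cast_sum,
      Finset.sum_powerset_neg_one_pow_card]
    have h5 : t.1.2.1 = ⊤ ↔ (hpf t.1.2).toFinset = ∅ := by
      rw [Set.Finite.toFinset_eq_empty, Set.eq_empty_iff_forall_notMem]
      constructor
      · intro h p hp
        change p.1 ∣ t.1.2.1 at hp
        rw [h, ← Ideal.one_eq_top] at hp
        exact p.2.not_isUnit (isUnit_of_dvd_one hp)
      · intro h
        by_contra hne
        have hu : ¬ IsUnit t.1.2.1 := by rwa [Ideal.isUnit_iff]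
        obtain ⟨q, hq, hd⟩ := WfDvdMonoid.exists_irreducible_factor hu t.1.2.2
        exact h ⟨q, hq.prime⟩ hd
    by_cases h6 : t.1.2.1 = ⊤
    · rw [if_pos h6, if_pos (h5.mp h6)]; simp
    · rw [if_neg h6, if_neg (fun h => h6 (h5.mpr h))]; simp
  have h3 := hasSum_sum (s := Finset.univ) fun t _ => h2 t
  simp_rw [h1, Finset.mul_sum]
  rw [h3.tsum_eq, Finset.sum_boole]
  congr 1
  rw [← Fintype.card_subtype, ← Nat.card_eq_fintype_card]
  refine Nat.card_congr (Equiv.ofBijective (fun L => ⟨⟨(L.1, ⟨⊤, by simp⟩), by simpa using L.2⟩, rfl⟩) ⟨?_, ?_⟩)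
  · intro L L' h
    exact Subtype.ext (congrArg (fun z => z.1.1.1) h)
  · rintro ⟨⟨⟨L, ⟨I, hI⟩⟩, ht⟩, h⟩
    simp only at h
    subst h
    exact ⟨⟨L, by simpa using ht⟩, rfl⟩

theorem qc_N_prod (S : Finset (QPr K)) : (1 : ℝ) ≤ (Ideal.absNorm (qcProd S) : ℝ) := by
  have : Ideal.absNorm (qcProd S) ≠ 0 := fun h => qc_prod_ne S (Ideal.absNorm_eq_zero_iff.mp h)
  exact_mod_cast Nat.one_le_iff_ne_zero.mpr this

theorem qc_summable_prod (K : Type*) [Field K] [NumberField K] :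
    Summable fun S : Finset (QPr K) => (Ideal.absNorm (qcProd S) : ℝ) ^ (-2 : ℤ) := by
  have h := (qc_summable K).comp_injective (qc_prod_inj (K := K))
  refine h.congr fun S => ?_
  simp only [Function.comp]

theorem qc_f_lim (hfin : ∀ X, Finite (QG K X)) (A : ℝ) (hA : A ≠ 0)
    (hg : Tendsto (fun X : ℝ => (Nat.card (QG K X) : ℝ) / X) atTop (𝓝 A)) :
    Tendsto (fun X : ℝ => (Nat.card (QFX K X) : ℝ) / X) atTop (𝓝 (A / dedekindZetaTwo K)) := by
  have hmono : ∀ X Y, X ≤ Y → Nat.card (QG K X) ≤ Nat.card (QG K Y) := by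
    intro X Y h
    have := hfin Y
    exact Nat.card_le_card_of_injective (fun t : QG K X => (⟨t.1, t.2.trans h⟩ : QG K Y))
      fun t t' h => Subtype.ext (congrArg (fun z => z.1) h)
  have hzero : ∀ X, X < 1 → Nat.card (QG K X) = 0 := by
    intro X hX
    have : IsEmpty (QG K X) := by
      refine ⟨fun t => ?_⟩
      have h1 := qc_delta_one t.1.1
      have h2 := qc_N_one t.1.2
      have h3 := t.2
      nlinarith [one_le_pow₀ h2 (n := 2)]
    simp
  obtain ⟨C, hC⟩ : ∃ C : ℝ, ∀ X, 0 < X → |(Nat.card (QG K X) : ℝ)| ≤ C * X := by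
    have h1 : ∀ᶠ X : ℝ in atTop, (Nat.card (QG K X) : ℝ) / X < A + 1 :=
      hg.eventually_lt_const (by linarith)
    obtain ⟨Y, hY⟩ := eventually_atTop.mp h1
    refine ⟨max (A + 1) (Nat.card (QG K Y)), fun X hX => ?_⟩
    rw [Nat.abs_cast]
    rcases le_total Y X with h | h
    · have := hY X h
      rw [div_lt_iff₀ hX] at this
      exact this.le.trans (mul_le_mul_of_nonneg_right (le_max_left _ _) hX.le)
    · rcases lt_or_ge X 1 with h' | h'
      · rw [hzero X h', Nat.cast_zero]
        exact mul_nonneg (le_trans (Nat.cast_nonneg _) (le_max_right _ _)) hX.le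
      · have h2 : (Nat.card (QG K X) : ℝ) ≤ Nat.card (QG K Y) := by exact_mod_cast hmono X Y h
        calc (Nat.card (QG K X) : ℝ) ≤ Nat.card (QG K Y) * 1 := by linarith
          _ ≤ _ := mul_le_mul (le_max_right _ _) h' zero_le_one
              (le_trans (Nat.cast_nonneg _) (le_max_right _ _))
  have hC' : ∀ X, 0 < X → |(Nat.card (QFX K X) : ℝ)| ≤ C * X := by
    intro X hX
    refine le_trans ?_ (hC X hX)
    rw [Nat.abs_cast, Nat.abs_cast]
    obtain ⟨i, hi⟩ := qc_QFX_inj (K := K) X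
    have := hfin X
    exact_mod_cast Nat.card_le_card_of_injective i hi
  have hS := qc_summable K
  have hS2 := qc_summable_prod K
  have hN2 := qc_N_prod (K := K)
  have s1 := qc_dom (fun S : Finset (QPr K) => (-1 : ℝ) ^ S.card)
    (fun S => (Ideal.absNorm (qcProd S) : ℝ)) hN2
    (fun S => by simp) hS2
    (fun X => (Nat.card (QG K X) : ℝ)) A C hg hC
  obtain ⟨M, hM⟩ : ∃ M, M = ∑' S : Finset (QPr K), (-1 : ℝ) ^ S.card * (Ideal.absNorm (qcProd S) : ℝ) ^ (-2 : ℤ) := ⟨_, rfl⟩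
  rw [← hM] at s1
  have s2 : Tendsto (fun X : ℝ => (Nat.card (QFX K X) : ℝ) / X) atTop (𝓝 (A * M)) :=
    s1.congr fun X => by rw [qc_f_eq hfin]
  have s3 := qc_dom (fun _ : QNZ K => (1 : ℝ)) (fun I => (Ideal.absNorm I.1 : ℝ)) qc_N_one
    (fun _ => by simp) hS (fun X => (Nat.card (QFX K X) : ℝ)) (A * M) C s2 hC'
  have s4 : Tendsto (fun X : ℝ => (Nat.card (QG K X) : ℝ) / X) atTop
      (𝓝 (A * M * dedekindZetaTwo K)) := by
    have : (∑' I : QNZ K, 1 * (Ideal.absNorm I.1 : ℝ) ^ (-2 : ℤ)) = dedekindZetaTwo K := by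
      simp only [one_mul]; rfl
    rw [← this]
    exact s3.congr fun X => by rw [qc_g_eq hfin]
  have h5 := tendsto_nhds_unique hg s4
  have hz : dedekindZetaTwo K ≠ 0 := by
    intro h
    rw [h, mul_zero] at h5
    exact hA h5
  have : A / dedekindZetaTwo K = A * M := by
    rw [div_eq_iff hz]; exact h5
  rw [this]
  exact s2

end S8


open NumberField Filter
open scoped nonZeroDivisors Real

section S9
open Module IntermediateField Topology

theorem qc_local (K : Type*) [Field K] [NumberField K] (hdeg : Module.finrank ℚ K = 2)
    (𝔭 : Ideal (𝓞 K)) (hp : 𝔭.IsPrime) (h2 : (2 : 𝓞 K) ∈ 𝔭) :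
    gTwo K 1 / (1 + ((Ideal.absNorm 𝔭 : ℝ))⁻¹) = 1 := by
  have hN : Ideal.absNorm (Ideal.span {(2 : 𝓞 K)}) = 4 := by
    have := qc_absNorm_nat K hdeg 2
    simpa using this
  have hle : Ideal.span {(2 : 𝓞 K)} ≤ 𝔭 := by
    rw [Ideal.span_singleton_le_iff_mem]; exact h2
  have hne : Ideal.span {(2 : 𝓞 K)} ≠ ⊥ := by
    intro h; rw [h] at hN; simp at hN
  obtain ⟨J, hJ⟩ := Ideal.dvd_iff_le.mpr hle
  have hNJ : Ideal.absNorm 𝔭 * Ideal.absNorm J = 4 := by rw [← map_mul, ← hJ, hN]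
  have hp1 : Ideal.absNorm 𝔭 ≠ 1 := fun h => hp.ne_top (Ideal.absNorm_eq_one_iff.mp h)
  by_cases hprime : (Ideal.span {(2 : 𝓞 K)}).IsPrime
  · have hmax := hprime.isMaximal hne
    have heq := hmax.eq_of_le hp.ne_top hle
    rw [← heq, hN, gTwo, if_pos hprime]
    have e1 : (4 : ℝ) ^ (-(2 * 1) : ℝ) = 1 / 16 := by
      rw [Real.rpow_neg (by norm_num), show (2 * 1 : ℝ) = ((2 : ℕ) : ℝ) by norm_num,
        Real.rpow_natCast]; norm_num
    have e2 : (4 : ℝ) ^ (-(3 * 1) : ℝ) = 1 / 64 := by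
      rw [Real.rpow_neg (by norm_num), show (3 * 1 : ℝ) = ((3 : ℕ) : ℝ) by norm_num,
        Real.rpow_natCast]; norm_num
    rw [e1, e2]; norm_num
  · have hJ1 : Ideal.absNorm J ≠ 1 := by
      intro h
      rw [Ideal.absNorm_eq_one_iff] at h
      apply hprime
      rw [hJ, h, ← Ideal.one_eq_top, mul_one]
      exact hp
    have hN2 : Ideal.absNorm 𝔭 = 2 := by
      have hd : Ideal.absNorm 𝔭 ∣ 4 := ⟨_, hNJ.symm⟩
      have hle4 := Nat.le_of_dvd (by norm_num) hd
      generalize Ideal.absNorm 𝔭 = a at *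
      generalize Ideal.absNorm J = b at *
      interval_cases a <;> omega
    have e : ∀ n : ℕ, (2 : ℝ) ^ (-((n : ℝ) * 1) : ℝ) = 1 / 2 ^ n := by
      intro n
      rw [Real.rpow_neg (by norm_num), mul_one, Real.rpow_natCast, one_div]
    have e2 := e 2
    have e3 := e 3
    have e4 := e 4
    have e5 := e 5
    push_cast at e2 e3 e4 e5
    rw [hN2, gTwo, if_neg hprime, e2, e3, e4, e5]
    split_ifs <;> norm_num

theorem qc_quadCount (K : Type*) [Field K] [NumberField K] (n : ℕ) :
    quadCount K n = Nat.card (QFX K (n : ℝ)) := by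
  unfold quadCount
  refine Nat.card_congr ⟨fun L => ⟨⟨L.1, L.2.1⟩, ?_⟩, fun L => ⟨L.1.1, L.1.2, L.1.nf, ?_⟩, ?_, ?_⟩
  · obtain ⟨L, h1, h, h2⟩ := L
    unfold qcDelta
    exact_mod_cast h2
  · have := L.2
    unfold qcDelta at this
    exact_mod_cast this
  · intro L; rfl
  · intro L; rfl

theorem qc_main
    (K : Type*) [Field K] [NumberField K]
    (hdeg : Module.finrank ℚ K = 2) (himag : IsEmpty (K →+* ℝ)) :
    Tendsto (fun n : ℕ => (quadCount K n : ℝ) / (n : ℝ)) atTop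
      (nhds ((((NumberField.discr K).natAbs : ℝ) ^ (-(5 : ℝ) / 2) * Real.pi *
            (NumberField.classNumber K : ℝ)) /
          ((rootsOfUnityCount K : ℝ) * dedekindZetaTwo K) *
        ∏ᶠ 𝔭 ∈ {𝔭 : Ideal (𝓞 K) | 𝔭.IsPrime ∧ (2 : 𝓞 K) ∈ 𝔭},
          gTwo K 1 / (1 + ((Ideal.absNorm 𝔭 : ℝ))⁻¹))) := by
  have := qc_totallyComplex K himag
  rw [finprod_mem_eq_one_of_forall_eq_one fun 𝔭 h => qc_local K hdeg 𝔭 h.1 h.2, mul_one]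
  obtain ⟨hfin, hw, hg⟩ := qc_g K hdeg
  have hd : (0 : ℝ) < |(discr K : ℝ)| := abs_pos.mpr (by exact_mod_cast discr_ne_zero K)
  have hd' : (discr K : ℝ) ≠ 0 := abs_pos.mp hd
  have hh : (0 : ℝ) < classNumber K := by exact_mod_cast classNumber_pos K
  have hw' : (0 : ℝ) < rootsOfUnityCount K := by exact_mod_cast hw
  have hA : (classNumber K : ℝ) * π / (rootsOfUnityCount K * ((discr K : ℝ) ^ 2 * √|discr K|)) ≠ 0 := by
    have := Real.pi_pos
    have := Real.sqrt_pos.mpr hd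
    push_cast
    positivity
  have key := (qc_f_lim hfin _ hA hg).comp (tendsto_natCast_atTop_atTop (R := ℝ))
  have e0 : (((discr K).natAbs : ℕ) : ℝ) = |(discr K : ℝ)| := by
    rw [Nat.cast_natAbs]; push_cast; rfl
  have e1 : (((discr K).natAbs : ℕ) : ℝ) ^ (-(5 : ℝ) / 2) = ((discr K : ℝ) ^ 2 * √|discr K|)⁻¹ := by
    rw [e0, neg_div, Real.rpow_neg hd.le, show (5 / 2 : ℝ) = (2 : ℕ) + 1 / 2 by norm_num,
      Real.rpow_add hd, Real.rpow_natCast, sq_abs, Real.sqrt_eq_rpow]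
  rw [e1]
  have e2 : ∀ z : ℝ, (classNumber K : ℝ) * π / (rootsOfUnityCount K * ((discr K : ℝ) ^ 2 * √|discr K|)) / z
      = ((discr K : ℝ) ^ 2 * √|discr K|)⁻¹ * π * classNumber K / (rootsOfUnityCount K * z) := by
    intro z
    simp only [div_eq_mul_inv, mul_inv]
    ring
  rw [← e2]
  refine key.congr fun n => ?_
  simp only [Function.comp]
  rw [qc_quadCount]

end S9

end QCount

theorem quadratic_count_imaginary_oddClassNumber
    (K : Type*) [Field K] [NumberField K]
    (hdeg : Module.finrank ℚ K = 2) (himag : IsEmpty (K →+* ℝ))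
    (hodd : Odd (NumberField.classNumber K)) :
    Tendsto (fun n : ℕ => (quadCount K n : ℝ) / (n : ℝ)) atTop
      (nhds ((((NumberField.discr K).natAbs : ℝ) ^ (-(5 : ℝ) / 2) * Real.pi *
            (NumberField.classNumber K : ℝ)) /
          ((rootsOfUnityCount K : ℝ) * dedekindZetaTwo K) *
        ∏ᶠ 𝔭 ∈ {𝔭 : Ideal (𝓞 K) | 𝔭.IsPrime ∧ (2 : 𝓞 K) ∈ 𝔭},
          gTwo K 1 / (1 + ((Ideal.absNorm 𝔭 : ℝ))⁻¹))) := by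
  exact qc_main K hdeg himag
end

section
/- Let K be an imaginary quadratic number field (a number field of degree 2 over ℚ with no real embeddings) with odd class number, and suppose K contains no element x with x² = -1 and no element x with x² = -2 (i.e. K is not ℚ(i) and not ℚ(√-2)). Then the prime 2 is unramified in K/ℚ; equivalently, there is no ideal 𝔮 of the ring of integers 𝓞_K with 𝔮² = (2), the principal ideal generated by 2. -/
open NumberField

lemma aux_norm_trace (K : Type*) [Field K] [NumberField K]
    (hdeg : Module.finrank ℚ K = 2) (himag : IsEmpty (K →+* ℝ)) (φ : K →ₐ[ℚ] ℂ) (a : 𝓞 K) :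
    ((Algebra.norm ℤ a : ℤ) : ℂ) = φ a * (starRingEnd ℂ) (φ a) ∧
    ((Algebra.trace ℤ (𝓞 K) a : ℤ) : ℂ) = φ a + (starRingEnd ℂ) (φ a) := by
  classical
  let ψ : K →ₐ[ℚ] ℂ := ((ComplexEmbedding.conjugate (φ : K →+* ℂ))).toRatAlgHom
  have hψ : ∀ x, ψ x = (starRingEnd ℂ) (φ x) := fun x => rfl
  have hne : φ ≠ ψ := by
    intro h
    have hr : ComplexEmbedding.IsReal (φ : K →+* ℂ) := by
      rw [ComplexEmbedding.isReal_iff]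
      ext x
      exact (DFunLike.congr_fun h x).symm
    exact himag.false hr.embedding
  have hcard : Fintype.card (K →ₐ[ℚ] ℂ) = 2 := by
    rw [AlgHom.card, hdeg]
  have huniv : (Finset.univ : Finset (K →ₐ[ℚ] ℂ)) = {φ, ψ} := by
    symm
    apply Finset.eq_univ_of_card
    rw [Finset.card_pair hne, hcard]
  constructor
  · have h := Algebra.norm_eq_prod_embeddings ℚ ℂ (a : K)
    rw [huniv, Finset.prod_pair hne, hψ, ← Algebra.coe_norm_int] at h
    simpa using h
  · have h := trace_eq_sum_embeddings (K := ℚ) ℂ (x := (a : K))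
    rw [huniv, Finset.sum_pair hne, hψ, ← Algebra.coe_trace_int] at h
    simpa using h

/-- In an imaginary quadratic number field with odd class number, other than
`ℚ(i)` and `ℚ(√-2)`, the prime 2 is unramified: no ideal of the ring of integers
squares to the principal ideal `(2)`. -/
theorem two_unramified_of_imaginary_quadratic_oddClassNumber
    (K : Type*) [Field K] [NumberField K]
    (hdeg : Module.finrank ℚ K = 2) (himag : IsEmpty (K →+* ℝ))
    (hodd : Odd (NumberField.classNumber K))
    (hi : ¬∃ x : K, x ^ 2 = -1) (h2 : ¬∃ x : K, x ^ 2 = -2) :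
    ¬∃ 𝔮 : Ideal (𝓞 K), 𝔮 ^ 2 = Ideal.span {(2 : 𝓞 K)} := by
  rintro ⟨q, hq⟩
  have h20 : (2 : 𝓞 K) ≠ 0 := two_ne_zero
  have hq0 : q ≠ 0 := by
    rintro rfl
    rw [zero_pow two_ne_zero] at hq
    exact h20 (Ideal.span_singleton_eq_bot.1 hq.symm)
  have hqm : q ∈ nonZeroDivisors (Ideal (𝓞 K)) := mem_nonZeroDivisors_of_ne_zero hq0
  have hsq : (ClassGroup.mk0 ⟨q, hqm⟩) ^ 2 = 1 := by
    rw [← map_pow, ClassGroup.mk0_eq_one_iff]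
    change (q ^ 2).IsPrincipal
    rw [hq]
    exact ⟨⟨2, rfl⟩⟩
  have hone : ClassGroup.mk0 ⟨q, hqm⟩ = 1 := by
    obtain ⟨k, hk⟩ := hodd
    have h1 : (ClassGroup.mk0 ⟨q, hqm⟩) ^ (NumberField.classNumber K) = 1 := pow_card_eq_one
    rwa [hk, pow_succ, pow_mul, hsq, one_pow, one_mul] at h1
  rw [ClassGroup.mk0_eq_one_iff] at hone
  obtain ⟨⟨a, ha⟩⟩ := hone
  change q = Ideal.span {a} at ha
  rw [ha, Ideal.span_singleton_pow, Ideal.span_singleton_eq_span_singleton] at hq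
  obtain ⟨u, hu⟩ := hq.symm
  -- norms
  have hn2 : Algebra.norm ℤ (2 : 𝓞 K) = 4 := by
    have := Algebra.norm_algebraMap (R := ℤ) (S := 𝓞 K) 2
    rw [RingOfIntegers.rank, hdeg] at this
    simpa using this
  obtain ⟨φ⟩ : Nonempty (K →ₐ[ℚ] ℂ) :=
    ⟨(Classical.arbitrary (K →+* ℂ)).toRatAlgHom⟩
  obtain ⟨hN, hT⟩ := aux_norm_trace K hdeg himag φ a
  have hNu : Algebra.norm ℤ (u : 𝓞 K) = 1 ∨ Algebra.norm ℤ (u : 𝓞 K) = -1 :=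
    Int.isUnit_iff.1 (u.isUnit.map (Algebra.norm ℤ))
  have hnn : Algebra.norm ℤ a ^ 2 = 4 * Algebra.norm ℤ (u : 𝓞 K) := by
    rw [← map_pow, ← hu, map_mul, hn2]
  generalize hnd : Algebra.norm ℤ a = n at *
  generalize htd : Algebra.trace ℤ (𝓞 K) a = t at *
  have hzN : (n : ℝ) = (φ a).re ^ 2 + (φ a).im ^ 2 := by
    have := congrArg Complex.re hN
    simp at this
    nlinarith
  have hzT : (t : ℝ) = 2 * (φ a).re := by
    have := congrArg Complex.re hT
    simp at this
    linarith
  have hn0 : 0 ≤ n := by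
    have : (0 : ℝ) ≤ n := by rw [hzN]; positivity
    exact_mod_cast this
  have hn : n = 2 := by
    rcases hNu with h | h <;> rw [h] at hnn <;> nlinarith
  subst hn
  have ht : t ^ 2 ≤ 8 := by
    have : (t : ℝ) ^ 2 ≤ 8 := by
      push_cast at hzN
      rw [hzT]
      nlinarith [sq_nonneg (φ a).im]
    exact_mod_cast this
  have hquadK : (a : K) ^ 2 = t * a - 2 := by
    apply φ.toRingHom.injective
    have : (φ a) ^ 2 = t * φ a - 2 := by
      push_cast at hN
      rw [hN, hT]; ring
    have h2' : φ 2 = 2 := map_ofNat φ 2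
    simpa [h2'] using this
  have hquad : a ^ 2 = t * a - 2 := by
    apply RingOfIntegers.coe_injective
    rw [map_pow, map_sub, map_mul, map_intCast, map_ofNat]
    exact hquadK
  have key : ∀ b : 𝓞 K, a ≠ 2 * b := by
    intro b hb
    have h1 : (2 : 𝓞 K) * (2 * b ^ 2) = 2 * u := by rw [hu, hb]; ring
    have h2 := mul_left_cancel₀ h20 h1
    have h3 : IsUnit (2 : 𝓞 K) := isUnit_of_dvd_unit ⟨_, h2.symm⟩ u.isUnit
    have h4 := h3.map (Algebra.norm ℤ)
    rw [hn2] at h4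
    rcases Int.isUnit_iff.1 h4 with h | h <;> omega
  have hl : -2 ≤ t := by nlinarith
  have hr : t ≤ 2 := by nlinarith
  interval_cases t
  · exact hi ⟨a + 1, by push_cast at hquadK; linear_combination hquadK⟩
  · exact key (-(u + 1)) (by push_cast at hquad; linear_combination hquad + hu)
  · exact h2 ⟨a, by push_cast at hquadK; linear_combination hquadK⟩
  · exact key (u + 1) (by push_cast at hquad; linear_combination -hquad - hu)
  · exact hi ⟨a - 1, by push_cast at hquadK; linear_combination hquadK⟩
end

section
/- Let K be an imaginary quadratic number field (degree 2 over ℚ, no real embeddings) with odd class number that contains no element x with x² = -1 and no element x with x² = -2 (i.e. K ≠ ℚ(i), ℚ(√-2)). Then there exists a prime number p with p ≡ 3 (mod 4) such that K contains an element x with x² = -p; that is, K = ℚ(√-p) for some prime p ≡ 3 (mod 4). -/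
open NumberField IntermediateField

theorem aux_real (K : Type*) [Field K] [NumberField K] (himag : IsEmpty (K →+* ℝ))
    (x : K) (q : ℚ) (hq : 0 ≤ q) (hx : x ^ 2 = algebraMap ℚ K q) (ht : ℚ⟮x⟯ = ⊤) : False := by
  obtain ⟨φ⟩ : Nonempty (K →+* ℂ) := inferInstance
  have hreal : ComplexEmbedding.IsReal φ := by
    have h1 : (φ x) ^ 2 = ((Real.sqrt q : ℝ) : ℂ) ^ 2 := by
      rw [← map_pow, hx, ← Complex.ofReal_pow, Real.sq_sqrt (by exact_mod_cast hq)]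
      simp
    have h2 : (starRingEnd ℂ) (φ x) = φ x := by
      rcases sq_eq_sq_iff_eq_or_eq_neg.1 h1 with h | h <;> rw [h] <;> simp
    have h3 : ((ComplexEmbedding.conjugate φ).toRatAlgHom) = φ.toRatAlgHom := by
      have h4 : Algebra.adjoin ℚ ({x} : Set K) = ⊤ := by
        rw [← IntermediateField.adjoin_simple_toSubalgebra_of_isAlgebraic
          (Algebra.IsAlgebraic.isAlgebraic x), ht]; rfl
      refine AlgHom.ext_of_adjoin_eq_top h4 ?_
      rintro y rfl
      simpa using h2
    ext y
    exact DFunLike.congr_fun h3 y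
  exact himag.false hreal.embedding

theorem aux_top (K : Type*) [Field K] [NumberField K] (hdeg : Module.finrank ℚ K = 2)
    (x : K) (p : ℕ) (hp : p.Prime) (hx : x ^ 2 = p) : ℚ⟮x⟯ = ⊤ := by
  have := IntermediateField.isSimpleOrder_of_finrank_prime ℚ K (hdeg ▸ Nat.prime_two)
  refine (eq_bot_or_eq_top _).resolve_left fun h => ?_
  rw [IntermediateField.adjoin_simple_eq_bot_iff, IntermediateField.mem_bot] at h
  obtain ⟨r, rfl⟩ := h
  have h1 : r ^ 2 = p := by
    have : algebraMap ℚ K (r ^ 2) = algebraMap ℚ K p := by simpa using hx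
    exact (algebraMap ℚ K).injective this
  have h2 : IsSquare ((p : ℚ)) := ⟨r, by rw [← h1, sq]⟩
  rw [Rat.isSquare_natCast_iff] at h2
  exact hp.prime.irreducible.not_isSquare h2

theorem aux_unit (K : Type*) [Field K] [NumberField K]
    (hdeg : Module.finrank ℚ K = 2) (himag : IsEmpty (K →+* ℝ))
    (hi : ¬∃ x : K, x ^ 2 = -1) (u : (𝓞 K)ˣ) :
    ∃ v : (𝓞 K)ˣ, u = v ^ 2 ∨ u = - v ^ 2 := by
  have hc : IsTotallyComplex K := by
    refine ⟨fun w => ?_⟩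
    rw [← InfinitePlace.not_isReal_iff_isComplex]
    intro hw
    exact himag.false (InfinitePlace.embedding_of_isReal hw)
  have hrank : Units.rank K = 0 := by
    have := IsTotallyComplex.finrank K
    have h0 := IsTotallyComplex.nrRealPlaces_eq_zero K
    rw [Units.rank, InfinitePlace.card_eq_nrRealPlaces_add_nrComplexPlaces]
    omega
  have hfin : IsOfFinOrder u := by
    obtain ⟨⟨x, e⟩, hxu, -⟩ := Units.exist_unique_eq_mul_prod _ u
    have hux : u = x := by
      rw [← mul_one x.1, hxu]
      apply congr_arg
      rw [← Finset.prod_empty]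
      congr
      rw [Finset.univ_eq_empty_iff, hrank]
      infer_instance
    rw [hux]
    exact (CommGroup.mem_torsion _).1 x.2
  have hpos := hfin.orderOf_pos
  set n := orderOf u with hn
  have key : ∀ w : (𝓞 K)ˣ, w ^ 2 = 1 → w ≠ 1 → w = -1 := by
    intro w hw hne
    have h1 : ((w : 𝓞 K)) ^ 2 = 1 := by
      rw [← Units.val_pow_eq_pow_val, hw, Units.val_one]
    rcases mul_self_eq_one_iff.1 ((sq _).symm.trans h1) with h | h
    · exact absurd (Units.ext h) hne
    · exact Units.ext (by simpa using h)
  rcases Nat.even_or_odd' n with ⟨m, hm | hm⟩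
  · have hum : u ^ m = -1 := by
      apply key
      · rw [← pow_mul, mul_comm, ← hm]; exact pow_orderOf_eq_one u
      · intro h
        have := orderOf_dvd_of_pow_eq_one h
        have := Nat.le_of_dvd (by omega) this
        omega
    rcases Nat.even_or_odd' m with ⟨k, hk | hk⟩
    · exfalso
      apply hi
      refine ⟨((u ^ k : (𝓞 K)ˣ) : 𝓞 K), ?_⟩
      have : (u ^ k) ^ 2 = -1 := by rw [← pow_mul, mul_comm, ← hk, hum]
      have := congrArg (fun z : (𝓞 K)ˣ => (((z : (𝓞 K)ˣ) : 𝓞 K) : K)) this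
      simpa using this
    · refine ⟨u ^ (k + 1), Or.inr ?_⟩
      have : (u ^ (k+1)) ^ 2 = u ^ m * u := by rw [← pow_mul, ← pow_succ]; congr 1; omega
      rw [this, hum]; simp
  · refine ⟨u ^ (m + 1), Or.inl ?_⟩
    have : (u ^ (m+1)) ^ 2 = u ^ n * u := by rw [← pow_mul, ← pow_succ]; congr 1; omega
    rw [this, hn, pow_orderOf_eq_one, one_mul]

theorem aux_ideal (K : Type*) [Field K] [NumberField K]
    (hdeg : Module.finrank ℚ K = 2) (himag : IsEmpty (K →+* ℝ))
    (hodd : Odd (NumberField.classNumber K))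
    (hi : ¬∃ x : K, x ^ 2 = -1) (p : ℕ) (hp : p.Prime) (I : Ideal (𝓞 K))
    (hI : I ^ 2 = Ideal.span {(p : 𝓞 K)}) : ∃ x : K, x ^ 2 = -(p : K) := by
  have hp0 : (p : 𝓞 K) ≠ 0 := by exact_mod_cast hp.ne_zero
  have hI0 : I ≠ 0 := by
    rintro rfl
    rw [zero_pow two_ne_zero, eq_comm] at hI
    exact hp0 (Ideal.span_singleton_eq_bot.1 hI)
  have hprin : I.IsPrincipal := by
    rw [← ClassGroup.mk0_eq_one_iff (mem_nonZeroDivisors_of_ne_zero hI0)]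
    set c := ClassGroup.mk0 ⟨I, mem_nonZeroDivisors_of_ne_zero hI0⟩ with hc
    have h1 : c ^ 2 = 1 := by
      rw [hc, ← map_pow]
      have : (I ^ 2).IsPrincipal := hI ▸ ⟨⟨_, rfl⟩⟩
      exact (ClassGroup.mk0_eq_one_iff (mem_nonZeroDivisors_of_ne_zero (pow_ne_zero 2 hI0))).2 this
    have h2 : c ^ (classNumber K) = 1 := pow_card_eq_one
    have h3 := Nat.Coprime.eq_one_of_dvd
      (Nat.Coprime.coprime_dvd_left (orderOf_dvd_of_pow_eq_one h2) (Nat.coprime_two_right.2 hodd))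
      (orderOf_dvd_of_pow_eq_one h1)
    exact orderOf_eq_one_iff.1 h3
  obtain ⟨⟨a, ha⟩⟩ := hprin
  change I = Ideal.span {a} at ha
  rw [ha, Ideal.span_singleton_pow, Ideal.span_singleton_eq_span_singleton] at hI
  obtain ⟨u, hu⟩ := hI.symm
  obtain ⟨v, hv⟩ := aux_unit K hdeg himag hi u
  have hv1 : (((v⁻¹ : (𝓞 K)ˣ) : 𝓞 K) : K) ^ 2 * (((v : (𝓞 K)ˣ) : 𝓞 K) : K) ^ 2 = 1 := by
    rw [← mul_pow, ← map_mul, ← Units.val_mul]; simp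
  have hu' : (p : K) * ((u : 𝓞 K) : K) = (a : K) ^ 2 := by
    simpa using congrArg (algebraMap (𝓞 K) K) hu
  rcases hv with rfl | rfl
  · exfalso
    have hx : ((a : K) * ((v⁻¹ : (𝓞 K)ˣ) : 𝓞 K)) ^ 2 = p := by
      rw [mul_pow, ← hu']
      simp only [Units.val_pow_eq_pow_val, map_pow]
      linear_combination (p : K) * hv1
    exact aux_real K himag _ (p : ℚ) (by positivity) (by simpa using hx) (aux_top K hdeg _ p hp hx)
  · refine ⟨(a : K) * ((v⁻¹ : (𝓞 K)ˣ) : 𝓞 K), ?_⟩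
    rw [mul_pow, ← hu']
    simp only [Units.val_neg, Units.val_pow_eq_pow_val, map_pow, map_neg]
    linear_combination -(p : K) * hv1

theorem aux_int (K : Type*) [Field K] [NumberField K] (s : K) (d : ℕ) (hs : s ^ 2 = -(d : K)) :
    ∃ t : 𝓞 K, (t : K) = s ∧ t ^ 2 = - (d : 𝓞 K) := by
  have h : IsIntegral ℤ s := by
    refine IsIntegral.of_pow (n := 2) two_pos ?_
    rw [hs]
    exact (isIntegral_natCast (R := ℤ) d).neg
  obtain ⟨t, rfl⟩ : ∃ t : 𝓞 K, (t : K) = s := ⟨⟨s, h⟩, rfl⟩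
  refine ⟨t, rfl, ?_⟩
  apply FaithfulSMul.algebraMap_injective (𝓞 K) K
  rw [map_pow, map_neg, map_natCast]
  exact hs

theorem aux_gen (K : Type*) [Field K] [NumberField K]
    (hdeg : Module.finrank ℚ K = 2) (himag : IsEmpty (K →+* ℝ)) :
    ∃ d : ℕ, Squarefree d ∧ ∃ s : K, s ^ 2 = -(d : K) := by
  have : Algebra.IsQuadraticExtension ℚ K := { finrank_eq_two' := hdeg }
  have hprim : (primitiveRoots (Module.finrank ℚ K) ℚ).Nonempty := by
    rw [hdeg]
    refine ⟨-1, ?_⟩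
    rw [mem_primitiveRoots two_pos]
    exact IsPrimitiveRoot.neg_one 0 (by norm_num)
  obtain ⟨s, ⟨q, hq⟩, ht⟩ := exists_root_adjoin_eq_top_of_isCyclic ℚ K hprim
  rw [hdeg] at hq
  have hneg : q < 0 := by
    by_contra! h
    exact aux_real K himag s q h hq.symm ht
  have hb : (q.den : ℚ) ≠ 0 := by exact_mod_cast q.den_nz
  obtain ⟨N, hN⟩ : ∃ N : ℕ, q.num * q.den = -(N : ℤ) := by
    refine ⟨(-(q.num * q.den)).toNat, ?_⟩
    have : q.num * q.den < 0 := mul_neg_of_neg_of_pos (Rat.num_neg.2 hneg) (by exact_mod_cast q.den_pos)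
    omega
  have hqN : q * (q.den : ℚ) ^ 2 = - (N : ℚ) := by
    have h1 : ((q.num * q.den : ℤ) : ℚ) = ((-(N : ℤ) : ℤ) : ℚ) := by rw [hN]
    push_cast at h1
    rw [← h1, sq, ← mul_assoc, Rat.mul_den_eq_num]
  obtain ⟨a, b, hab, hsf⟩ := Nat.sq_mul_squarefree N
  have hb0 : b ≠ 0 := by
    rintro rfl
    simp at hab
    rw [← hab] at hqN
    simp [hb] at hqN
    exact hneg.ne hqN
  refine ⟨a, hsf, s * q.den / b, ?_⟩
  have hqK : algebraMap ℚ K q * (q.den : K) ^ 2 = -(N : K) := by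
    simpa using congrArg (algebraMap ℚ K) hqN
  have hbK : (b : K) ≠ 0 := by exact_mod_cast hb0
  rw [div_pow, mul_pow, ← hq, hqK, ← hab]
  push_cast
  field_simp

/-- An imaginary quadratic number field with odd class number, other than `ℚ(i)` and
`ℚ(√-2)`, is `ℚ(√-p)` for some prime `p ≡ 3 (mod 4)`. -/
theorem imaginary_quadratic_oddClassNumber_eq_sqrt_neg_prime
    (K : Type*) [Field K] [NumberField K]
    (hdeg : Module.finrank ℚ K = 2) (himag : IsEmpty (K →+* ℝ))
    (hodd : Odd (NumberField.classNumber K))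
    (hi : ¬∃ x : K, x ^ 2 = -1) (h2 : ¬∃ x : K, x ^ 2 = -2) :
    ∃ p : ℕ, p.Prime ∧ p % 4 = 3 ∧ ∃ x : K, x ^ 2 = -(p : K) := by
  obtain ⟨d, hsf, s, hs⟩ := aux_gen K hdeg himag
  have hd1 : d ≠ 1 := by
    rintro rfl
    exact hi ⟨s, by simpa using hs⟩
  obtain ⟨p, hp, hpd⟩ := Nat.exists_prime_and_dvd hd1
  have hpx : ∃ x : K, x ^ 2 = -(p : K) := by
    obtain ⟨t, -, ht⟩ := aux_int K s d hs
    obtain ⟨e, rfl⟩ := hpd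
    have hcop : Nat.Coprime p e := Nat.coprime_of_squarefree_mul hsf
    obtain ⟨m, n, hmn⟩ := (Nat.isCoprime_iff_coprime.2 hcop)
    have hmn' : (m : 𝓞 K) * p + n * e = 1 := by exact_mod_cast congrArg (Int.cast : ℤ → 𝓞 K) hmn
    push_cast at ht
    refine aux_ideal K hdeg himag hodd hi p hp (Ideal.span {(p : 𝓞 K), t}) ?_
    rw [sq, Ideal.span_pair_mul_span_pair]
    apply le_antisymm
    · rw [Ideal.span_le]
      rintro y hy
      simp only [Set.mem_insert_iff, Set.mem_singleton_iff] at hy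
      simp only [SetLike.mem_coe, Ideal.mem_span_singleton]
      rcases hy with rfl | rfl | rfl | rfl
      · exact ⟨p, rfl⟩
      · exact ⟨t, rfl⟩
      · exact ⟨t, mul_comm _ _⟩
      · exact ⟨-e, by linear_combination ht⟩
    · rw [Ideal.span_singleton_le_iff_mem]
      have : (m : 𝓞 K) * (p * p) + (-n) * (t * t) = p := by
        linear_combination (p : 𝓞 K) * hmn' - n * ht
      suffices key : (m : 𝓞 K) * (p * p) + (-n) * (t * t) ∈
          Ideal.span {(p : 𝓞 K) * p, p * t, t * p, t * t} by rwa [this] at key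
      refine Ideal.add_mem _ (Ideal.mul_mem_left _ _ (Ideal.subset_span ?_))
        (Ideal.mul_mem_left _ _ (Ideal.subset_span ?_)) <;> simp
  refine ⟨p, hp, ?_, hpx⟩
  have hp2 : p ≠ 2 := by
    rintro rfl
    exact h2 (by simpa using hpx)
  by_contra h3
  have h1 : p % 4 = 1 := by
    have := hp.eq_two_or_odd
    omega
  obtain ⟨s, hs⟩ := hpx
  obtain ⟨t, -, ht⟩ := aux_int K s p hs
  obtain ⟨k, hk⟩ : ∃ k, p = 4 * k + 1 := ⟨p / 4, by omega⟩
  have hk' : (p : 𝓞 K) = 4 * k + 1 := by rw [hk]; push_cast; ring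
  rw [hk'] at ht
  suffices hI : (Ideal.span {(2 : 𝓞 K), 1 + t}) ^ 2 = Ideal.span {((2 : ℕ) : 𝓞 K)} by
    have := aux_ideal K hdeg himag hodd hi 2 Nat.prime_two _ hI
    exact h2 (by exact_mod_cast this)
  rw [sq, Ideal.span_pair_mul_span_pair]
  apply le_antisymm
  · rw [Ideal.span_le]
    rintro y hy
    simp only [Set.mem_insert_iff, Set.mem_singleton_iff] at hy
    simp only [SetLike.mem_coe, Ideal.mem_span_singleton]
    push_cast
    rcases hy with rfl | rfl | rfl | rfl
    · exact ⟨2, rfl⟩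
    · exact ⟨1 + t, rfl⟩
    · exact ⟨1 + t, mul_comm _ _⟩
    · exact ⟨t - 2 * k, by linear_combination ht⟩
  · rw [Ideal.span_singleton_le_iff_mem]
    have : ((2 : ℕ) : 𝓞 K) = (-k) * (2 * 2) + (2 * (1 + t) + (-1) * ((1 + t) * (1 + t))) := by
      push_cast
      linear_combination ht
    rw [this]
    refine Ideal.add_mem _ (Ideal.mul_mem_left _ _ (Ideal.subset_span ?_))
      (Ideal.add_mem _ (Ideal.subset_span ?_)
        (Ideal.mul_mem_left _ _ (Ideal.subset_span ?_))) <;> simp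
end

section
/- A real quadratic number field K (a number field of degree 2 over ℚ with two real embeddings) has odd class number, a unit of norm -1 in its ring of integers, and 2 unramified in K/ℚ if and only if K = ℚ(√p) for some prime number p with p ≡ 1 (mod 4); i.e. such fields K are exactly those containing an element x with x² = p for a prime p ≡ 1 (mod 4), and conversely for every prime p ≡ 1 (mod 4) the field ℚ(√p) has odd class number, a unit of norm -1, and 2 unramified. -/
open NumberField

namespace RQ

set_option linter.unusedSectionVars false

variable {K : Type*} [Field K] [NumberField K]

local notation "Tr" => Algebra.trace ℤ (𝓞 K)
local notation "Nm" => Algebra.norm ℤ (S := 𝓞 K)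

theorem quad (h : Module.finrank ℚ K = 2) (y : 𝓞 K) :
    y ^ 2 = (Tr y : 𝓞 K) * y - (Nm y : 𝓞 K) := by
  have hr : Module.finrank ℤ (𝓞 K) = 2 := by rw [RingOfIntegers.rank, h]
  let b := Module.finBasisOfFinrankEq ℤ (𝓞 K) hr
  have h1 := Matrix.aeval_self_charpoly (Algebra.leftMulMatrix b y)
  rw [Polynomial.aeval_algHom_apply] at h1
  have h2 := (Algebra.leftMulMatrix_injective b) (h1.trans (map_zero _).symm)
  rw [Matrix.charpoly_fin_two, ← Algebra.trace_eq_matrix_trace b,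
    ← Algebra.norm_eq_matrix_det b] at h2
  simp at h2
  linear_combination h2

theorem tr_int (h : Module.finrank ℚ K = 2) (n : ℤ) : Tr (n : 𝓞 K) = 2 * n := by
  have := Algebra.trace_algebraMap (R := ℤ) (S := 𝓞 K) n
  rw [RingOfIntegers.rank, h] at this
  simpa using this

theorem tr_int_mul (n : ℤ) (y : 𝓞 K) : Tr ((n : 𝓞 K) * y) = n * Tr y := by
  have := (Algebra.trace ℤ (𝓞 K)).map_smul n y
  simpa using this

theorem nm_int (h : Module.finrank ℚ K = 2) (n : ℤ) : Nm (n : 𝓞 K) = n ^ 2 := by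
  have := Algebra.norm_algebraMap_of_basis (Module.finBasisOfFinrankEq ℤ (𝓞 K) ((RingOfIntegers.rank K).trans h)) n
  simpa using this

theorem polar (h : Module.finrank ℚ K = 2) (y z : 𝓞 K) :
    2 * (y * z) = (Tr y : 𝓞 K) * z + (Tr z : 𝓞 K) * y - (Tr y : 𝓞 K) * (Tr z : 𝓞 K)
      + (Tr (y * z) : 𝓞 K) := by
  have hy := quad h y
  have hz := quad h z
  have hs := quad h (y + z)
  rw [map_add] at hs
  push_cast at hs
  obtain ⟨B, hB⟩ : ∃ B : ℤ, B = Nm (y + z) - Nm y - Nm z := ⟨_, rfl⟩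
  have h1 : (2 : ℤ) * (y * z) = (Tr y : ℤ) * z + (Tr z : ℤ) * y - ((B : ℤ) : 𝓞 K) := by
    rw [hB]; push_cast; linear_combination hs - hy - hz
  have h2 := congrArg (Tr) h1
  rw [map_sub, map_add, tr_int_mul, tr_int_mul, tr_int_mul, tr_int h] at h2
  have h3 : B = Tr y * Tr z - Tr (y * z) := by linarith
  rw [h3] at h1
  push_cast at h1
  linear_combination h1

theorem prime_sq_aux {p : ℕ} (hp : p.Prime) {t s : ℤ} (h : t ^ 2 * p = s ^ 2) : t = 0 := by
  by_contra ht
  have h2 : (p : ℝ) = (s / t : ℝ) ^ 2 := by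
    have : (t : ℝ) ≠ 0 := by exact_mod_cast ht
    field_simp
    have : (t : ℝ) ^ 2 * p = s ^ 2 := by exact_mod_cast h
    linarith
  have h3 := hp.irrational_sqrt
  rw [h2, Real.sqrt_sq_eq_abs] at h3
  exact h3 ⟨|(s / t : ℚ)|, by push_cast; rfl⟩

theorem tr_sqrt (h : Module.finrank ℚ K = 2) {p : ℕ} (hp : p.Prime) {x : 𝓞 K}
    (hx : x ^ 2 = (p : 𝓞 K)) : Tr x = 0 := by
  have h1 := quad h x
  rw [hx] at h1
  have h2 : ((Tr x ^ 2 * p : ℤ) : 𝓞 K) = (((p + Nm x) ^ 2 : ℤ) : 𝓞 K) := by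
    push_cast
    rw [← hx] at h1 ⊢
    linear_combination (-(x ^ 2 + (Nm x : 𝓞 K)) - (Tr x : 𝓞 K) * x) * h1
  exact prime_sq_aux hp (Int.cast_injective h2)

theorem nm_lin (h : Module.finrank ℚ K = 2) {p : ℕ} (hp : p.Prime) {x : 𝓞 K}
    (hx : x ^ 2 = (p : 𝓞 K)) (a b : ℤ) :
    Nm ((a : 𝓞 K) + b * x) = a ^ 2 - p * b ^ 2 := by
  have h1 := quad h ((a : 𝓞 K) + b * x)
  rw [map_add, tr_int h, tr_int_mul, tr_sqrt h hp hx] at h1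
  apply Int.cast_injective (α := 𝓞 K)
  push_cast at h1 ⊢
  rw [← hx]
  linear_combination h1

theorem red_tr (h : Module.finrank ℚ K = 2) {q : ℕ} (hq : q.Prime) {y : 𝓞 K}
    (hy : (q : 𝓞 K) ∣ y ^ 2) : (q : ℤ) ∣ Tr y := by
  have hqZ := Nat.prime_iff_prime_int.mp hq
  by_contra hc
  have hN : (q : ℤ) ∣ Nm y := by
    obtain ⟨z, hz⟩ := hy
    have h1 := congrArg (Nm) hz
    rw [map_mul, map_pow] at h1
    have h2 := nm_int h (K := K) (q : ℤ)
    push_cast at h2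
    rw [h2] at h1
    exact hqZ.dvd_of_dvd_pow (n := 2) (by rw [h1]; exact ⟨q * Nm z, by ring⟩)
  have h3 : ((q : ℤ) : 𝓞 K) ∣ (Tr y : 𝓞 K) * y := by
    have : (Tr y : 𝓞 K) * y = y ^ 2 + (Nm y : 𝓞 K) := by rw [quad h y]; ring
    rw [this]
    exact dvd_add (by exact_mod_cast hy) (Int.cast_dvd_cast _ _ hN)
  have hco : IsCoprime (q : ℤ) (Tr y) := (Prime.coprime_iff_not_dvd hqZ).mpr hc
  have hco' : IsCoprime ((q : ℤ) : 𝓞 K) (Tr y : 𝓞 K) := by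
    simpa using hco.map (Int.castRingHom (𝓞 K))
  obtain ⟨z, hz⟩ := hco'.dvd_of_dvd_mul_left h3
  exact hc ⟨Tr z, by rw [← tr_int_mul, ← hz]⟩

theorem red (h : Module.finrank ℚ K = 2) {p : ℕ} (hp : p.Prime) {x w : 𝓞 K}
    (hx : x ^ 2 = (p : 𝓞 K)) (hw : 2 * w = 1 + x) {q : ℕ} (hq : q.Prime) (hqp : q ≠ p)
    {y : 𝓞 K} (hy : (q : 𝓞 K) ∣ y ^ 2) : (q : 𝓞 K) ∣ y := by
  have h1 := red_tr h hq hy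
  have h2 := red_tr h hq (y := y * w) (by rw [mul_pow]; exact dvd_mul_of_dvd_left hy _)
  have hTw : Tr w = 1 := by
    have := congrArg (Tr) hw
    have e1 := tr_int_mul (K := K) 2 w
    have e2 := tr_int (K := K) h 1
    push_cast at e1 e2
    rw [map_add, e1, e2, tr_sqrt h hp hx] at this
    linarith
  have h3 := polar h y w
  rw [hTw] at h3
  have h4 : (p : 𝓞 K) * y = x * ((Tr (y * w) : 𝓞 K) - (1 - w) * (Tr y : 𝓞 K)) := by
    rw [← hx]
    push_cast at h3
    linear_combination x * h3 - x * y * hw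
  have h5 : ((q : ℤ) : 𝓞 K) ∣ ((p : ℤ) : 𝓞 K) * y := by
    have : ((p : ℤ) : 𝓞 K) = p := by simp
    rw [this, h4]
    exact dvd_mul_of_dvd_right (dvd_sub (Int.cast_dvd_cast _ _ h2)
      (dvd_mul_of_dvd_right (Int.cast_dvd_cast _ _ h1) _)) _
  have hco : IsCoprime (q : ℤ) (p : ℤ) :=
    Nat.isCoprime_iff_coprime.mpr ((Nat.coprime_primes hq hp).mpr hqp)
  have hco' : IsCoprime ((q : ℤ) : 𝓞 K) ((p : ℤ) : 𝓞 K) := by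
    simpa using hco.map (Int.castRingHom (𝓞 K))
  simpa using hco'.dvd_of_dvd_mul_left h5

theorem span_cast_ne {k : ℕ} (hk : k ≠ 0) : Ideal.span {(k : 𝓞 K)} ≠ 0 := by
  simpa [Ideal.zero_eq_bot] using hk

theorem nat_dvd_of (h : Module.finrank ℚ K = 2) {a b : ℕ} (hab : (a : 𝓞 K) ∣ (b : 𝓞 K)) :
    a ∣ b := by
  obtain ⟨z, hz⟩ := hab
  have h1 := congrArg (Nm) hz
  have ha := nm_int h (K := K) (a : ℤ)
  have hb := nm_int h (K := K) (b : ℤ)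
  push_cast at ha hb
  rw [map_mul, ha, hb] at h1
  have : (a : ℤ) ^ 2 ∣ (b : ℤ) ^ 2 := ⟨_, h1⟩
  rw [Int.pow_dvd_pow_iff two_ne_zero] at this
  exact_mod_cast this

theorem princ (h : Module.finrank ℚ K = 2) {p : ℕ} (hp : p.Prime) {x w : 𝓞 K}
    (hx : x ^ 2 = (p : 𝓞 K)) (hw : 2 * w = 1 + x) (k : ℕ) :
    k ≠ 0 → ∀ J : Ideal (𝓞 K), J ^ 2 = Ideal.span {(k : 𝓞 K)} → J.IsPrincipal := by
  induction k using Nat.strong_induction_on with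
  | _ k ih =>
  intro hk J hJ
  by_cases hk1 : k = 1
  · subst hk1
    have : J = ⊤ := by
      rw [Nat.cast_one, Ideal.span_singleton_one, ← Ideal.one_eq_top] at hJ
      have := IsUnit.of_mul_eq_one (a := J) J (by rw [← pow_two, hJ])
      exact Ideal.isUnit_iff.mp this
    rw [this]; exact ⟨1, by simp⟩
  obtain ⟨q, hq, k', rfl⟩ := Nat.exists_prime_and_dvd hk1
  have hk' : k' ≠ 0 := by rintro rfl; simp at hk
  have hlt : k' < q * k' := by
    have := hq.two_le
    nlinarith [Nat.pos_of_ne_zero hk']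
  rw [Nat.cast_mul, ← Ideal.span_singleton_mul_span_singleton] at hJ
  by_cases hqp : q = p
  · subst hqp
    have hxs : Ideal.span {x} ^ 2 = Ideal.span {(q : 𝓞 K)} := by
      rw [Ideal.span_singleton_pow, hx]
    have hd : Ideal.span {x} ∣ J := by
      rw [← UniqueFactorizationMonoid.pow_dvd_pow_iff_dvd two_ne_zero, hJ, hxs]
      exact Dvd.intro _ rfl
    obtain ⟨J', rfl⟩ := hd
    rw [mul_pow, hxs] at hJ
    have hJ' := mul_left_cancel₀ (span_cast_ne hq.ne_zero) hJ
    obtain ⟨g, hg⟩ := (ih k' hlt hk' J' hJ').principal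
    exact ⟨x * g, by
      rw [hg]; exact Ideal.span_singleton_mul_span_singleton x g⟩
  · have hd : Ideal.span {(q : 𝓞 K)} ∣ J := by
      rw [Ideal.dvd_iff_le]
      intro y hy
      rw [Ideal.mem_span_singleton]
      apply red h hp hx hw hq hqp
      have := Ideal.pow_mem_pow hy 2
      rw [hJ] at this
      exact Ideal.mem_span_singleton.mp (Ideal.mul_le_left this)
    obtain ⟨J', rfl⟩ := hd
    rw [mul_pow, pow_two, mul_assoc] at hJ
    have hJ' := mul_left_cancel₀ (span_cast_ne hq.ne_zero) hJ
    have hqk : q ∣ k' := by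
      apply nat_dvd_of h
      rw [← Ideal.mem_span_singleton]
      have : (k' : 𝓞 K) ∈ Ideal.span {(k' : 𝓞 K)} := Ideal.mem_span_singleton_self _
      rw [← hJ'] at this
      exact Ideal.mul_le_left this
    obtain ⟨k'', rfl⟩ := hqk
    rw [Nat.cast_mul, ← Ideal.span_singleton_mul_span_singleton] at hJ'
    have hJ'' := mul_left_cancel₀ (span_cast_ne hq.ne_zero) hJ'
    have hk'' : k'' ≠ 0 := by rintro rfl; simp at hk
    have hle : k'' ≤ q * k'' := Nat.le_mul_of_pos_left _ hq.pos
    obtain ⟨g, hg⟩ := (ih k'' (by omega) hk'' J' hJ'').principal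
    exact ⟨q * g, by
      rw [hg]; exact Ideal.span_singleton_mul_span_singleton _ g⟩

theorem unram (h : Module.finrank ℚ K = 2) {p : ℕ} (hp : p.Prime) {x w : 𝓞 K}
    (hx : x ^ 2 = (p : 𝓞 K)) (hw : 2 * w = 1 + x) (hp2 : p ≠ 2) :
    ¬∃ 𝔮 : Ideal (𝓞 K), 𝔮 ^ 2 = Ideal.span {(2 : 𝓞 K)} := by
  rintro ⟨Q, hQ⟩
  have hQ' : Q ^ 2 = Ideal.span {((2 : ℕ) : 𝓞 K)} := by simpa using hQ
  have hd : Ideal.span {((2 : ℕ) : 𝓞 K)} ∣ Q := by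
    rw [Ideal.dvd_iff_le]
    intro y hy
    rw [Ideal.mem_span_singleton]
    apply red h hp hx hw Nat.prime_two hp2.symm
    have := Ideal.pow_mem_pow hy 2
    rw [hQ'] at this
    exact Ideal.mem_span_singleton.mp this
  obtain ⟨J, rfl⟩ := hd
  have h1 : Ideal.span {((2 : ℕ) : 𝓞 K)} * (Ideal.span {((2 : ℕ) : 𝓞 K)} * J ^ 2) =
      Ideal.span {((2 : ℕ) : 𝓞 K)} * 1 := by
    rw [mul_one]; nth_rw 3 [← hQ']; ring
  have h2 := mul_left_cancel₀ (span_cast_ne two_ne_zero) h1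
  have h3 : ((1 : ℕ) : 𝓞 K) ∈ Ideal.span {((2 : ℕ) : 𝓞 K)} := by
    apply Ideal.mul_le_left (J := J ^ 2)
    rw [h2]; simp
  have := nat_dvd_of h (Ideal.mem_span_singleton.mp h3)
  omega

theorem oddclass (h : Module.finrank ℚ K = 2) {p : ℕ} (hp : p.Prime) {x w : 𝓞 K}
    (hx : x ^ 2 = (p : 𝓞 K)) (hw : 2 * w = 1 + x) (u : (𝓞 K)ˣ) (hu : Nm u = -1) :
    Odd (NumberField.classNumber K) := by
  by_contra hodd
  rw [Nat.not_odd_iff_even, even_iff_two_dvd] at hodd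
  obtain ⟨C, hC⟩ := exists_prime_orderOf_dvd_card (G := ClassGroup (𝓞 K)) 2 hodd
  obtain ⟨⟨I, hI⟩, rfl⟩ := ClassGroup.mk0_surjective C
  have hI0 : I ≠ 0 := nonZeroDivisors.ne_zero hI
  have hnp : ¬ I.IsPrincipal := by
    rw [← ClassGroup.mk0_eq_one_iff hI]
    intro hc; rw [hc, orderOf_one] at hC; omega
  have hsq : (I ^ 2).IsPrincipal := by
    rw [← ClassGroup.mk0_eq_one_iff (pow_mem hI 2)]
    have := pow_orderOf_eq_one (ClassGroup.mk0 ⟨I, hI⟩)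
    rw [hC, ← map_pow] at this
    exact this
  obtain ⟨a, ha⟩ := hsq.principal
  change I ^ 2 = Ideal.span {a} at ha
  set m : ℕ := Ideal.absNorm I with hm
  have hm0 : m ≠ 0 := by rw [hm, Ideal.absNorm_ne_zero_iff_mem_nonZeroDivisors]; exact hI
  have hna : (Nm a).natAbs = m ^ 2 := by
    rw [← Ideal.absNorm_span_singleton, ← ha, map_pow]
  -- adjust the sign of the norm
  obtain ⟨b, hb, hnb⟩ : ∃ b : 𝓞 K, I ^ 2 = Ideal.span {b} ∧ Nm b = (m : ℤ) ^ 2 := by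
    rcases Int.natAbs_eq (Nm a) with h1 | h1
    · exact ⟨a, ha, by rw [h1, hna]; push_cast; rfl⟩
    · refine ⟨a * u, ?_, ?_⟩
      · rw [ha, Ideal.span_singleton_mul_right_unit u.isUnit]
      · rw [map_mul, hu, h1, hna]; push_cast; ring
  obtain ⟨c, hc, hnc, hcm⟩ : ∃ c : 𝓞 K, I ^ 2 = Ideal.span {c} ∧ Nm c = (m : ℤ) ^ 2 ∧
      c + m ≠ 0 := by
    by_cases hbm : b + m = 0
    · refine ⟨-b, by rw [hb, Ideal.span_singleton_neg], ?_, ?_⟩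
      · have := nm_int h (K := K) (-1)
        rw [← neg_one_mul, map_mul, hnb]
        push_cast at this
        rw [this]; ring
      · rw [eq_neg_of_add_eq_zero_left hbm]
        simpa [← two_mul] using hm0
    · exact ⟨b, hb, hnb, hbm⟩
  have hq := quad h c
  rw [hnc] at hq
  have hβ : (c + m) ^ 2 = ((Tr c + 2 * m : ℤ) : 𝓞 K) * c := by
    push_cast at hq ⊢
    linear_combination hq
  obtain ⟨k, hk⟩ : ∃ k : ℤ, k = Tr c + 2 * m := ⟨_, rfl⟩
  rw [← hk] at hβ
  have hk0 : k ≠ 0 := by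
    rintro rfl
    simp at hβ
    exact hcm hβ
  have hmem : c + m ∈ I := by
    apply I.add_mem _ (Ideal.absNorm_mem I)
    apply Ideal.pow_le_self two_ne_zero
    rw [hc]; exact Ideal.mem_span_singleton_self c
  obtain ⟨J, hJ⟩ : I ∣ Ideal.span {c + (m : 𝓞 K)} := by
    rw [Ideal.dvd_span_singleton]; exact hmem
  have hc0 : Ideal.span {c} ≠ 0 := by rw [← hc]; exact pow_ne_zero 2 hI0
  have hkk : Ideal.span {(k : 𝓞 K)} = Ideal.span {((k.natAbs : ℕ) : 𝓞 K)} := by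
    rcases Int.natAbs_eq k with h1 | h1
    · conv_lhs => rw [h1]
      simp
    · conv_lhs => rw [h1]
      rw [Int.cast_neg, Ideal.span_singleton_neg, Int.cast_natCast]
  have hJ2 : J ^ 2 = Ideal.span {((k.natAbs : ℕ) : 𝓞 K)} := by
    apply mul_left_cancel₀ hc0
    rw [← hkk, Ideal.span_singleton_mul_span_singleton, mul_comm c, ← hβ,
      ← Ideal.span_singleton_pow, hJ, mul_pow, hc]
  have hJp := princ h hp hx hw _ (by simpa using hk0) J hJ2
  have hJ0 : J ≠ 0 := by
    rintro rfl
    rw [mul_zero, Ideal.zero_eq_bot, Ideal.span_singleton_eq_bot] at hJ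
    exact hcm hJ
  apply hnp
  rw [← ClassGroup.mk0_eq_one_iff hI]
  have hJ1 := (ClassGroup.mk0_eq_one_iff (mem_nonZeroDivisors_of_ne_zero hJ0)).mpr hJp
  have := (ClassGroup.mk0_eq_mk0_inv_iff (I := ⟨I, hI⟩)
    (J := ⟨J, mem_nonZeroDivisors_of_ne_zero hJ0⟩)).mpr ⟨_, hcm, hJ.symm⟩
  rw [this, hJ1, inv_one]

theorem pell_neg {p : ℕ} (hp : p.Prime) (hp4 : p % 4 = 1) :
    ∃ a b : ℤ, a ^ 2 - p * b ^ 2 = -1 := by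
  have hpZ := Nat.prime_iff_prime_int.mp hp
  obtain ⟨S, hS1, hS2, hS3⟩ := Pell.IsFundamental.exists_of_not_isSquare (d := (p : ℤ))
    (by exact_mod_cast hp.pos) hpZ.irreducible.not_isSquare
  have hS := S.prop
  obtain ⟨X, hX⟩ : ∃ X, X = S.x := ⟨_, rfl⟩
  obtain ⟨Y, hY⟩ : ∃ Y, Y = S.y := ⟨_, rfl⟩
  rw [← hX] at hS1 hS3 hS
  rw [← hY] at hS2 hS
  obtain ⟨c, hc⟩ : ∃ c : ℤ, (p : ℤ) = 4 * c + 1 := ⟨p / 4, by omega⟩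
  have hXY : X % 2 = 1 ∧ Y % 2 = 0 := by
    have hmod : (X ^ 2 - Y ^ 2) % 4 = 1 := by
      have : X ^ 2 - Y ^ 2 = 1 + 4 * (c * Y ^ 2) := by rw [hc] at hS; linarith
      omega
    rcases Int.even_or_odd' X with ⟨i, rfl | rfl⟩ <;> rcases Int.even_or_odd' Y with ⟨j, rfl | rfl⟩ <;>
      ring_nf at hmod <;> omega
  obtain ⟨r, rfl⟩ : ∃ r, X = 2 * r + 1 := ⟨X / 2, by omega⟩
  obtain ⟨s, rfl⟩ : ∃ s, Y = 2 * s := ⟨Y / 2, by omega⟩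
  have hr : 0 < r := by omega
  have hrs : r * (r + 1) = p * s ^ 2 := by linarith
  have hpp : (0 : ℤ) < p := by exact_mod_cast hp.pos
  have key : ∀ a b c : ℤ, 0 < a → IsCoprime a b → a * b = c ^ 2 → ∃ d, a = d ^ 2 := by
    intro a b c ha hab h
    obtain ⟨d, hd | hd⟩ := Int.sq_of_isCoprime hab h
    · exact ⟨d, hd⟩
    · nlinarith [sq_nonneg d]
  rcases hpZ.dvd_or_dvd (⟨_, hrs⟩ : (p : ℤ) ∣ r * (r + 1)) with ⟨r', hr'⟩ | ⟨r', hr'⟩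
  · exfalso
    have hr'0 : 0 < r' := by
      rw [hr'] at hr; exact pos_of_mul_pos_right hr hpp.le
    have e : r' * (r + 1) = s ^ 2 := by
      apply mul_left_cancel₀ hpp.ne'
      rw [← hrs, ← mul_assoc, ← hr']
    have hco : IsCoprime r' (r + 1) := ⟨-p, 1, by rw [hr']; ring⟩
    obtain ⟨a, ha⟩ := key _ _ _ hr'0 hco e
    obtain ⟨b, hb⟩ := key _ _ _ (by omega) hco.symm (by rw [mul_comm, e])
    have hs : |b| ^ 2 - p * a ^ 2 = 1 := by rw [sq_abs, ← hb, ← ha, ← hr']; ring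
    have hb1 : 1 < |b| := by
      by_contra hcon
      have := abs_nonneg b
      have : |b| ^ 2 ≤ 1 := by nlinarith
      rw [sq_abs] at this
      omega
    have := hS3 (b := Pell.Solution₁.mk _ _ hs) (by simpa using hb1)
    rw [Pell.Solution₁.x_mk] at this
    have h2 : |b| ^ 2 = r + 1 := by rw [sq_abs, hb]
    nlinarith
  · have hr'0 : 0 < r' := by
      have : 0 < (p : ℤ) * r' := by omega
      exact pos_of_mul_pos_right this hpp.le
    have e : r * r' = s ^ 2 := by
      apply mul_left_cancel₀ hpp.ne'
      rw [← hrs, hr']; ring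
    have hco : IsCoprime r r' := ⟨-1, p, by rw [← hr']; ring⟩
    obtain ⟨a, ha⟩ := key _ _ _ hr hco e
    obtain ⟨b, hb⟩ := key _ _ _ hr'0 hco.symm (by rw [mul_comm, e])
    exact ⟨a, b, by rw [← ha, ← hb, ← hr']; ring⟩

theorem backward (h : Module.finrank ℚ K = 2) {p : ℕ} (hp : p.Prime) (hp4 : p % 4 = 1)
    (x : K) (hx : x ^ 2 = (p : K)) : Odd (NumberField.classNumber K) ∧
      (∃ u : (𝓞 K)ˣ, Algebra.norm ℚ ((u : 𝓞 K) : K) = -1) ∧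
      ¬∃ 𝔮 : Ideal (𝓞 K), 𝔮 ^ 2 = Ideal.span {(2 : 𝓞 K)} := by
  have hp2 : p ≠ 2 := by rintro rfl; omega
  obtain ⟨c, hc⟩ : ∃ c : ℕ, p = 4 * c + 1 := ⟨p / 4, by omega⟩
  have hxi : IsIntegral ℤ x := by
    refine IsIntegral.of_pow (n := 2) (by norm_num) ?_
    rw [hx]; exact_mod_cast (isIntegral_algebraMap (R := ℤ) (A := K) (x := (p : ℤ)))
  have hwi : IsIntegral ℤ ((1 + x) / 2) := by
    refine ⟨Polynomial.X ^ 2 - Polynomial.X - Polynomial.C (c : ℤ), ?_, ?_⟩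
    · monicity!
    · simp
      have : (p : K) = 4 * c + 1 := by exact_mod_cast congrArg (Nat.cast (R := K)) hc
      rw [this] at hx
      linear_combination hx / 4
  obtain ⟨X, hX⟩ : ∃ X : 𝓞 K, algebraMap (𝓞 K) K X = x := ⟨⟨x, hxi⟩, rfl⟩
  obtain ⟨W, hW⟩ : ∃ W : 𝓞 K, algebraMap (𝓞 K) K W = (1 + x) / 2 := ⟨⟨_, hwi⟩, rfl⟩
  have hX2 : X ^ 2 = (p : 𝓞 K) := by
    apply FaithfulSMul.algebraMap_injective (𝓞 K) K
    rw [map_pow, map_natCast]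
    rw [hX, hx]
  have hW2 : 2 * W = 1 + X := by
    apply FaithfulSMul.algebraMap_injective (𝓞 K) K
    rw [map_mul, map_add, map_ofNat, map_one, hX, hW]
    field_simp
  obtain ⟨a, b, hab⟩ := pell_neg hp hp4
  have hmul : ((a : 𝓞 K) + b * X) * (-a + b * X) = 1 := by
    have : ((a ^ 2 - p * b ^ 2 : ℤ) : 𝓞 K) = -1 := by rw [hab]; simp
    push_cast at this
    linear_combination (b : 𝓞 K) ^ 2 * hX2 - this
  let u : (𝓞 K)ˣ := Units.mkOfMulEqOne _ _ hmul
  have hu : Nm (u : 𝓞 K) = -1 := by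
    have : (u : 𝓞 K) = (a : 𝓞 K) + b * X := rfl
    rw [this, nm_lin h hp hX2, hab]
  refine ⟨oddclass h hp hX2 hW2 u hu, ⟨u, ?_⟩, unram h hp hX2 hW2 hp2⟩
  rw [← Algebra.coe_norm_int, hu]; simp

theorem exists_gen (h : Module.finrank ℚ K = 2) : ∃ η : (𝓞 K)ˣ, ∀ u : (𝓞 K)ˣ,
    ∃ ζ ∈ Units.torsion K, ∃ k : ℤ, u = ζ * η ^ k := by
  have hr : Units.rank K ≤ 1 := by
    have h1 := InfinitePlace.card_add_two_mul_card_eq_rank K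
    have h2 := InfinitePlace.card_eq_nrRealPlaces_add_nrComplexPlaces K
    rw [Units.rank]
    omega
  have hs : Subsingleton (Fin (Units.rank K)) := by
    constructor
    intro a b
    apply Fin.ext
    omega
  rcases isEmpty_or_nonempty (Fin (Units.rank K)) with he | ⟨⟨i⟩⟩
  · refine ⟨1, fun u => ?_⟩
    obtain ⟨⟨ζ, e⟩, hu, -⟩ := Units.exist_unique_eq_mul_prod K u
    exact ⟨ζ, ζ.2, 0, by simpa using hu⟩
  · refine ⟨Units.fundSystem K i, fun u => ?_⟩
    obtain ⟨⟨ζ, e⟩, hu, -⟩ := Units.exist_unique_eq_mul_prod K u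
    exact ⟨ζ, ζ.2, e i, by rw [hu, Fintype.prod_subsingleton _ i]⟩

theorem torsion_pm (φ : K →+* ℝ) {ζ : (𝓞 K)ˣ} (hζ : ζ ∈ Units.torsion K) : ζ = 1 ∨ ζ = -1 := by
  have h1 := (Units.mem_torsion K).mp hζ (InfinitePlace.mk (Complex.ofRealHom.comp φ))
  rw [InfinitePlace.apply] at h1
  simp only [RingHom.comp_apply, Complex.ofRealHom_eq_coe, Complex.norm_real, Real.norm_eq_abs] at h1
  rcases eq_or_eq_neg_of_abs_eq h1 with h2 | h2
  · left
    apply Units.ext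
    apply RingOfIntegers.ext
    apply φ.injective
    simpa using h2
  · right
    apply Units.ext
    apply RingOfIntegers.ext
    apply φ.injective
    simpa using h2

theorem unit_sq (h : Module.finrank ℚ K = 2) (φ : K →+* ℝ) (u : (𝓞 K)ˣ) (hu : Nm u = -1)
    (ε : (𝓞 K)ˣ) (hε : Nm ε = 1) (hpos : 0 < φ ((ε : 𝓞 K) : K)) : ∃ v : (𝓞 K)ˣ, ε = v ^ 2 := by
  obtain ⟨η, hη⟩ := exists_gen h
  let N : (𝓞 K)ˣ →* ℤˣ := Units.map (Algebra.norm ℤ)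
  have hN : ∀ v : (𝓞 K)ˣ, ((N v : ℤˣ) : ℤ) = Nm (v : 𝓞 K) := fun v => rfl
  have hN1 : N (-1) = 1 := by
    apply Units.ext
    rw [hN]
    have := nm_int h (K := K) (-1)
    simpa using this
  have hNt : ∀ ζ ∈ Units.torsion K, N ζ = 1 := by
    intro ζ hζ
    rcases torsion_pm φ hζ with rfl | rfl
    · simp
    · exact hN1
  have hNu : N u = -1 := Units.ext (by rw [hN, hu]; rfl)
  have hNε : N ε = 1 := Units.ext (by rw [hN, hε]; rfl)
  obtain ⟨ζ, hζ, j, hj⟩ := hη u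
  obtain ⟨ξ, hξ, k, hk⟩ := hη ε
  have hNη : N η = -1 := by
    rcases Int.units_eq_one_or (N η) with h1 | h1
    · rw [hj, map_mul, map_zpow, h1, hNt ζ hζ] at hNu
      simp at hNu
    · exact h1
  rw [hk, map_mul, map_zpow, hNη, hNt ξ hξ, one_mul] at hNε
  have hke : Even k := by
    by_contra hc
    rw [Int.not_even_iff_odd] at hc
    rw [hc.neg_one_zpow] at hNε
    exact absurd hNε (by decide)
  obtain ⟨l, rfl⟩ := hke
  refine ⟨η ^ l, ?_⟩
  rcases torsion_pm φ hξ with rfl | rfl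
  · rw [hk, one_mul, zpow_add, pow_two]
  · exfalso
    rw [hk, zpow_add] at hpos
    have : (((-1 * (η ^ l * η ^ l) : (𝓞 K)ˣ) : 𝓞 K) : K) =
      -((((η ^ l : (𝓞 K)ˣ) : 𝓞 K) : K) * (((η ^ l : (𝓞 K)ˣ) : 𝓞 K) : K)) := by
      simp
    rw [this, map_neg, map_mul] at hpos
    nlinarith [mul_self_nonneg (φ (((η ^ l : (𝓞 K)ˣ) : 𝓞 K) : K))]

theorem ram_ideal {p e : ℕ} (hco : p.Coprime e) (y : 𝓞 K) (hy : y ^ 2 = ((p * e : ℕ) : 𝓞 K)) :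
    (Ideal.span {(p : 𝓞 K), y}) ^ 2 = Ideal.span {(p : 𝓞 K)} := by
  rw [pow_two, Ideal.span_pair_mul_span_pair]
  push_cast at hy
  apply le_antisymm
  · rw [Ideal.span_le]
    intro z hz
    simp only [Set.mem_insert_iff, Set.mem_singleton_iff] at hz
    rw [SetLike.mem_coe, Ideal.mem_span_singleton]
    rcases hz with rfl | rfl | rfl | rfl
    · exact Dvd.intro _ rfl
    · exact Dvd.intro _ rfl
    · exact Dvd.intro_left _ rfl
    · exact ⟨e, by rw [← hy]; ring⟩
  · rw [Ideal.span_singleton_le_iff_mem]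
    obtain ⟨A, B, hAB⟩ := Nat.isCoprime_iff_coprime.mpr hco
    have hAB' := congrArg (Int.cast (R := 𝓞 K)) hAB
    push_cast at hAB'
    have : (p : 𝓞 K) = A * (p * p) + B * (y * y) := by
      linear_combination -(p : 𝓞 K) * hAB' - (B : 𝓞 K) * hy
    have key : ∀ S : Ideal (𝓞 K), (p : 𝓞 K) * p ∈ S → y * y ∈ S → (p : 𝓞 K) ∈ S := by
      intro S h1 h2
      rw [this]
      exact S.add_mem (S.mul_mem_left _ h1) (S.mul_mem_left _ h2)
    apply key
    · exact Ideal.subset_span (by simp)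
    · exact Ideal.subset_span (by simp)

theorem forward (h : Module.finrank ℚ K = 2) (φ : K →+* ℝ)
    (hodd : Odd (NumberField.classNumber K)) (u : (𝓞 K)ˣ) (hu : Nm u = -1)
    (h2 : ¬∃ 𝔮 : Ideal (𝓞 K), 𝔮 ^ 2 = Ideal.span {(2 : 𝓞 K)}) :
    ∃ p : ℕ, p.Prime ∧ p % 4 = 1 ∧ ∃ x : K, x ^ 2 = (p : K) := by
  obtain ⟨t, ht⟩ : ∃ t, t = Tr (u : 𝓞 K) := ⟨_, rfl⟩
  have hq := quad h (u : 𝓞 K)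
  rw [hu, ← ht] at hq
  push_cast at hq
  obtain ⟨d, s, hds, hd⟩ := Nat.sq_mul_squarefree (t.natAbs ^ 2 + 4)
  have hdsZ : (s : ℤ) ^ 2 * d = t ^ 2 + 4 := by
    have := congrArg (Nat.cast (R := ℤ)) hds
    push_cast at this
    rwa [sq_abs] at this
  have hs0 : s ≠ 0 := by rintro rfl; simp at hds
  have hz : (2 * (u : 𝓞 K) - t) ^ 2 = (s : 𝓞 K) ^ 2 * d := by
    have := congrArg (Int.cast (R := 𝓞 K)) hdsZ
    push_cast at this
    rw [this]
    linear_combination 4 * hq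
  have hd1 : d ≠ 1 := by
    rintro rfl
    have hN2 : Nm (2 * (u : 𝓞 K)) = -4 := by
      have := nm_int h (K := K) 2
      push_cast at this
      rw [map_mul, hu, this]; norm_num
    have : ∃ r : ℤ, 2 * (u : 𝓞 K) = (r : 𝓞 K) := by
      rw [Nat.cast_one, mul_one] at hz
      rcases sq_eq_sq_iff_eq_or_eq_neg.mp hz with h1 | h1
      · exact ⟨t + s, by push_cast; linear_combination h1⟩
      · exact ⟨t - s, by push_cast; linear_combination h1⟩
    obtain ⟨r, hr⟩ := this
    rw [hr, nm_int h] at hN2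
    nlinarith [sq_nonneg r]
  obtain ⟨p, hp, e, rfl⟩ := Nat.exists_prime_and_dvd hd1
  have hco : p.Coprime e := Nat.coprime_of_squarefree_mul hd
  -- the square root of d
  have hsK : (s : K) ≠ 0 := by exact_mod_cast hs0
  have hyK : ((((2 * (u : 𝓞 K) - t : 𝓞 K)) : K) / s) ^ 2 = ((p * e : ℕ) : K) := by
    have := congrArg (algebraMap (𝓞 K) K) hz
    rw [map_pow, map_mul, map_pow, map_natCast, map_natCast] at this
    rw [div_pow, this]
    field_simp
  have hyi : IsIntegral ℤ (((2 * (u : 𝓞 K) - t : 𝓞 K) : K) / s) := by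
    refine IsIntegral.of_pow (n := 2) (by norm_num) ?_
    rw [hyK]
    exact_mod_cast (isIntegral_algebraMap (R := ℤ) (A := K) (x := ((p * e : ℕ) : ℤ)))
  obtain ⟨y, hy⟩ : ∃ y : 𝓞 K, y ^ 2 = ((p * e : ℕ) : 𝓞 K) := by
    obtain ⟨y, hy⟩ : ∃ y : 𝓞 K, algebraMap (𝓞 K) K y = ((2 * (u : 𝓞 K) - t : 𝓞 K) : K) / s :=
      ⟨⟨_, hyi⟩, rfl⟩
    refine ⟨y, ?_⟩
    apply FaithfulSMul.algebraMap_injective (𝓞 K) K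
    rw [map_pow, map_natCast, hy]
    exact hyK
  have hP := ram_ideal hco y hy
  have hp2 : p ≠ 2 := by
    rintro rfl
    exact h2 ⟨_, by simpa using hP⟩
  have hp4 : p % 4 = 1 := by
    have := Fact.mk hp
    have h1 : ((t : ZMod p)) ^ 2 = -(2 : ZMod p) ^ 2 := by
      have := congrArg (Int.cast (R := ZMod p)) hdsZ
      push_cast at this
      rw [CharP.cast_eq_zero (ZMod p) p] at this
      linear_combination -this
    have h20 : (2 : ZMod p) ≠ 0 := by
      intro h0
      have : ((2 : ℕ) : ZMod p) = 0 := by exact_mod_cast h0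
      rw [ZMod.natCast_eq_zero_iff] at this
      exact hp2 ((Nat.prime_dvd_prime_iff_eq hp Nat.prime_two).mp this)
    have h3 := ZMod.mod_four_ne_three_of_sq_eq_neg_sq' h20 h1
    have := hp.eq_two_or_odd
    omega
  refine ⟨p, hp, hp4, ?_⟩
  have hprin : (Ideal.span {(p : 𝓞 K), y}).IsPrincipal := by
    refine Ideal.IsPrincipal.of_isPrincipal_pow_of_coprime (n := 2) ?_ ?_
    · exact Nat.coprime_two_left.mpr hodd
    · rw [hP]; exact ⟨_, rfl⟩
  obtain ⟨α, hα⟩ := hprin.principal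
  change _ = Ideal.span {α} at hα
  rw [hα, Ideal.span_singleton_pow, Ideal.span_singleton_eq_span_singleton] at hP
  obtain ⟨ε, hε⟩ := hP.symm
  have hp0 : (p : ℝ) > 0 := by exact_mod_cast hp.pos
  have hpos : 0 < φ ((ε : 𝓞 K) : K) := by
    have h1 := congrArg (fun z : 𝓞 K => φ (z : K)) hε
    simp only [map_mul, map_pow, map_natCast] at h1
    have h3 : 0 ≤ (p : ℝ) * φ ((ε : 𝓞 K) : K) := by rw [h1]; positivity
    have h4 : 0 ≤ φ ((ε : 𝓞 K) : K) := nonneg_of_mul_nonneg_right h3 hp0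
    refine lt_of_le_of_ne h4 (fun h0 => ?_)
    have : ((ε : 𝓞 K) : K) = 0 := φ.injective (by rw [← h0, map_zero])
    exact ε.ne_zero (by exact_mod_cast this)
  have hNε : Nm (ε : 𝓞 K) = 1 := by
    have h1 := congrArg (Nm) hε
    have h3 := nm_int h (K := K) (p : ℤ)
    push_cast at h3
    rw [map_mul, map_pow, h3] at h1
    rcases Int.isUnit_iff.mp (ε.isUnit.map (Algebra.norm ℤ)) with h4 | h4
    · exact h4
    · rw [h4] at h1
      have : (p : ℤ) > 0 := by exact_mod_cast hp.pos
      nlinarith [sq_nonneg (Nm α)]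
  obtain ⟨v, rfl⟩ := unit_sq h φ u hu ε hNε hpos
  refine ⟨((α * (v⁻¹ : (𝓞 K)ˣ) : 𝓞 K) : K), ?_⟩
  have : (α * (v⁻¹ : (𝓞 K)ˣ) : 𝓞 K) ^ 2 = (p : 𝓞 K) := by
    rw [mul_pow, ← hε, Units.val_pow_eq_pow_val, mul_assoc, ← mul_pow, Units.mul_inv, one_pow,
      mul_one]
  rw [← map_pow, this, map_natCast]

end RQ

/-- A real quadratic number field has odd class number, a unit of norm `-1`, and 2
unramified, if and only if it is `ℚ(√p)` for a prime `p ≡ 1 (mod 4)`. -/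
theorem real_quadratic_oddClassNumber_unit_norm_neg_one_iff
    (K : Type*) [Field K] [NumberField K]
    (hdeg : Module.finrank ℚ K = 2) (hreal : Nat.card (K →+* ℝ) = 2) :
    (Odd (NumberField.classNumber K) ∧
      (∃ u : (𝓞 K)ˣ, Algebra.norm ℚ ((u : 𝓞 K) : K) = -1) ∧
      ¬∃ 𝔮 : Ideal (𝓞 K), 𝔮 ^ 2 = Ideal.span {(2 : 𝓞 K)}) ↔
    ∃ p : ℕ, p.Prime ∧ p % 4 = 1 ∧ ∃ x : K, x ^ 2 = (p : K) := by
  constructor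
  · rintro ⟨hodd, ⟨u, hu⟩, h2⟩
    have hne : Nonempty (K →+* ℝ) := by
      by_contra hc
      rw [not_nonempty_iff] at hc
      rw [Nat.card_of_isEmpty] at hreal
      omega
    obtain ⟨φ⟩ := hne
    refine RQ.forward hdeg φ hodd u ?_ h2
    rw [← Algebra.coe_norm_int] at hu
    exact_mod_cast hu
  · rintro ⟨p, hp, hp4, x, hx⟩
    exact RQ.backward hdeg hp hp4 x hx
end
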